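/- Let (h_i, p_i) be a contracting-on-average iterated function system on ℝ^d as above, with unique invariant probability measure ν. Assume in addition that each h_i is conformal and that the system satisfies the regular open set condition. Then the Hausdorff dimension of ν exists and equals s = (∫ ∑_i p_i(x) log p_i(x) dν(x)) / (∫ ∑_i p_i(x) log h_i'(x) dν(x)). -/

import Mathlib

open MeasureTheory Metric Filter ENNReal NNReal

noncomputable section

/-- The upper Hausdorff dimension of a measure: the infimum of the Hausdorff
dimensions of sets of full measure. -/
def upperDimH {X : Type*} [EMetricSpace X] [MeasurableSpace X]
    (μ : Measure X) : ℝ≥0∞ :=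
  ⨅ (s : Set X) (_ : μ sᶜ = 0), dimH s

/-- The lower Hausdorff dimension of a measure: the infimum of the Hausdorff
dimensions of sets of positive measure. -/
def lowerDimH {X : Type*} [EMetricSpace X] [MeasurableSpace X]
    (μ : Measure X) : ℝ≥0∞ :=
  ⨅ (s : Set X) (_ : 0 < μ s), dimH s

noncomputable section

section Hadamard
open Topology

variable {E : Type*} [NormedAddCommGroup E] [NormedSpace ℝ E] [FiniteDimensional ℝ E]

/-- Lifting of segments through a map with uniformly Lipschitz local inverses. -/
lemma segment_lift (f : E → E) (Kf : ℝ) (hKf : 0 ≤ Kf) (hlip : ∀ x y, ‖f x - f y‖ ≤ Kf * ‖x - y‖)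
    (hfc : Continuous f) (K : ℝ) (hK : 0 ≤ K)
    (hloc : ∀ z, ∃ δ > 0, ∃ g : E → E, g (f z) = z ∧ (∀ y ∈ ball (f z) δ, f (g y) = y) ∧
      ∀ y ∈ ball (f z) δ, ∀ y' ∈ ball (f z) δ, ‖g y - g y'‖ ≤ K * ‖y - y'‖)
    (z0 v : E) : ∃ γ : ℝ → E, γ 0 = z0 ∧ (∀ s s', ‖γ s - γ s'‖ ≤ K * ‖v‖ * |s - s'|) ∧
      ∀ s ∈ Set.Icc (0:ℝ) 1, f (γ s) = f z0 + s • v := by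
  have : ProperSpace E := FiniteDimensional.proper ℝ E
  set L := K * ‖v‖ with hL
  have hL0 : 0 ≤ L := by positivity
  let good : ℝ → (ℝ → E) → Prop := fun t γ => γ 0 = z0 ∧ (∀ s s', ‖γ s - γ s'‖ ≤ L * |s - s'|) ∧
      ∀ s, 0 ≤ s → ‖f (γ s) - (f z0 + s • v)‖ ≤ (Kf * L + ‖v‖) * max 0 (s - t)
  -- characterization
  have hgood : ∀ t γ, 0 ≤ t → γ 0 = z0 → (∀ s s', ‖γ s - γ s'‖ ≤ L * |s - s'|) →
      (∀ s ∈ Set.Icc (0:ℝ) t, f (γ s) = f z0 + s • v) → good t γ := by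
    intro t γ ht h0 h1 h2
    refine ⟨h0, h1, fun s hs => ?_⟩
    rcases le_total s t with hst | hst
    · rw [h2 s ⟨hs, hst⟩]; simp; positivity
    · have e1 : f (γ s) - (f z0 + s • v) = (f (γ s) - f (γ t)) - (s - t) • v := by
        rw [h2 t ⟨ht, le_rfl⟩, sub_smul]; abel
      rw [e1, max_eq_right (by linarith)]
      refine (norm_sub_le _ _).trans ?_
      have e2 := (hlip (γ s) (γ t)).trans (mul_le_mul_of_nonneg_left (h1 s t) hKf)
      rw [abs_of_nonneg (by linarith)] at e2
      rw [norm_smul, Real.norm_of_nonneg (by linarith : (0:ℝ) ≤ s - t)]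
      nlinarith
  let A : Set ℝ := {t | ∃ γ, good t γ}
  have hA : Set.Icc (0:ℝ) 1 ⊆ A := by
    apply IsClosed.Icc_subset_of_forall_exists_gt
    · -- closedness
      let Z : Set (ℝ × (ℝ → E)) := (Set.Icc (0:ℝ) 1) ×ˢ
        (Set.univ.pi fun s : ℝ => closedBall z0 (L * |s|))
      have hZ : IsCompact Z := isCompact_Icc.prod (isCompact_univ_pi fun s => isCompact_closedBall _ _)
      let W : Set (ℝ × (ℝ → E)) := {q | good q.1 q.2}
      have hW : IsClosed W := by
        have : W = {q | q.2 0 = z0} ∩ ((⋂ s : ℝ, ⋂ s' : ℝ, {q | ‖q.2 s - q.2 s'‖ ≤ L * |s - s'|}) ∩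
          ⋂ s : ℝ, ⋂ _ : 0 ≤ s, {q | ‖f (q.2 s) - (f z0 + s • v)‖ ≤ (Kf * L + ‖v‖) * max 0 (s - q.1)}) := by
          ext q; simp [W, good]
        rw [this]
        refine IsClosed.inter (isClosed_eq (by fun_prop) (by fun_prop)) (IsClosed.inter ?_ ?_)
        · exact isClosed_iInter fun s => isClosed_iInter fun s' =>
            isClosed_le (by fun_prop) (by fun_prop)
        · exact isClosed_iInter fun s => isClosed_iInter fun _ =>
            isClosed_le (by fun_prop) (by fun_prop)
      have : A ∩ Set.Icc 0 1 = Prod.fst '' (Z ∩ W) := by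
        ext t; constructor
        · rintro ⟨⟨γ, hγ⟩, ht⟩
          refine ⟨(t, γ), ⟨⟨ht, fun s _ => ?_⟩, hγ⟩, rfl⟩
          have := hγ.2.1 s 0
          rw [hγ.1] at this
          simpa [dist_eq_norm] using this
        · rintro ⟨⟨t', γ⟩, ⟨⟨h1, _⟩, h2⟩, rfl⟩
          exact ⟨⟨γ, h2⟩, h1⟩
      rw [this]
      exact ((hZ.inter_right hW).image continuous_fst).isClosed
    · refine ⟨fun _ => z0, hgood 0 (fun _ => z0) le_rfl rfl (fun s s' => by simp; positivity) ?_⟩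
      intro s hs
      have : s = 0 := le_antisymm hs.2 hs.1
      simp [this]
    · rintro t ⟨⟨γ, h0, h1, h2⟩, ht0, ht1⟩ y hy
      have hlift : ∀ s ∈ Set.Icc (0:ℝ) t, f (γ s) = f z0 + s • v := by
        intro s hs
        have := h2 s hs.1
        rw [max_eq_left (by linarith [hs.2]), mul_zero] at this
        exact sub_eq_zero.mp (norm_le_zero_iff.mp this)
      obtain ⟨δ, hδ, g, hg0, hg1, hg2⟩ := hloc (γ t)
      have hft := hlift t ⟨ht0, le_rfl⟩
      set η := δ / (‖v‖ + 1) with hη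
      have hη0 : 0 < η := by positivity
      have hηv : η * ‖v‖ < δ := by
        rw [hη, div_mul_eq_mul_div, div_lt_iff₀ (by positivity)]; nlinarith
      set t' := min y (t + η) with ht'
      have htt' : t < t' := lt_min hy (by linarith)
      have ht'η : t' ≤ t + η := min_le_right _ _
      have hmem : ∀ s ∈ Set.Icc t t', f z0 + s • v ∈ ball (f (γ t)) δ := by
        intro s hs
        rw [mem_ball, dist_eq_norm, hft]
        have : f z0 + s • v - (f z0 + t • v) = (s - t) • v := by rw [sub_smul]; abel
        rw [this, norm_smul, Real.norm_of_nonneg (by linarith [hs.1])]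
        have : (s - t) * ‖v‖ ≤ η * ‖v‖ := by
          apply mul_le_mul_of_nonneg_right _ (norm_nonneg _); linarith [hs.2]
        linarith
      let γ' : ℝ → E := fun s => if s ≤ t then γ s else g (f z0 + (min s t') • v)
      have hγ't : ∀ s, t ≤ s → γ' s = g (f z0 + (min s t') • v) := by
        intro s hs
        by_cases hst : s ≤ t
        · have : s = t := le_antisymm hst hs
          subst this
          simp only [γ', le_refl, if_true]
          rw [min_eq_left htt'.le, ← hft, hg0]
        · simp [γ', hst]
      have hγ'l : ∀ s, s ≤ t → γ' s = γ s := by intro s hs; simp [γ', hs]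
      have lipR : ∀ s s', t ≤ s → s ≤ s' → ‖γ' s - γ' s'‖ ≤ L * |s - s'| := by
        intro s s' hs hss'
        rw [hγ't s hs, hγ't s' (hs.trans hss')]
        have a1 := hmem (min s t') ⟨le_min hs htt'.le, min_le_right _ _⟩
        have a2 := hmem (min s' t') ⟨le_min (hs.trans hss') htt'.le, min_le_right _ _⟩
        refine (hg2 _ a1 _ a2).trans ?_
        have : f z0 + (min s t') • v - (f z0 + (min s' t') • v) = (min s t' - min s' t') • v := by
          rw [sub_smul]; abel
        rw [this, norm_smul, Real.norm_eq_abs, hL]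
        have : |min s t' - min s' t'| ≤ |s - s'| := by
          have := abs_min_sub_min_le_max s t' s' t'
          simpa using this
        calc K * (|min s t' - min s' t'| * ‖v‖) ≤ K * (|s - s'| * ‖v‖) := by gcongr
          _ = _ := by ring
      have lip' : ∀ s s', s ≤ s' → ‖γ' s - γ' s'‖ ≤ L * |s - s'| := by
        intro s s' hss'
        rcases le_total t s with hs | hs
        · exact lipR s s' hs hss'
        · rcases le_total s' t with hs' | hs'
          · rw [hγ'l s hs, hγ'l s' hs']; exact h1 s s'
          · have b1 := lipR t s' le_rfl hs'
            have b2 := h1 s t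
            rw [← hγ'l s hs, ← hγ'l t le_rfl] at b2
            have := norm_sub_le_norm_sub_add_norm_sub (γ' s) (γ' t) (γ' s')
            rw [abs_of_nonpos (by linarith)] at b1 b2 ⊢
            linarith
      refine ⟨t', ⟨γ', hgood t' γ' (by linarith) ?_ ?_ ?_⟩, htt', min_le_left _ _⟩
      · rw [hγ'l 0 ht0, h0]
      · intro s s'
        rcases le_total s s' with hs | hs
        · exact lip' s s' hs
        · rw [norm_sub_rev, abs_sub_comm]; exact lip' s' s hs
      · intro s hs
        rcases le_total s t with hst | hst
        · rw [hγ'l s hst]; exact hlift s ⟨hs.1, hst⟩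
        · rw [hγ't s hst, min_eq_left hs.2]
          exact hg1 _ (hmem s ⟨hst, hs.2⟩)
  obtain ⟨γ, h0, h1, h2⟩ := hA (Set.right_mem_Icc.mpr zero_le_one)
  refine ⟨γ, h0, h1, fun s hs => ?_⟩
  have := h2 s hs.1
  rw [max_eq_left (by linarith [hs.2]), mul_zero] at this
  exact sub_eq_zero.mp (norm_le_zero_iff.mp this)

/-- A quantitative Hadamard global inversion theorem. -/
lemma hadamard_antilipschitz (f : E → E) (Kf : ℝ) (hKf : 0 ≤ Kf)
    (hlip : ∀ x y, ‖f x - f y‖ ≤ Kf * ‖x - y‖)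
    (hf : ContDiff ℝ 1 f) (K : ℝ≥0)
    (hder : ∀ x, ∃ A : E ≃L[ℝ] E, (A : E →L[ℝ] E) = fderiv ℝ f x ∧ ‖(A.symm : E →L[ℝ] E)‖₊ < K) :
    ∀ x y, ‖x - y‖ ≤ K * ‖f x - f y‖ := by
  have : CompleteSpace E := FiniteDimensional.complete ℝ E
  have hst : ∀ x, ∀ A : E ≃L[ℝ] E, (A : E →L[ℝ] E) = fderiv ℝ f x →
      HasStrictFDerivAt f (A : E →L[ℝ] E) x := by
    intro x A hA
    rw [hA]
    exact hf.contDiffAt.hasStrictFDerivAt (by norm_num)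
  have hloc : ∀ z, ∃ δ > 0, ∃ g : E → E, g (f z) = z ∧ (∀ y ∈ ball (f z) δ, f (g y) = y) ∧
      ∀ y ∈ ball (f z) δ, ∀ y' ∈ ball (f z) δ, ‖g y - g y'‖ ≤ K * ‖y - y'‖ := by
    intro z
    obtain ⟨A, hA, hAK⟩ := hder z
    have hs := hst z A hA
    obtain ⟨s, hs1, hs2⟩ := hs.to_localInverse.exists_lipschitzOnWith_of_nnnorm_lt K hAK
    obtain ⟨δ, hδ, hδs⟩ := Metric.mem_nhds_iff.mp (Filter.inter_mem hs1 hs.eventually_right_inverse)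
    refine ⟨δ, hδ, hs.localInverse f A z, hs.localInverse_apply_image, fun y hy => (hδs hy).2, ?_⟩
    intro y hy y' hy'
    have := hs2.dist_le_mul y (hδs hy).1 y' (hδs hy').1
    simpa [dist_eq_norm] using this
  have hlh : IsLocalHomeomorph f := by
    refine IsLocalHomeomorph.mk f fun x => ?_
    obtain ⟨A, hA, -⟩ := hder x
    exact ⟨(hst x A hA).toOpenPartialHomeomorph f, (hst x A hA).mem_toOpenPartialHomeomorph_source,
      fun y _ => by rw [HasStrictFDerivAt.toOpenPartialHomeomorph_coe]⟩
  have hsep : IsSeparatedMap f := T2Space.isSeparatedMap f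
  intro x z0
  have hlift := fun a => segment_lift f Kf hKf hlip hf.continuous K K.2 hloc z0 (a - f z0)
  choose Γ hΓ0 hΓ1 hΓ2 using hlift
  let F : C(unitInterval × E, E) := ⟨fun q => f z0 + (q.1 : ℝ) • (q.2 - f z0), by fun_prop⟩
  have hcont : Continuous (fun q : unitInterval × E => Γ q.2 (q.1 : ℝ)) := by
    refine hlh.continuous_lift hsep F ?_ ?_ ?_
    · funext q
      simp only [Function.comp, F, ContinuousMap.coe_mk]
      exact hΓ2 _ _ q.1.2
    · simp only [Set.Icc.coe_zero, hΓ0]; exact continuous_const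
    · intro a
      have : Continuous (Γ a) := by
        have : LipschitzWith ⟨K * ‖a - f z0‖, by positivity⟩ (Γ a) :=
          LipschitzWith.of_dist_le_mul fun s s' => by
            rw [dist_eq_norm, Real.dist_eq]; exact hΓ1 a s s'
        exact this.continuous
      exact this.comp continuous_subtype_val
  let σ : E → E := fun a => Γ a 1
  have hσc : Continuous σ := by
    have := hcont.comp (Continuous.prodMk_right (1 : unitInterval) : Continuous fun a : E => ((1 : unitInterval), a))
    exact this
  have hσ1 : ∀ a, f (σ a) = a := by
    intro a
    have := hΓ2 a 1 ⟨zero_le_one, le_rfl⟩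
    simpa using this
  have hσ2 : ∀ a, ‖σ a - z0‖ ≤ K * ‖a - f z0‖ := by
    intro a
    have := hΓ1 a 1 0
    rw [hΓ0] at this
    simpa using this
  have hid : σ ∘ f = id := by
    refine hsep.eq_of_comp_eq hlh.isLocallyInjective (hσc.comp hf.continuous) continuous_id ?_ z0 ?_
    · funext y; simp [hσ1]
    · have := hσ2 (f z0)
      simp only [sub_self, norm_zero, mul_zero] at this
      simpa [sub_eq_zero] using this
  have hx : σ (f x) = x := congrFun hid x
  have := hσ2 (f x)
  rwa [hx] at this

end Hadamard
end

noncomputable section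

/-- Normalized data extracted from the hypotheses of the main theorem. `g i x` plays the role of
`log ‖D h_i(x)‖`. -/
structure Sys (d k : ℕ) where
  h : Fin k → EuclideanSpace ℝ (Fin d) → EuclideanSpace ℝ (Fin d)
  p : Fin k → EuclideanSpace ℝ (Fin d) → ℝ
  g : Fin k → EuclideanSpace ℝ (Fin d) → ℝ
  β : ℝ
  C : ℝ
  B : ℝ
  q : ℝ
  hβ0 : 0 < β
  hβ1 : β ≤ 1
  hC : 0 < C
  hB : 0 < B
  hq0 : 0 < q
  hq1 : q < 1
  hcont : ∀ i, Continuous (h i)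
  ppos : ∀ i x, 0 < p i x
  psum : ∀ x, ∑ i, p i x = 1
  pH : ∀ i x y, |p i x - p i y| ≤ C * dist x y ^ β
  lpH : ∀ i x y, |Real.log (p i x) - Real.log (p i y)| ≤ C * dist x y ^ β
  gH : ∀ i x y, |g i x - g i y| ≤ C * dist x y ^ β
  lpB : ∀ i x, |Real.log (p i x)| ≤ B
  gB : ∀ i x, |g i x| ≤ B
  coa : ∀ x y, ∑ j, p j x * dist (h j x) (h j y) ^ β ≤ q * dist x y ^ β
  dq : ∀ x, ∑ j, p j x * Real.exp (β * g j x) ≤ q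
  lip : ∀ i x z r, dist z x < r → dist (h i z) (h i x) < Real.exp (g i x + C * r ^ β) * r
  inj : ∀ i, Function.Injective (h i)
  vol : ∀ i x r (A : Set (EuclideanSpace ℝ (Fin d))), MeasurableSet A → A ⊆ ball x r →
    ENNReal.ofReal (Real.exp (g i x - C * r ^ β) ^ d) * volume A ≤ volume (h i '' A)
  ν : Measure (EuclideanSpace ℝ (Fin d))
  prob : IsProbabilityMeasure ν
  stat : ∀ f : EuclideanSpace ℝ (Fin d) → ℝ≥0∞, Measurable f →
    ∫⁻ x, ∑ i, ENNReal.ofReal (p i x) * f (h i x) ∂ν = ∫⁻ x, f x ∂ν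

namespace Sys
variable {d k : ℕ} (s : Sys d k)

/-- Composition of maps along a word, in time order. -/
def hw : List (Fin k) → EuclideanSpace ℝ (Fin d) → EuclideanSpace ℝ (Fin d)
  | [], x => x
  | i :: w, x => hw w (s.h i x)

/-- Birkhoff sums along a word. -/
def Sm (φ : Fin k → EuclideanSpace ℝ (Fin d) → ℝ) : List (Fin k) → EuclideanSpace ℝ (Fin d) → ℝ
  | [], _ => 0
  | i :: w, x => φ i x + Sm φ w (s.h i x)

/-- Sum of powers of derivatives along a word. -/
def Gw : List (Fin k) → EuclideanSpace ℝ (Fin d) → ℝ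
  | [], _ => 1
  | i :: w, x => 1 + Real.exp (s.β * s.g i x) * Gw w (s.h i x)

/-- Expectation over words of length `n` of the chain started at `x`. -/
def Ex : ℕ → (List (Fin k) → ℝ≥0∞) → EuclideanSpace ℝ (Fin d) → ℝ≥0∞
  | 0, F, _ => F []
  | n + 1, F, x => ∑ i, ENNReal.ofReal (s.p i x) * Ex n (fun w => F (i :: w)) (s.h i x)

/-- Log-probabilities. -/
def lp (i : Fin k) (x : EuclideanSpace ℝ (Fin d)) : ℝ := Real.log (s.p i x)

@[simp] lemma hw_nil (x) : s.hw [] x = x := rfl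
@[simp] lemma hw_cons (i w x) : s.hw (i :: w) x = s.hw w (s.h i x) := rfl
@[simp] lemma Sm_nil (φ x) : s.Sm φ [] x = 0 := rfl
@[simp] lemma Sm_cons (φ i w x) : s.Sm φ (i :: w) x = φ i x + s.Sm φ w (s.h i x) := rfl
@[simp] lemma Gw_nil (x) : s.Gw [] x = 1 := rfl
@[simp] lemma Gw_cons (i w x) :
    s.Gw (i :: w) x = 1 + Real.exp (s.β * s.g i x) * s.Gw w (s.h i x) := rfl
@[simp] lemma Ex_zero (F x) : s.Ex 0 F x = F [] := rfl
lemma Ex_succ (n F x) : s.Ex (n+1) F x =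
  ∑ i, ENNReal.ofReal (s.p i x) * s.Ex n (fun w => F (i :: w)) (s.h i x) := rfl

lemma hw_append (u v x) : s.hw (u ++ v) x = s.hw v (s.hw u x) := by
  induction u generalizing x with
  | nil => rfl
  | cons i u ih => simp [ih]

lemma psum' (x) : ∑ i, ENNReal.ofReal (s.p i x) = 1 := by
  rw [← ENNReal.ofReal_sum_of_nonneg fun i _ => (s.ppos i x).le, s.psum]; simp

lemma Ex_mono {n : ℕ} {F G : List (Fin k) → ℝ≥0∞} (x)
    (hFG : ∀ w, w.length = n → F w ≤ G w) : s.Ex n F x ≤ s.Ex n G x := by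
  induction n generalizing F G x with
  | zero => exact hFG [] rfl
  | succ n ih =>
    simp only [Ex_succ]
    gcongr with i _
    exact ih _ fun w hw => hFG _ (by simp [hw])

lemma Ex_congr {n : ℕ} {F G : List (Fin k) → ℝ≥0∞} (x)
    (hFG : ∀ w, w.length = n → F w = G w) : s.Ex n F x = s.Ex n G x :=
  le_antisymm (s.Ex_mono x fun w hw => (hFG w hw).le) (s.Ex_mono x fun w hw => (hFG w hw).ge)

lemma Ex_add (n : ℕ) (F G : List (Fin k) → ℝ≥0∞) (x) :
    s.Ex n (fun w => F w + G w) x = s.Ex n F x + s.Ex n G x := by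
  induction n generalizing F G x with
  | zero => rfl
  | succ n ih => simp only [Ex_succ, ih, mul_add, Finset.sum_add_distrib]

lemma Ex_mul (n : ℕ) (c : ℝ≥0∞) (F : List (Fin k) → ℝ≥0∞) (x) :
    s.Ex n (fun w => c * F w) x = c * s.Ex n F x := by
  induction n generalizing F x with
  | zero => rfl
  | succ n ih =>
    simp only [Ex_succ, ih, Finset.mul_sum]
    exact Finset.sum_congr rfl fun i _ => by ring

lemma Ex_const (n : ℕ) (c : ℝ≥0∞) (x) : s.Ex n (fun _ => c) x = c := by
  induction n generalizing x with
  | zero => rfl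
  | succ n ih => simp only [Ex_succ, ih, ← Finset.sum_mul, psum', one_mul]

lemma Ex_finset_sum {ι : Type*} (n : ℕ) (t : Finset ι) (F : ι → List (Fin k) → ℝ≥0∞) (x) :
    s.Ex n (fun w => ∑ a ∈ t, F a w) x = ∑ a ∈ t, s.Ex n (F a) x := by
  classical
  induction t using Finset.induction_on with
  | empty => simp [Ex_const]
  | insert a t ha ih => simp only [Finset.sum_insert ha, Ex_add, ih]

lemma Ex_append (m n : ℕ) (F : List (Fin k) → ℝ≥0∞) (x) :
    s.Ex (m + n) F x = s.Ex m (fun u => s.Ex n (fun v => F (u ++ v)) (s.hw u x)) x := by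
  induction m generalizing F x with
  | zero => simp
  | succ m ih =>
    rw [Nat.succ_add, Ex_succ, Ex_succ]
    refine Finset.sum_congr rfl fun i _ => ?_
    rw [ih]; rfl

lemma pcont (i) : Continuous (s.p i) := by
  have : HolderWith s.C.toNNReal s.β.toNNReal (s.p i) := by
    intro x y
    rw [edist_dist, edist_dist, Real.dist_eq, Real.coe_toNNReal _ s.hβ0.le,
      ENNReal.ofReal_rpow_of_nonneg dist_nonneg s.hβ0.le]
    change _ ≤ ENNReal.ofReal s.C * _
    rw [← ENNReal.ofReal_mul s.hC.le]
    exact ENNReal.ofReal_le_ofReal (s.pH i x y)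
  exact this.continuous (by simpa using s.hβ0)

lemma gcont (i) : Continuous (s.g i) := by
  have : HolderWith s.C.toNNReal s.β.toNNReal (s.g i) := by
    intro x y
    rw [edist_dist, edist_dist, Real.dist_eq, Real.coe_toNNReal _ s.hβ0.le,
      ENNReal.ofReal_rpow_of_nonneg dist_nonneg s.hβ0.le]
    change _ ≤ ENNReal.ofReal s.C * _
    rw [← ENNReal.ofReal_mul s.hC.le]
    exact ENNReal.ofReal_le_ofReal (s.gH i x y)
  exact this.continuous (by simpa using s.hβ0)

lemma lpcont (i) : Continuous (s.lp i) :=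
  (s.pcont i).log fun x => (s.ppos i x).ne'

lemma hw_cont (w) : Continuous (s.hw w) := by
  induction w with
  | nil => exact continuous_id
  | cons i w ih => exact ih.comp (s.hcont i)

lemma Sm_cont {φ : Fin k → EuclideanSpace ℝ (Fin d) → ℝ} (hφ : ∀ i, Continuous (φ i)) (w) :
    Continuous (s.Sm φ w) := by
  induction w with
  | nil => exact continuous_const
  | cons i w ih => exact (hφ i).add (ih.comp (s.hcont i))

lemma Ex_meas' {α : Type*} [MeasurableSpace α] (n : ℕ) (F : α → List (Fin k) → ℝ≥0∞)
    (hF : ∀ w, Measurable fun a => F a w) (φ : α → EuclideanSpace ℝ (Fin d)) (hφ : Measurable φ) :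
    Measurable fun a => s.Ex n (F a) (φ a) := by
  induction n generalizing F φ with
  | zero => exact hF []
  | succ n ih =>
    simp only [Ex_succ]
    refine Finset.measurable_sum _ fun i _ => Measurable.mul ?_ ?_
    · exact (((s.pcont i).measurable.comp hφ)).ennreal_ofReal
    · exact ih (fun a w => F a (i :: w)) (fun w => hF _) _ ((s.hcont i).measurable.comp hφ)

lemma Ex_meas (n : ℕ) (F : EuclideanSpace ℝ (Fin d) → List (Fin k) → ℝ≥0∞)
    (hF : ∀ w, Measurable fun a => F a w) : Measurable fun a => s.Ex n (F a) a :=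
  s.Ex_meas' n F hF id measurable_id

/-- Stationarity. -/
lemma stat_n (n : ℕ) (f : EuclideanSpace ℝ (Fin d) → ℝ≥0∞) (hf : Measurable f) :
    ∫⁻ x, s.Ex n (fun w => f (s.hw w x)) x ∂s.ν = ∫⁻ x, f x ∂s.ν := by
  induction n with
  | zero => rfl
  | succ n ih =>
    rw [← ih, ← s.stat (fun y => s.Ex n (fun w => f (s.hw w y)) y)]
    · rfl
    · exact s.Ex_meas n _ fun w => hf.comp (s.hw_cont w).measurable

/-- Finite set of words of length `n`. -/
def words (k n : ℕ) : Finset (List (Fin k)) := (List.finite_length_eq (Fin k) n).toFinset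

lemma mem_words {n : ℕ} {w : List (Fin k)} : w ∈ words k n ↔ w.length = n := by
  simp [words]

lemma Ex_single (n : ℕ) (v : List (Fin k)) (hv : v.length = n) (x) :
    s.Ex n (fun w => if w = v then 1 else 0) x = ENNReal.ofReal (Real.exp (s.Sm s.lp v x)) := by
  induction n generalizing v x with
  | zero =>
    have : v = [] := List.length_eq_zero_iff.mp hv
    subst this; simp
  | succ n ih =>
    obtain ⟨j, v, rfl⟩ := List.exists_cons_of_length_eq_add_one hv
    rw [Ex_succ, Finset.sum_eq_single j]
    · simp only [List.cons.injEq, true_and]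
      rw [ih v (by simpa using hv), Sm_cons, Real.exp_add, ENNReal.ofReal_mul (by positivity), lp,
        Real.exp_log (s.ppos _ _)]
    · intro i _ hij
      simp [hij, Ex_const]
    · simp

lemma Ex_indicator_le (n : ℕ) (W : Finset (List (Fin k))) (hW : ∀ w ∈ W, w.length = n) (x) :
    s.Ex n (fun w => if w ∈ W then 1 else 0) x =
      ∑ v ∈ W, ENNReal.ofReal (Real.exp (s.Sm s.lp v x)) := by
  classical
  have : ∀ w : List (Fin k), (if w ∈ W then (1:ℝ≥0∞) else 0) = ∑ v ∈ W, if w = v then 1 else 0 := by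
    intro w; simp
  simp_rw [this]
  rw [Ex_finset_sum]
  exact Finset.sum_congr rfl fun v hv => s.Ex_single n v (hW v hv) x

lemma Ex_indicator_le_one (n : ℕ) (F : List (Fin k) → ℝ≥0∞) (hF : ∀ w, F w ≤ 1) (x) :
    s.Ex n F x ≤ 1 :=
  (s.Ex_mono x fun w _ => hF w).trans_eq (s.Ex_const n 1 x)

/-- Markov inequality. -/
lemma Ex_markov (n : ℕ) (F : List (Fin k) → ℝ) (c : ℝ) (hc : 0 < c) (x) (P : List (Fin k) → Prop)
    [DecidablePred P] (hP : ∀ w, w.length = n → P w → c ≤ F w) :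
    s.Ex n (fun w => if P w then 1 else 0) x ≤
      ENNReal.ofReal c⁻¹ * s.Ex n (fun w => ENNReal.ofReal (F w)) x := by
  rw [← Ex_mul]
  refine s.Ex_mono x fun w hw => ?_
  split_ifs with h
  · rw [← ENNReal.ofReal_mul (by positivity), ← ENNReal.ofReal_one]
    apply ENNReal.ofReal_le_ofReal
    rw [inv_mul_eq_div, le_div_iff₀ hc, one_mul]
    exact hP w hw h
  · simp

end Sys
end

noncomputable section
namespace Sys
variable {d k : ℕ} (s : Sys d k)

lemma one_le_Gw (w x) : 1 ≤ s.Gw w x := by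
  induction w generalizing x with
  | nil => simp
  | cons i w ih =>
    have := ih (s.h i x)
    rw [Gw_cons]
    have : 0 ≤ Real.exp (s.β * s.g i x) * s.Gw w (s.h i x) := by positivity
    linarith

lemma Gw_cont (w) : Continuous (s.Gw w) := by
  induction w with
  | nil => exact continuous_const
  | cons i w ih =>
    have := ih.comp (s.hcont i)
    have := s.gcont i
    simp only [funext (s.Gw_cons i w)]
    fun_prop

lemma rpow_bound {σ ρ : ℝ} (hρ : 0 < ρ) (hσ1 : σ ≤ 1) :
    s.C * (Real.exp σ * ρ) ^ s.β ≤ s.C * Real.exp s.β * ρ ^ s.β := by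
  rw [Real.mul_rpow (by positivity) hρ.le, ← Real.exp_mul]
  have : Real.exp (σ * s.β) ≤ Real.exp s.β := by
    apply Real.exp_le_exp.mpr; nlinarith [s.hβ0]
  have h1 : 0 ≤ ρ ^ s.β := by positivity
  have := mul_le_mul_of_nonneg_left (mul_le_mul_of_nonneg_right this h1) s.hC.le
  linarith

lemma budget_step {i w} {x} {ρ σ : ℝ} (hρ : 0 < ρ)
    (hb : s.C * Real.exp s.β * ρ ^ s.β * s.Gw (i :: w) x + σ ≤ 1) :
    s.C * Real.exp s.β * (Real.exp (s.g i x) * ρ) ^ s.β * s.Gw w (s.h i x) +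
      (σ + s.C * Real.exp s.β * ρ ^ s.β) ≤ 1 := by
  rw [Gw_cons] at hb
  rw [Real.mul_rpow (by positivity) hρ.le, ← Real.exp_mul, mul_comm (s.g i x)]
  linarith

lemma sigma_le {w} {x} {ρ σ : ℝ} (hρ : 0 < ρ)
    (hb : s.C * Real.exp s.β * ρ ^ s.β * s.Gw w x + σ ≤ 1) : σ ≤ 1 := by
  have := s.one_le_Gw w x
  have h2 : 0 ≤ s.C * Real.exp s.β * ρ ^ s.β * s.Gw w x := by
    have := s.hC; positivity
  linarith

lemma ball_step {i} {x z} {ρ σ : ℝ} (hρ : 0 < ρ) (hσ1 : σ ≤ 1)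
    (hz : dist z x < Real.exp σ * ρ) :
    dist (s.h i z) (s.h i x) < Real.exp (σ + s.C * Real.exp s.β * ρ ^ s.β) *
      (Real.exp (s.g i x) * ρ) := by
  refine (s.lip i x z _ hz).trans_le ?_
  have := s.rpow_bound hρ hσ1
  calc Real.exp (s.g i x + s.C * (Real.exp σ * ρ) ^ s.β) * (Real.exp σ * ρ)
      ≤ Real.exp (s.g i x + s.C * Real.exp s.β * ρ ^ s.β) * (Real.exp σ * ρ) := by gcongr
    _ = _ := by rw [Real.exp_add, Real.exp_add]; ring

lemma distort_dist (w) : ∀ x ρ σ, 0 < ρ → 0 ≤ σ →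
    s.C * Real.exp s.β * ρ ^ s.β * s.Gw w x + σ ≤ 1 → ∀ z, dist z x < Real.exp σ * ρ →
    dist (s.hw w z) (s.hw w x) < Real.exp 1 * (Real.exp (s.Sm s.g w x) * ρ) := by
  induction w with
  | nil =>
    intro x ρ σ hρ hσ hb z hz
    have := s.sigma_le hρ hb
    simp only [hw_nil, Sm_nil, Real.exp_zero, one_mul]
    refine hz.trans_le ?_
    gcongr
  | cons i w ih =>
    intro x ρ σ hρ hσ hb z hz
    have hσ1 := s.sigma_le hρ hb
    have hC := s.hC
    have := ih (s.h i x) (Real.exp (s.g i x) * ρ) _ (by positivity) (by positivity)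
      (s.budget_step hρ hb) (s.h i z) (s.ball_step hρ hσ1 hz)
    refine this.trans_eq ?_
    rw [Sm_cons, Real.exp_add]; ring

lemma distort_lp (w) : ∀ x ρ σ, 0 < ρ → 0 ≤ σ →
    s.C * Real.exp s.β * ρ ^ s.β * s.Gw w x + σ ≤ 1 → ∀ z, dist z x < Real.exp σ * ρ →
    |s.Sm s.lp w z - s.Sm s.lp w x| ≤ 1 - σ := by
  induction w with
  | nil =>
    intro x ρ σ hρ hσ hb z hz
    have := s.sigma_le hρ hb
    simp [this]
  | cons i w ih =>
    intro x ρ σ hρ hσ hb z hz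
    have hσ1 := s.sigma_le hρ hb
    have hC := s.hC
    have := ih (s.h i x) (Real.exp (s.g i x) * ρ) _ (by positivity) (by positivity)
      (s.budget_step hρ hb) (s.h i z) (s.ball_step hρ hσ1 hz)
    have h2 : |s.lp i z - s.lp i x| ≤ s.C * Real.exp s.β * ρ ^ s.β := by
      refine (s.lpH i z x).trans ((?_ : _ ≤ _).trans (s.rpow_bound hρ hσ1))
      have := s.hβ0
      gcongr
    rw [Sm_cons, Sm_cons]
    have e : s.lp i z + s.Sm s.lp w (s.h i z) - (s.lp i x + s.Sm s.lp w (s.h i x)) =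
      (s.lp i z - s.lp i x) + (s.Sm s.lp w (s.h i z) - s.Sm s.lp w (s.h i x)) := by ring
    rw [e]
    refine (abs_add_le _ _).trans ?_
    linarith

lemma meas_image (i) {A : Set (EuclideanSpace ℝ (Fin d))} (hA : MeasurableSet A) :
    MeasurableSet (s.h i '' A) :=
  hA.image_of_continuousOn_injOn (s.hcont i).continuousOn (s.inj i).injOn

lemma meas_image_w (w) {A : Set (EuclideanSpace ℝ (Fin d))} (hA : MeasurableSet A) :
    MeasurableSet (s.hw w '' A) := by
  induction w generalizing A with
  | nil => simpa [hw] using hA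
  | cons i w ih =>
    have : s.hw (i :: w) '' A = s.hw w '' (s.h i '' A) := by
      rw [Set.image_image]; rfl
    rw [this]; exact ih (s.meas_image i hA)

lemma distort_vol (w) : ∀ x ρ σ, 0 < ρ → 0 ≤ σ →
    s.C * Real.exp s.β * ρ ^ s.β * s.Gw w x + σ ≤ 1 → ∀ A, MeasurableSet A →
    A ⊆ ball x (Real.exp σ * ρ) →
    ENNReal.ofReal (Real.exp (s.Sm s.g w x - (1 - σ)) ^ d) * volume A ≤ volume (s.hw w '' A) := by
  induction w with
  | nil =>
    intro x ρ σ hρ hσ hb A hA hAx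
    have := s.sigma_le hρ hb
    have e : s.hw [] '' A = A := by simp [hw]
    rw [e]
    refine mul_le_of_le_one_left zero_le ?_
    rw [← ENNReal.ofReal_one]
    apply ENNReal.ofReal_le_ofReal
    apply pow_le_one₀ (by positivity)
    rw [Real.exp_le_one_iff]; simp [this]
  | cons i w ih =>
    intro x ρ σ hρ hσ hb A hA hAx
    have hσ1 := s.sigma_le hρ hb
    have hC := s.hC
    have h1 := ih (s.h i x) (Real.exp (s.g i x) * ρ) _ (by positivity) (by positivity)
      (s.budget_step hρ hb) (s.h i '' A) (s.meas_image i hA) (by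
        rintro _ ⟨z, hz, rfl⟩
        exact s.ball_step hρ hσ1 (hAx hz))
    have h2 := s.vol i x _ A hA hAx
    have e : s.hw (i :: w) '' A = s.hw w '' (s.h i '' A) := by
      rw [Set.image_image]; rfl
    rw [e]
    refine le_trans ?_ ((mul_le_mul_right h2 _).trans h1)
    rw [← mul_assoc, ← ENNReal.ofReal_mul (by positivity), ← mul_pow, ← Real.exp_add]
    gcongr
    rw [Sm_cons]
    have := s.rpow_bound hρ hσ1
    linarith

lemma Ex_Gw (n x) : s.Ex n (fun w => ENNReal.ofReal (s.Gw w x)) x ≤ ENNReal.ofReal (1 / (1 - s.q)) := by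
  have hq0 := s.hq0
  have hq1 := s.hq1
  have hq : 0 < 1 - s.q := by linarith
  induction n generalizing x with
  | zero =>
    simp only [Ex_zero, Gw_nil]
    apply ENNReal.ofReal_le_ofReal
    rw [le_div_iff₀ hq]; linarith
  | succ n ih =>
    rw [Ex_succ]
    calc ∑ i, ENNReal.ofReal (s.p i x) * s.Ex n (fun w => ENNReal.ofReal (s.Gw (i :: w) x)) (s.h i x)
        ≤ ∑ i, ENNReal.ofReal (s.p i x * (1 + Real.exp (s.β * s.g i x) * (1 / (1 - s.q)))) := by
          refine Finset.sum_le_sum fun i _ => ?_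
          rw [ENNReal.ofReal_mul (s.ppos i x).le]
          gcongr
          calc s.Ex n (fun w => ENNReal.ofReal (s.Gw (i :: w) x)) (s.h i x)
              = s.Ex n (fun w => 1 + ENNReal.ofReal (Real.exp (s.β * s.g i x)) *
                  ENNReal.ofReal (s.Gw w (s.h i x))) (s.h i x) := by
                refine s.Ex_congr _ fun w _ => ?_
                have := s.one_le_Gw w (s.h i x)
                rw [Gw_cons, ENNReal.ofReal_add zero_le_one (by positivity), ENNReal.ofReal_one,
                  ENNReal.ofReal_mul (by positivity)]
            _ = 1 + ENNReal.ofReal (Real.exp (s.β * s.g i x)) *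
                  s.Ex n (fun w => ENNReal.ofReal (s.Gw w (s.h i x))) (s.h i x) := by
                rw [Ex_add, Ex_mul, Ex_const]
            _ ≤ 1 + ENNReal.ofReal (Real.exp (s.β * s.g i x)) * ENNReal.ofReal (1 / (1 - s.q)) := by
                gcongr; exact ih _
            _ = _ := by
                rw [← ENNReal.ofReal_mul (by positivity), ← ENNReal.ofReal_one,
                  ← ENNReal.ofReal_add zero_le_one (by positivity)]
      _ = ENNReal.ofReal (∑ i, s.p i x * (1 + Real.exp (s.β * s.g i x) * (1 / (1 - s.q)))) := by
          rw [ENNReal.ofReal_sum_of_nonneg]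
          intro i _
          have := s.ppos i x
          positivity
      _ ≤ _ := by
          apply ENNReal.ofReal_le_ofReal
          have e : ∑ i, s.p i x * (1 + Real.exp (s.β * s.g i x) * (1 / (1 - s.q))) =
              ∑ i, s.p i x + (∑ i, s.p i x * Real.exp (s.β * s.g i x)) * (1 / (1 - s.q)) := by
            rw [Finset.sum_mul, ← Finset.sum_add_distrib]
            exact Finset.sum_congr rfl fun i _ => by ring
          rw [e, s.psum]
          have := mul_le_mul_of_nonneg_right (s.dq x) (by positivity : (0:ℝ) ≤ 1 / (1 - s.q))
          have e2 : 1 + s.q * (1 / (1 - s.q)) = 1 / (1 - s.q) := by field_simp; ring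
          linarith

/-- Exponential moment bound for averages. -/
lemma exp_moment {ι : Type*} [Fintype ι] (p t : ι → ℝ) (hp : ∀ i, 0 ≤ p i) (hs : ∑ i, p i = 1)
    (B : ℝ) (hB : 0 < B) (ht : ∀ i, |t i| ≤ B) (l : ℝ) (hl : 0 ≤ l) (hlB : l * B ≤ 1) :
    ∑ i, p i * Real.exp (l * t i) ≤ 1 + l * (∑ i, p i * t i) + l ^ 2 * B ^ 2 := by
  have key : ∀ i, p i * Real.exp (l * t i) ≤ p i * (1 + l * t i + l ^ 2 * B ^ 2) := by
    intro i
    refine mul_le_mul_of_nonneg_left ?_ (hp i)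
    have h1 : |l * t i| ≤ l * B := by
      rw [abs_mul, abs_of_nonneg hl]; gcongr; exact ht i
    have := Real.abs_exp_sub_one_sub_id_le (h1.trans hlB)
    have h2 := (abs_le.mp this).2
    have h3 : (l * t i) ^ 2 ≤ (l * B) ^ 2 := sq_le_sq' (by linarith [(abs_le.mp h1).1]) (abs_le.mp h1).2
    nlinarith
  refine (Finset.sum_le_sum fun i _ => key i).trans_eq ?_
  have : ∀ i, p i * (1 + l * t i + l ^ 2 * B ^ 2) = p i * (1 + l ^ 2 * B ^ 2) + l * (p i * t i) := by
    intro i; ring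
  simp_rw [this]
  rw [Finset.sum_add_distrib, ← Finset.sum_mul, hs, ← Finset.mul_sum]; ring

lemma Ex_exp (φ : Fin k → EuclideanSpace ℝ (Fin d) → ℝ) (l c : ℝ)
    (hl : ∀ x, ∑ i, s.p i x * Real.exp (l * φ i x) ≤ Real.exp c) (n x) :
    s.Ex n (fun w => ENNReal.ofReal (Real.exp (l * s.Sm φ w x))) x ≤
      ENNReal.ofReal (Real.exp (n * c)) := by
  induction n generalizing x with
  | zero => simp
  | succ n ih =>
    rw [Ex_succ]
    calc ∑ i, ENNReal.ofReal (s.p i x) *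
          s.Ex n (fun w => ENNReal.ofReal (Real.exp (l * s.Sm φ (i :: w) x))) (s.h i x)
        ≤ ∑ i, ENNReal.ofReal (s.p i x * Real.exp (l * φ i x)) * ENNReal.ofReal (Real.exp (n * c)) := by
          refine Finset.sum_le_sum fun i _ => ?_
          rw [ENNReal.ofReal_mul (s.ppos i x).le, mul_assoc]
          gcongr
          have : ∀ w, ENNReal.ofReal (Real.exp (l * s.Sm φ (i :: w) x)) =
              ENNReal.ofReal (Real.exp (l * φ i x)) *
                ENNReal.ofReal (Real.exp (l * s.Sm φ w (s.h i x))) := by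
            intro w
            rw [Sm_cons, mul_add, Real.exp_add, ENNReal.ofReal_mul (by positivity)]
          simp_rw [this]
          rw [Ex_mul]
          gcongr
          exact ih _
      _ = ENNReal.ofReal (∑ i, s.p i x * Real.exp (l * φ i x)) * ENNReal.ofReal (Real.exp (n * c)) := by
          rw [← Finset.sum_mul, ENNReal.ofReal_sum_of_nonneg]
          intro i _
          have := s.ppos i x
          positivity
      _ ≤ ENNReal.ofReal (Real.exp c) * ENNReal.ofReal (Real.exp (n * c)) := by
          gcongr; exact hl x
      _ = _ := by
          rw [← ENNReal.ofReal_mul (by positivity), ← Real.exp_add]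
          congr 2; push_cast; ring

open Classical in
lemma chernoff (φ : Fin k → EuclideanSpace ℝ (Fin d) → ℝ) (B : ℝ) (hB : 0 < B)
    (hφB : ∀ i x, |φ i x| ≤ B) (hφ0 : ∀ x, ∑ i, s.p i x * φ i x ≤ 0) (ε : ℝ) (hε : 0 < ε) :
    ∃ θ > 0, ∀ (n : ℕ) x, s.Ex n (fun w => if n * ε ≤ s.Sm φ w x then 1 else 0) x ≤
      ENNReal.ofReal (Real.exp (-(θ * n))) := by
  set l := min (1 / B) (ε / (2 * B ^ 2)) with hl
  have hl0 : 0 < l := by positivity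
  have hl1 : l * B ≤ 1 := by
    have : l ≤ 1 / B := min_le_left _ _
    rwa [le_div_iff₀ hB] at this
  have hl2 : l * B ^ 2 ≤ ε / 2 := by
    have : l ≤ ε / (2 * B ^ 2) := min_le_right _ _
    rw [le_div_iff₀ (by positivity)] at this
    linarith
  refine ⟨l * ε / 2, by positivity, fun n x => ?_⟩
  have h1 : ∀ x, ∑ i, s.p i x * Real.exp (l * φ i x) ≤ Real.exp (l * (ε / 2)) := by
    intro x
    have := exp_moment (fun i => s.p i x) (fun i => φ i x) (fun i => (s.ppos i x).le) (s.psum x) B hB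
      (fun i => hφB i x) l hl0.le hl1
    refine this.trans (le_trans ?_ (Real.add_one_le_exp _))
    have h3 : l * ∑ i, s.p i x * φ i x ≤ 0 := mul_nonpos_of_nonneg_of_nonpos hl0.le (hφ0 x)
    have h4 := mul_le_mul_of_nonneg_left hl2 hl0.le
    nlinarith
  have h2 := s.Ex_exp φ l _ h1 n x
  have h3 := s.Ex_markov n (fun w => Real.exp (l * s.Sm φ w x)) (Real.exp (l * (n * ε)))
    (Real.exp_pos _) x (fun w => n * ε ≤ s.Sm φ w x) (fun w _ hw => by gcongr)
  refine h3.trans ((mul_le_mul_right h2 _).trans_eq ?_)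
  rw [← Real.exp_neg, ← ENNReal.ofReal_mul (by positivity), ← Real.exp_add]
  congr 2; ring

end Sys
end

noncomputable section
namespace Sys
variable {d k : ℕ} (s : Sys d k)

/-- Queue-type process used for the maximal inequality. -/
def Mx (G : EuclideanSpace ℝ (Fin d) → ℝ≥0∞) (c : ℝ≥0∞) :
    List (Fin k) → EuclideanSpace ℝ (Fin d) → ℝ≥0∞ → ℝ≥0∞
  | [], _, m => m
  | i :: w, x, m => Mx G c w (s.h i x) (m + G x - c)

/-- Sums of a function of the position along a word. -/
def SG (G : EuclideanSpace ℝ (Fin d) → ℝ≥0∞) :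
    List (Fin k) → EuclideanSpace ℝ (Fin d) → ℝ≥0∞
  | [], _ => 0
  | i :: w, x => G x + SG G w (s.h i x)

lemma Mx_mono (G c w) {x} {m m' : ℝ≥0∞} (hm : m ≤ m') : s.Mx G c w x m ≤ s.Mx G c w x m' := by
  induction w generalizing x m m' with
  | nil => exact hm
  | cons i w ih => exact ih (tsub_le_tsub_right (add_le_add_left hm _) _)

lemma Mx_append (G c u v) (x) (m : ℝ≥0∞) :
    s.Mx G c (u ++ v) x m = s.Mx G c v (s.hw u x) (s.Mx G c u x m) := by
  induction u generalizing x m with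
  | nil => rfl
  | cons i u ih => exact ih _ _

lemma Mx_ge (G c v) (x) (m : ℝ≥0∞) :
    m + s.SG G v x ≤ s.Mx G c v x m + v.length * c := by
  induction v generalizing x m with
  | nil => simp [SG, Mx]
  | cons i v ih =>
    have := ih (s.h i x) (m + G x - c)
    simp only [SG, Mx, List.length_cons]
    push_cast
    calc m + (G x + s.SG G v (s.h i x)) = (m + G x) + s.SG G v (s.h i x) := by ring
      _ ≤ (m + G x - c + c) + s.SG G v (s.h i x) :=
          add_le_add le_tsub_add le_rfl
      _ = (m + G x - c + s.SG G v (s.h i x)) + c := by ring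
      _ ≤ _ := by grw [this]; ring_nf; rfl

lemma Mx_meas (G c v) (hG : Measurable G) {α : Type*} [MeasurableSpace α]
    (f : α → EuclideanSpace ℝ (Fin d)) (hf : Measurable f) (m : α → ℝ≥0∞) (hm : Measurable m) :
    Measurable fun a => s.Mx G c v (f a) (m a) := by
  induction v generalizing f m with
  | nil => exact hm
  | cons i v ih =>
    exact ih _ ((s.hcont i).measurable.comp hf) _ ((hm.add (hG.comp hf)).sub_const _)

lemma Mx_meas0 (G c v) (hG : Measurable G) : Measurable fun a => s.Mx G c v a 0 :=
  s.Mx_meas G c v hG _ measurable_id _ measurable_const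

/-- The integrated queue. -/
def qe (G : EuclideanSpace ℝ (Fin d) → ℝ≥0∞) (c : ℝ≥0∞) (n : ℕ) : ℝ≥0∞ :=
  ∫⁻ x, s.Ex n (fun w => s.Mx G c w x 0) x ∂s.ν

lemma qe_mono (G c n) (hG : Measurable G) : s.qe G c n ≤ s.qe G c (n + 1) := by
  unfold qe
  rw [← s.stat (fun x => s.Ex n (fun w => s.Mx G c w x 0) x)
    (s.Ex_meas n _ fun w => s.Mx_meas0 G c w hG)]
  refine lintegral_mono fun x => ?_
  rw [Ex_succ]
  simp only
  gcongr with i _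
  exact s.Ex_mono _ fun w _ => s.Mx_mono G c w zero_le

lemma Ex_one_const (F : List (Fin k) → ℝ≥0∞) (a : ℝ≥0∞) (x) (hF : ∀ i, F [i] = a) :
    s.Ex 1 F x = a := by
  rw [← s.Ex_const 1 a x]
  refine s.Ex_congr x fun w hw => ?_
  obtain ⟨i, rfl⟩ := List.length_eq_one_iff.mp hw
  exact hF i

open Classical in
lemma qe_step (G c n) (hG : Measurable G) :
    c * (∫⁻ x, s.Ex (n + 1) (fun w => if 0 < s.Mx G c w x 0 then 1 else 0) x ∂s.ν) +
      s.qe G c (n + 1) ≤ s.qe G c n + ∫⁻ x, G x ∂s.ν := by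
  unfold qe
  rw [← s.stat_n n G hG]
  have m1 : Measurable fun x => s.Ex (n + 1) (fun w => if 0 < s.Mx G c w x 0 then 1 else 0) x := by
    refine s.Ex_meas _ _ fun w => ?_
    exact Measurable.ite (measurableSet_lt measurable_const (s.Mx_meas0 G c w hG))
      measurable_const measurable_const
  have m2 : Measurable fun x => s.Ex n (fun w => s.Mx G c w x 0) x :=
    s.Ex_meas _ _ fun w => s.Mx_meas0 G c w hG
  rw [← lintegral_const_mul _ m1, ← lintegral_add_left (m1.const_mul c), ← lintegral_add_left m2]
  refine lintegral_mono fun x => ?_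
  rw [Ex_append, Ex_append, ← Ex_mul, ← Ex_add, ← Ex_add]
  refine s.Ex_mono x fun u _ => ?_
  rw [s.Ex_one_const _ (if 0 < s.Mx G c u x 0 + G (s.hw u x) - c then 1 else 0),
    s.Ex_one_const _ (s.Mx G c u x 0 + G (s.hw u x) - c)]
  · split_ifs with h
    · rw [mul_one]
      have := tsub_pos_iff_lt.mp h
      rw [add_tsub_cancel_of_le this.le]
    · simp
  · intro i; rw [Mx_append]; rfl
  · intro i; rw [Mx_append]; rfl

open Classical in
lemma maximal (G : EuclideanSpace ℝ (Fin d) → ℝ≥0∞) (c N) (hG : Measurable G) :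
    c * (∫⁻ x, s.Ex N (fun w => if ∃ u v, w = u ++ v ∧ v.length * c < s.SG G v (s.hw u x)
      then 1 else 0) x ∂s.ν) ≤ ∫⁻ x, G x ∂s.ν := by
  by_cases hI : ∫⁻ x, G x ∂s.ν = ∞
  · rw [hI]; exact le_top
  have key : ∀ w x, (∃ u v, w = u ++ v ∧ v.length * c < s.SG G v (s.hw u x)) →
      0 < s.Mx G c w x 0 := by
    rintro w x ⟨u, v, rfl, huv⟩
    rw [Mx_append]
    have := s.Mx_ge G c v (s.hw u x) (s.Mx G c u x 0)
    by_contra h0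
    have h0 : s.Mx G c v (s.hw u x) (s.Mx G c u x 0) = 0 := by simpa using h0
    rw [h0, zero_add] at this
    exact absurd (huv.trans_le (le_add_self.trans this)) (lt_irrefl _)
  calc _ ≤ c * (∫⁻ x, s.Ex N (fun w => if 0 < s.Mx G c w x 0 then 1 else 0) x ∂s.ν) := by
        gcongr with x
        refine s.Ex_mono x fun w _ => ?_
        by_cases h : ∃ u v, w = u ++ v ∧ v.length * c < s.SG G v (s.hw u x)
        · rw [if_pos h, if_pos (key w x h)]
        · rw [if_neg h]; exact zero_le
    _ ≤ _ := by
        cases N with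
        | zero => simp [Mx]
        | succ n =>
          have fin : ∀ n, s.qe G c n ≠ ∞ := by
            intro n
            induction n with
            | zero => simp [qe, Mx]
            | succ n ih =>
              exact ne_top_of_le_ne_top (ENNReal.add_ne_top.mpr ⟨ih, hI⟩)
                (le_add_self.trans (s.qe_step G c n hG))
          have h1 := s.qe_step G c n hG
          have h2 := s.qe_mono G c n hG
          have h3 := (add_le_add_right h2 _).trans h1
          rw [add_comm] at h3
          exact (ENNReal.add_le_add_iff_left (fin n)).mp h3

end Sys
end

noncomputable section
namespace Sys
variable {d k : ℕ} (s : Sys d k)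

/-- Transfer (Markov) operator. -/
def Pr (f : EuclideanSpace ℝ (Fin d) → ℝ) (x : EuclideanSpace ℝ (Fin d)) : ℝ :=
  ∑ i, s.p i x * f (s.h i x)

/-- Hölder functions with exponent `β`. -/
def Hol (K : ℝ) (f : EuclideanSpace ℝ (Fin d) → ℝ) : Prop :=
  ∀ x y, |f x - f y| ≤ K * dist x y ^ s.β

lemma Hol.cont {s : Sys d k} {K f} (hf : s.Hol K f) : Continuous f := by
  rw [Metric.continuous_iff']
  intro a ε hε
  have h1 : Tendsto (fun x => K * dist x a ^ s.β) (nhds a) (nhds (K * dist a a ^ s.β)) := by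
    have : ContinuousAt (fun x => K * dist x a ^ s.β) a := by
      refine ContinuousAt.mul continuousAt_const ?_
      refine ContinuousAt.rpow_const (by fun_prop) (Or.inr s.hβ0.le)
    exact this
  rw [dist_self, Real.zero_rpow s.hβ0.ne', mul_zero] at h1
  filter_upwards [h1.eventually_lt_const hε] with x hx
  rw [Real.dist_eq]
  exact (hf x a).trans_lt hx

lemma Pr_bdd {f B} (hf : ∀ x, |f x| ≤ B) (x) : |s.Pr f x| ≤ B := by
  unfold Pr
  calc _ ≤ ∑ i, |s.p i x * f (s.h i x)| := Finset.abs_sum_le_sum_abs _ _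
    _ ≤ ∑ i, s.p i x * B := by
        gcongr with i _
        rw [abs_mul, abs_of_pos (s.ppos i x)]
        exact mul_le_mul_of_nonneg_left (hf _) (s.ppos i x).le
    _ = B := by rw [← Finset.sum_mul, s.psum, one_mul]

lemma Pr_hol {f B K} (hK : 0 ≤ K) (hf : ∀ x, |f x| ≤ B) (hH : s.Hol K f)
    (hBK : s.q * K + k * s.C * B ≤ K) : s.Hol K (s.Pr f) := by
  intro x y
  have hd : 0 ≤ dist x y ^ s.β := by positivity
  have e : s.Pr f x - s.Pr f y = ∑ i, (s.p i x * (f (s.h i x) - f (s.h i y)) +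
      (s.p i x - s.p i y) * f (s.h i y)) := by
    unfold Pr
    rw [← Finset.sum_sub_distrib]
    exact Finset.sum_congr rfl fun i _ => by ring
  rw [e]
  calc _ ≤ ∑ i, |s.p i x * (f (s.h i x) - f (s.h i y)) +
      (s.p i x - s.p i y) * f (s.h i y)| := Finset.abs_sum_le_sum_abs _ _
    _ ≤ ∑ i, (K * (s.p i x * dist (s.h i x) (s.h i y) ^ s.β) + s.C * dist x y ^ s.β * B) := by
        gcongr with i _
        refine (abs_add_le _ _).trans (add_le_add ?_ ?_)
        · rw [abs_mul, abs_of_pos (s.ppos i x)]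
          calc _ ≤ s.p i x * (K * dist (s.h i x) (s.h i y) ^ s.β) :=
                mul_le_mul_of_nonneg_left (hH _ _) (s.ppos i x).le
            _ = _ := by ring
        · rw [abs_mul]
          exact mul_le_mul (s.pH i x y) (hf _) (abs_nonneg _) (by have := s.hC; positivity)
    _ = K * (∑ i, s.p i x * dist (s.h i x) (s.h i y) ^ s.β) + k * (s.C * dist x y ^ s.β * B) := by
        rw [Finset.sum_add_distrib, Finset.mul_sum]; simp
    _ ≤ K * (s.q * dist x y ^ s.β) + k * (s.C * dist x y ^ s.β * B) := by
        gcongr; exact s.coa x y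
    _ = (s.q * K + k * s.C * B) * dist x y ^ s.β := by ring
    _ ≤ _ := by gcongr

/-- Cesaro averages. -/
def Av (n : ℕ) (f : EuclideanSpace ℝ (Fin d) → ℝ) (x : EuclideanSpace ℝ (Fin d)) : ℝ :=
  (∑ j ∈ Finset.range n, (s.Pr^[j] f) x) / n

lemma iter_bdd {f B} (hf : ∀ x, |f x| ≤ B) (j x) : |(s.Pr^[j] f) x| ≤ B := by
  induction j generalizing x with
  | zero => exact hf x
  | succ j ih => rw [Function.iterate_succ_apply']; exact s.Pr_bdd ih x

lemma iter_hol {f B K} (hK : 0 ≤ K) (hf : ∀ x, |f x| ≤ B) (hH : s.Hol K f)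
    (hBK : s.q * K + k * s.C * B ≤ K) (j) : s.Hol K (s.Pr^[j] f) := by
  induction j with
  | zero => exact hH
  | succ j ih =>
    rw [Function.iterate_succ_apply']; exact s.Pr_hol hK (s.iter_bdd hf j) ih hBK

lemma avg_bound (n : ℕ) (a : ℕ → ℝ) (B : ℝ) (hB : 0 ≤ B) (ha : ∀ j, |a j| ≤ B) :
    |(∑ j ∈ Finset.range n, a j) / n| ≤ B := by
  rcases Nat.eq_zero_or_pos n with rfl | hn
  · simpa using hB
  · have hn' : (0:ℝ) < n := by exact_mod_cast hn
    rw [abs_div, abs_of_pos hn', div_le_iff₀ hn']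
    calc _ ≤ ∑ j ∈ Finset.range n, |a j| := Finset.abs_sum_le_sum_abs _ _
      _ ≤ ∑ j ∈ Finset.range n, B := by gcongr with j _; exact ha j
      _ = _ := by simp [mul_comm]

lemma Av_bdd {f B} (hB : 0 ≤ B) (hf : ∀ x, |f x| ≤ B) (n x) : |s.Av n f x| ≤ B :=
  avg_bound n _ B hB fun j => s.iter_bdd hf j x

lemma Av_hol {f B K} (hK : 0 ≤ K) (hf : ∀ x, |f x| ≤ B) (hH : s.Hol K f)
    (hBK : s.q * K + k * s.C * B ≤ K) (n) : s.Hol K (s.Av n f) := by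
  intro x y
  have e : s.Av n f x - s.Av n f y =
      (∑ j ∈ Finset.range n, ((s.Pr^[j] f) x - (s.Pr^[j] f) y)) / n := by
    unfold Av; rw [Finset.sum_sub_distrib, _root_.sub_div]
  rw [e]
  exact avg_bound n _ _ (by positivity) fun j => s.iter_hol hK hf hH hBK j x y

lemma Pr_Av (f n x) (hn : 0 < n) :
    s.Pr (s.Av n f) x = s.Av n f x + ((s.Pr^[n] f) x - f x) / n := by
  have e : s.Pr (s.Av n f) x = (∑ j ∈ Finset.range n, (s.Pr^[j+1] f) x) / n := by
    simp only [Function.iterate_succ_apply', Pr, Av]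
    rw [Finset.sum_comm, Finset.sum_div]
    refine Finset.sum_congr rfl fun i _ => ?_
    rw [← Finset.mul_sum, mul_div_assoc]
  have h1 := Finset.sum_range_succ (fun j => (s.Pr^[j] f) x) n
  have h2 := Finset.sum_range_succ' (fun j => (s.Pr^[j] f) x) n
  rw [e, Av, ← add_div]
  congr 1
  simp only [Function.iterate_zero, id] at h2
  linarith

lemma Pr_cont {f} (hf : Continuous f) : Continuous (s.Pr f) :=
  continuous_finsetSum _ fun i _ => (s.pcont i).mul (hf.comp (s.hcont i))

lemma integ {f : EuclideanSpace ℝ (Fin d) → ℝ} {B} (hc : Continuous f) (hf : ∀ x, |f x| ≤ B) :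
    Integrable f s.ν := by
  have := s.prob
  exact Integrable.of_bound hc.aestronglyMeasurable B (ae_of_all _ hf)

lemma Pr_int_nonneg {f B} (hc : Continuous f) (hf : ∀ x, |f x| ≤ B) (h0 : ∀ x, 0 ≤ f x) :
    ∫ x, s.Pr f x ∂s.ν = ∫ x, f x ∂s.ν := by
  rw [integral_eq_lintegral_of_nonneg_ae (ae_of_all _ h0) hc.aestronglyMeasurable,
    integral_eq_lintegral_of_nonneg_ae (f := s.Pr f) (ae_of_all _ fun x =>
      Finset.sum_nonneg fun i _ => mul_nonneg (s.ppos i x).le (h0 _))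
      (s.Pr_cont hc).aestronglyMeasurable,
    ← s.stat (fun x => ENNReal.ofReal (f x)) hc.measurable.ennreal_ofReal]
  congr 2
  funext x
  unfold Pr
  rw [ENNReal.ofReal_sum_of_nonneg fun i _ => mul_nonneg (s.ppos i x).le (h0 _)]
  exact Finset.sum_congr rfl fun i _ => ENNReal.ofReal_mul (s.ppos i x).le

lemma Pr_int {f B} (hc : Continuous f) (hf : ∀ x, |f x| ≤ B) :
    ∫ x, s.Pr f x ∂s.ν = ∫ x, f x ∂s.ν := by
  have := s.prob
  have h1 := s.Pr_int_nonneg (f := fun x => f x + B) (B := B + B) (hc.add continuous_const)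
    (fun x => by have := abs_le.mp (hf x); rw [abs_le]; constructor <;> linarith)
    (fun x => by have := abs_le.mp (hf x); linarith)
  have h2 : ∀ x, s.Pr (fun x => f x + B) x = s.Pr f x + B := by
    intro x; unfold Pr; simp only [mul_add, Finset.sum_add_distrib, ← Finset.sum_mul, s.psum, one_mul]
  simp only [h2] at h1
  rw [integral_add (s.integ (s.Pr_cont hc) (s.Pr_bdd hf)) (integrable_const _),
    integral_add (s.integ hc hf) (integrable_const _)] at h1
  linarith

lemma supp_fwd {x} (hx : x ∈ s.ν.support) (i) : s.h i x ∈ s.ν.support := by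
  rw [Measure.mem_support_iff_forall] at hx ⊢
  intro V hV
  obtain ⟨V', hV', hVo, hxV⟩ := _root_.mem_nhds_iff.mp hV
  refine lt_of_lt_of_le ?_ (measure_mono hV')
  rw [pos_iff_ne_zero]
  intro h0
  have h1 := s.stat (V'.indicator 1) (measurable_one.indicator hVo.measurableSet)
  rw [lintegral_indicator_one hVo.measurableSet, h0, lintegral_eq_zero_iff] at h1
  · have h2 := hx (s.h i ⁻¹' V') ((s.hcont i).continuousAt (hVo.mem_nhds hxV))
    have h3 : s.ν (s.h i ⁻¹' V') = 0 := by
      refine measure_mono_null ?_ h1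
      intro y hy
      simp only [Set.mem_compl_iff, Set.mem_ofPred_eq, Pi.zero_apply]
      intro h4
      have h5 := (Finset.sum_eq_zero_iff.mp h4) i (Finset.mem_univ i)
      rw [Set.indicator_of_mem (by exact hy)] at h5
      simp at h5
      exact absurd (s.ppos i y) (not_lt.mpr h5)
    exact h2.ne' h3
  · refine Finset.measurable_sum _ fun i _ => ?_
    exact (s.pcont i).measurable.ennreal_ofReal.mul
      ((measurable_one.indicator hVo.measurableSet).comp (s.hcont i).measurable)

lemma zero_on_supp {f : EuclideanSpace ℝ (Fin d) → ℝ} (hc : Continuous f) (h0 : f =ᵐ[s.ν] 0)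
    {x} (hx : x ∈ s.ν.support) : f x = 0 := by
  by_contra hne
  rw [Measure.mem_support_iff_forall] at hx
  have h1 := hx {y | f y ≠ 0} ((isOpen_ne_fun hc continuous_const).mem_nhds hne)
  exact h1.ne' h0

lemma inv_const {f B K} (hK : 0 ≤ K) (hf : ∀ x, |f x| ≤ B) (hH : s.Hol K f)
    (hP : ∀ x, s.Pr f x = f x) {x y} (hx : x ∈ s.ν.support) (hy : y ∈ s.ν.support) :
    f x = f y := by
  have hc := hH.cont
  have hc2 : Continuous fun x => f x ^ 2 := hc.pow 2
  have hsq : ∀ x, |f x ^ 2| ≤ B ^ 2 := by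
    intro x; rw [abs_pow]; exact pow_le_pow_left₀ (abs_nonneg _) (hf x) 2
  have e : ∀ x, ∑ i, s.p i x * (f (s.h i x) - f x) ^ 2 = s.Pr (fun x => f x ^ 2) x - f x ^ 2 := by
    intro x
    have : ∀ i, s.p i x * (f (s.h i x) - f x) ^ 2 = s.p i x * f (s.h i x) ^ 2 -
      2 * f x * (s.p i x * f (s.h i x)) + s.p i x * f x ^ 2 := fun i => by ring
    simp only [this, Finset.sum_add_distrib, Finset.sum_sub_distrib, ← Finset.mul_sum,
      ← Finset.sum_mul, s.psum]
    have h2 := hP x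
    unfold Pr at h2 ⊢
    rw [h2]; ring
  have hcs : Continuous fun x => ∑ i, s.p i x * (f (s.h i x) - f x) ^ 2 :=
    continuous_finsetSum _ fun i _ =>
      (s.pcont i).mul (((hc.comp (s.hcont i)).sub hc).pow 2)
  have hintg : ∫ x, ∑ i, s.p i x * (f (s.h i x) - f x) ^ 2 ∂s.ν = 0 := by
    simp only [e]
    rw [integral_sub (s.integ (s.Pr_cont hc2) (s.Pr_bdd hsq)) (s.integ hc2 hsq),
      s.Pr_int hc2 hsq, sub_self]
  have hnn : ∀ x, 0 ≤ ∑ i, s.p i x * (f (s.h i x) - f x) ^ 2 := fun x =>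
    Finset.sum_nonneg fun i _ => mul_nonneg (s.ppos i x).le (sq_nonneg _)
  have hae := (integral_eq_zero_iff_of_nonneg hnn (by
    simp only [e]
    exact (s.integ (s.Pr_cont hc2) (s.Pr_bdd hsq)).sub (s.integ hc2 hsq))).mp hintg
  have hfix : ∀ x ∈ s.ν.support, ∀ i, f (s.h i x) = f x := by
    intro x hx i
    have h1 := s.zero_on_supp hcs hae hx
    have h2 := (Finset.sum_eq_zero_iff_of_nonneg fun i _ =>
      mul_nonneg (s.ppos i x).le (sq_nonneg _)).mp h1 i (Finset.mem_univ i)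
    rcases mul_eq_zero.mp h2 with h3 | h3
    · exact absurd h3 (s.ppos i x).ne'
    · exact sub_eq_zero.mp (pow_eq_zero_iff (two_ne_zero) |>.mp h3)
  have greedy : ∀ n : ℕ, ∀ x ∈ s.ν.support, ∀ y ∈ s.ν.support,
      |f x - f y| ≤ K * (s.q ^ n * dist x y ^ s.β) := by
    intro n
    induction n with
    | zero => intro x _ y _; simpa using hH x y
    | succ n ih =>
      intro x hx y hy
      obtain ⟨j, hj⟩ : ∃ j, dist (s.h j x) (s.h j y) ^ s.β ≤ s.q * dist x y ^ s.β := by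
        by_contra! hcon
        have h1 : ∑ j, s.p j x * (s.q * dist x y ^ s.β) <
            ∑ j, s.p j x * dist (s.h j x) (s.h j y) ^ s.β := by
          refine Finset.sum_lt_sum_of_nonempty ?_ fun j _ =>
            mul_lt_mul_of_pos_left (hcon j) (s.ppos j x)
          by_contra hne
          have h2 := s.psum x
          rw [Finset.not_nonempty_iff_eq_empty.mp hne] at h2
          simp at h2
        rw [← Finset.sum_mul, s.psum, one_mul] at h1
        exact absurd (s.coa x y) (not_le.mpr h1)
      rw [← hfix x hx j, ← hfix y hy j]
      refine (ih _ (s.supp_fwd hx j) _ (s.supp_fwd hy j)).trans ?_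
      have hq0 := s.hq0
      calc _ ≤ K * (s.q ^ n * (s.q * dist x y ^ s.β)) := by gcongr
        _ = _ := by ring
  have hl : Tendsto (fun n : ℕ => K * (s.q ^ n * dist x y ^ s.β)) atTop
      (nhds (K * (0 * dist x y ^ s.β))) :=
    ((tendsto_pow_atTop_nhds_zero_of_lt_one s.hq0.le s.hq1).mul_const _).const_mul _
  have h3 := ge_of_tendsto' hl fun n => greedy n x hx y hy
  rw [zero_mul, mul_zero] at h3
  exact sub_eq_zero.mp (abs_eq_zero.mp (le_antisymm h3 (abs_nonneg _)))

lemma Av_diff {f B K} (hK : 0 ≤ K) (hB : 0 ≤ B) (hf : ∀ x, |f x| ≤ B) (hH : s.Hol K f)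
    (hBK : s.q * K + k * s.C * B ≤ K) {x y} (hx : x ∈ s.ν.support) (hy : y ∈ s.ν.support) :
    Tendsto (fun n => s.Av n f x - s.Av n f y) atTop (nhds 0) := by
  rw [tendsto_iff_ultrafilter]
  intro 𝒰 h𝒰
  have hex : ∀ x, ∃ a, Tendsto (fun n => s.Av n f x) 𝒰 (nhds a) := by
    intro x
    have hcmp : IsCompact (Set.Icc (-B) B) := isCompact_Icc
    obtain ⟨a, _, ha⟩ := hcmp.ultrafilter_le_nhds' (𝒰.map fun n => s.Av n f x)
      (Filter.mem_map.mpr (Filter.mem_of_superset univ_mem fun n _ =>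
        abs_le.mp (s.Av_bdd hB hf n x)))
    exact ⟨a, ha⟩
  choose g hg using hex
  have hgB : ∀ x, |g x| ≤ B := fun x =>
    le_of_tendsto (hg x).abs (Eventually.of_forall fun n => s.Av_bdd hB hf n x)
  have hgH : s.Hol K g := fun x y =>
    le_of_tendsto ((hg x).sub (hg y)).abs (Eventually.of_forall fun n => s.Av_hol hK hf hH hBK n x y)
  have hgP : ∀ x, s.Pr g x = g x := by
    intro x
    have h1 : Tendsto (fun n => s.Pr (s.Av n f) x) 𝒰 (nhds (s.Pr g x)) :=
      tendsto_finsetSum _ fun i _ => (hg _).const_mul _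
    have h2 : Tendsto (fun n : ℕ => ((s.Pr^[n] f) x - f x) / n) atTop (nhds 0) := by
      refine squeeze_zero_norm (a := fun n : ℕ => (2 * B) / n) ?_
        (tendsto_const_div_atTop_nhds_zero_nat _)
      intro n
      rw [Real.norm_eq_abs, abs_div, Nat.abs_cast]
      gcongr
      have := abs_sub ((s.Pr^[n] f) x) (f x)
      have := s.iter_bdd hf n x
      have := hf x
      linarith
    have h3 : Tendsto (fun n => s.Pr (s.Av n f) x) 𝒰 (nhds (g x + 0)) := by
      refine ((hg x).add (h2.mono_left h𝒰)).congr' ?_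
      filter_upwards [h𝒰 (eventually_gt_atTop 0)] with n hn
      exact (s.Pr_Av f n x hn).symm
    rw [add_zero] at h3
    exact tendsto_nhds_unique h1 h3
  have := (hg x).sub (hg y)
  rwa [s.inv_const hK hgB hgH hgP hx hy, sub_self] at this

lemma iter_int {f B K} (hK : 0 ≤ K) (hf : ∀ x, |f x| ≤ B) (hH : s.Hol K f)
    (hBK : s.q * K + k * s.C * B ≤ K) (j) :
    ∫ x, (s.Pr^[j] f) x ∂s.ν = ∫ x, f x ∂s.ν := by
  induction j with
  | zero => rfl
  | succ j ih =>
    rw [Function.iterate_succ_apply', s.Pr_int (s.iter_hol hK hf hH hBK j).cont (s.iter_bdd hf j), ih]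

lemma Av_int {f B K} (hK : 0 ≤ K) (hf : ∀ x, |f x| ≤ B) (hH : s.Hol K f)
    (hBK : s.q * K + k * s.C * B ≤ K) (n : ℕ) (hn : 0 < n) :
    ∫ x, s.Av n f x ∂s.ν = ∫ x, f x ∂s.ν := by
  unfold Av
  rw [integral_div, integral_finsetSum _ fun j _ =>
    s.integ (s.iter_hol hK hf hH hBK j).cont (s.iter_bdd hf j)]
  simp only [s.iter_int hK hf hH hBK]
  simp; field_simp

lemma Av_lim {f B K} (hK : 0 ≤ K) (hB : 0 ≤ B) (hf : ∀ x, |f x| ≤ B) (hH : s.Hol K f)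
    (hBK : s.q * K + k * s.C * B ≤ K) {x} (hx : x ∈ s.ν.support) :
    Tendsto (fun n => s.Av n f x) atTop (nhds (∫ y, f y ∂s.ν)) := by
  have := s.prob
  have h1 : Tendsto (fun n => ∫ y, (s.Av n f x - s.Av n f y) ∂s.ν) atTop
      (nhds (∫ y, (0:ℝ) ∂s.ν)) := by
    refine tendsto_integral_of_dominated_convergence (fun _ => 2 * B) ?_ (integrable_const _) ?_ ?_
    · intro n
      exact (continuous_const.sub (s.Av_hol hK hf hH hBK n).cont).aestronglyMeasurable
    · intro n
      refine ae_of_all _ fun y => ?_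
      rw [Real.norm_eq_abs]
      have := abs_sub (s.Av n f x) (s.Av n f y)
      have := s.Av_bdd hB hf n x
      have := s.Av_bdd hB hf n y
      linarith
    · filter_upwards [Measure.support_mem_ae (μ := s.ν)] with y hy
      exact s.Av_diff hK hB hf hH hBK hx hy
  rw [integral_zero] at h1
  have h2 : Tendsto (fun n => ∫ y, (s.Av n f x - s.Av n f y) ∂s.ν + ∫ y, f y ∂s.ν) atTop
      (nhds (0 + ∫ y, f y ∂s.ν)) := h1.add_const _
  rw [zero_add] at h2
  refine h2.congr' ?_
  filter_upwards [eventually_gt_atTop 0] with n hn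
  rw [integral_sub (integrable_const _) (s.integ (s.Av_hol hK hf hH hBK n).cont (s.Av_bdd hB hf n)),
    s.Av_int hK hf hH hBK n hn]
  simp

/-- Mean ergodic theorem for Hölder observables. -/
lemma mean_erg {f B K} (hK : 0 ≤ K) (hB : 0 ≤ B) (hf : ∀ x, |f x| ≤ B) (hH : s.Hol K f)
    (δ : ℝ) (hδ : 0 < δ) :
    ∃ n : ℕ, 0 < n ∧ Continuous (s.Av n f) ∧ ∫⁻ x, ENNReal.ofReal |s.Av n f x - ∫ y, f y ∂s.ν| ∂s.ν ≤
      ENNReal.ofReal δ := by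
  have := s.prob
  have hC := s.hC
  have hq1 := s.hq1
  have hq : 0 < 1 - s.q := by linarith
  set K' := max K (k * s.C * B / (1 - s.q))
  have hK' : 0 ≤ K' := le_max_of_le_left hK
  have hH' : s.Hol K' f := fun x y => (hH x y).trans (by gcongr; exact le_max_left _ _)
  have hBK : s.q * K' + k * s.C * B ≤ K' := by
    have : k * s.C * B / (1 - s.q) ≤ K' := le_max_right _ _
    rw [div_le_iff₀ hq] at this
    linarith
  have hcont := fun n => (s.Av_hol hK' hf hH' hBK n).cont
  have h1 : Tendsto (fun n => ∫⁻ x, ENNReal.ofReal |s.Av n f x - ∫ y, f y ∂s.ν| ∂s.ν) atTop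
      (nhds (∫⁻ x, 0 ∂s.ν)) := by
    refine tendsto_lintegral_of_dominated_convergence
      (fun _ => ENNReal.ofReal (B + |∫ y, f y ∂s.ν|)) ?_ ?_ ?_ ?_
    · intro n
      have := hcont n
      exact (by fun_prop : Continuous fun x => |s.Av n f x - ∫ y, f y ∂s.ν|).measurable.ennreal_ofReal
    · intro n
      refine ae_of_all _ fun y => ENNReal.ofReal_le_ofReal ?_
      have := abs_sub (s.Av n f y) (∫ y, f y ∂s.ν)
      have := s.Av_bdd hB hf n y
      linarith
    · simp
    · filter_upwards [Measure.support_mem_ae (μ := s.ν)] with y hy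
      have h2 := s.Av_lim hK' hB hf hH' hBK hy
      have h3 := ((h2.sub_const (∫ y, f y ∂s.ν)).abs)
      rw [sub_self, abs_zero] at h3
      simpa using ENNReal.tendsto_ofReal h3
  rw [lintegral_zero] at h1
  have h4 := h1.eventually_lt_const (u := ENNReal.ofReal δ) (by simpa using hδ)
  obtain ⟨n, hn, hn0⟩ := (h4.and (eventually_gt_atTop 0)).exists
  exact ⟨n, hn0, hcont n, hn.le⟩

end Sys
end

noncomputable section
namespace Sys
variable {d k : ℕ} (s : Sys d k)

/-- The event that some long suffix of the trajectory has property `P`. -/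
def Bev (P : List (Fin k) → EuclideanSpace ℝ (Fin d) → Prop) (n0 : ℕ) (w : List (Fin k))
    (x : EuclideanSpace ℝ (Fin d)) : Prop :=
  ∃ u v, w = u ++ v ∧ n0 ≤ v.length ∧ P v (s.hw u x)

lemma Bev_meas (P) (n0 w) (hP : ∀ v, MeasurableSet {x | P v x}) :
    MeasurableSet {x | s.Bev P n0 w x} := by
  have : {x | s.Bev P n0 w x} = ⋃ u, ⋃ v, {x | w = u ++ v ∧ n0 ≤ v.length ∧ P v (s.hw u x)} := by
    ext x; simp [Bev]
  rw [this]
  refine MeasurableSet.iUnion fun u => MeasurableSet.iUnion fun v => ?_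
  refine (MeasurableSet.const _).inter ((MeasurableSet.const _).inter ?_)
  exact (s.hw_cont u).measurable (hP v)

open Classical in
lemma tail_bound (P : List (Fin k) → EuclideanSpace ℝ (Fin d) → Prop) (a : ℕ → ℝ≥0∞) (n0 : ℕ)
    (hP : ∀ n x, s.Ex n (fun v => if P v x then 1 else 0) x ≤ a n) (N x) :
    s.Ex N (fun w => if s.Bev P n0 w x then 1 else 0) x ≤ ∑' n, a (n + n0) := by
  have step : ∀ n, s.Ex N (fun w => if ∃ u v, w = u ++ v ∧ v.length = n ∧ P v (s.hw u x)
      then 1 else 0) x ≤ a n := by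
    intro n
    by_cases hn : n ≤ N
    · obtain ⟨m, rfl⟩ := Nat.exists_eq_add_of_le' hn
      rw [Ex_append, ← s.Ex_const m (a n) x]
      refine s.Ex_mono x fun u hu => ?_
      refine le_trans ?_ (hP n (s.hw u x))
      refine s.Ex_mono _ fun v hv => ?_
      by_cases hh : ∃ u' v', u ++ v = u' ++ v' ∧ v'.length = n ∧ P v' (s.hw u' x)
      · rw [if_pos hh]
        obtain ⟨u', v', he, hl, hp⟩ := hh
        obtain ⟨rfl, rfl⟩ := List.append_inj' he (by omega)
        rw [if_pos hp]
      · rw [if_neg hh]; exact zero_le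
    · refine le_trans ?_ zero_le
      refine le_trans (s.Ex_mono (G := fun _ => 0) x fun w hw => ?_) (s.Ex_const N 0 x).le
      rw [if_neg]
      rintro ⟨u, v, rfl, hl, _⟩
      simp at hw; omega
  calc _ ≤ s.Ex N (fun w => ∑ n ∈ Finset.range (N + 1),
        if ∃ u v, w = u ++ v ∧ v.length = n + n0 ∧ P v (s.hw u x) then 1 else 0) x := by
        refine s.Ex_mono x fun w hw => ?_
        by_cases hb : s.Bev P n0 w x
        · rw [if_pos hb]
          obtain ⟨u, v, he, hl, hp⟩ := hb
          have hlen : u.length + v.length = N := by rw [← hw, he]; simp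
          refine le_trans ?_ (Finset.single_le_sum (fun _ _ => zero_le)
            (Finset.mem_range.mpr (by omega : v.length - n0 < N + 1)))
          rw [if_pos ⟨u, v, he, by omega, hp⟩]
        · rw [if_neg hb]; exact zero_le
    _ = ∑ n ∈ Finset.range (N + 1), _ := s.Ex_finset_sum _ _ _ _
    _ ≤ ∑ n ∈ Finset.range (N + 1), a (n + n0) := by
        gcongr with n _; exact step _
    _ ≤ _ := ENNReal.sum_le_tsum _

lemma tail_small (θ A : ℝ) (hθ : 0 < θ) (hA : 0 ≤ A) (δ : ℝ≥0∞) (hδ : 0 < δ) :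
    ∃ n0 : ℕ, ∀ n1 ≥ n0,
      ∑' n : ℕ, ENNReal.ofReal (A * Real.exp (-(θ * ((n + n1 : ℕ) : ℝ)))) ≤ δ := by
  have hs : ∑' n : ℕ, ENNReal.ofReal (A * Real.exp (-(θ * (n : ℝ)))) ≠ ∞ := by
    have h1 : Summable fun n : ℕ => A * Real.exp (-(θ * (n : ℝ))) := by
      refine Summable.mul_left _ ?_
      have : ∀ n : ℕ, Real.exp (-(θ * (n : ℝ))) = (Real.exp (-θ)) ^ n := by
        intro n; rw [← Real.exp_nat_mul]; congr 1; ring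
      simp only [this]
      exact summable_geometric_of_lt_one (by positivity) (Real.exp_lt_one_iff.mpr (by linarith))
    exact h1.tsum_ofReal_ne_top
  have h2 := ENNReal.tendsto_sum_nat_add _ hs
  have h3 := h2.eventually_lt_const hδ
  obtain ⟨n0, hn0⟩ := eventually_atTop.mp h3
  exact ⟨n0, fun n1 hn => (hn0 n1 hn).le⟩

lemma SG_ge (f : EuclideanSpace ℝ (Fin d) → ℝ) (v x) :
    ENNReal.ofReal |s.Sm (fun _ => f) v x| ≤ s.SG (fun x => ENNReal.ofReal |f x|) v x := by
  induction v generalizing x with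
  | nil => simp
  | cons i v ih =>
    rw [Sm_cons]
    simp only [SG]
    refine (ENNReal.ofReal_le_ofReal (abs_add_le _ _)).trans ?_
    rw [ENNReal.ofReal_add (abs_nonneg _) (abs_nonneg _)]
    gcongr
    exact ih _

/-- Observable averaged over one step. -/
def psi (φ : Fin k → EuclideanSpace ℝ (Fin d) → ℝ) (x : EuclideanSpace ℝ (Fin d)) : ℝ :=
  ∑ i, s.p i x * φ i x

/-- Deviation event. -/
def Dev (φ : Fin k → EuclideanSpace ℝ (Fin d) → ℝ) (c ε : ℝ) (v : List (Fin k))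
    (x : EuclideanSpace ℝ (Fin d)) : Prop :=
  3 * ε * v.length < |s.Sm φ v x - v.length * c|

lemma psi_bdd {φ B} (hφ : ∀ i x, |φ i x| ≤ B) (x) : |s.psi φ x| ≤ B := by
  unfold psi
  calc _ ≤ ∑ i, |s.p i x * φ i x| := Finset.abs_sum_le_sum_abs _ _
    _ ≤ ∑ i, s.p i x * B := by
        gcongr with i _
        rw [abs_mul, abs_of_pos (s.ppos i x)]
        exact mul_le_mul_of_nonneg_left (hφ _ _) (s.ppos i x).le
    _ = B := by rw [← Finset.sum_mul, s.psum, one_mul]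

lemma psi_hol {φ B} (hφ : ∀ i x, |φ i x| ≤ B) (hH : ∀ i x y, |φ i x - φ i y| ≤ s.C * dist x y ^ s.β) :
    s.Hol (s.C + k * s.C * B) (s.psi φ) := by
  intro x y
  have hd : 0 ≤ dist x y ^ s.β := by positivity
  have e : s.psi φ x - s.psi φ y = ∑ i, (s.p i x * (φ i x - φ i y) +
      (s.p i x - s.p i y) * φ i y) := by
    unfold psi
    rw [← Finset.sum_sub_distrib]
    exact Finset.sum_congr rfl fun i _ => by ring
  rw [e]
  calc _ ≤ ∑ i, |s.p i x * (φ i x - φ i y) + (s.p i x - s.p i y) * φ i y| :=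
        Finset.abs_sum_le_sum_abs _ _
    _ ≤ ∑ i, (s.p i x * (s.C * dist x y ^ s.β) + s.C * dist x y ^ s.β * B) := by
        gcongr with i _
        refine (abs_add_le _ _).trans (add_le_add ?_ ?_)
        · rw [abs_mul, abs_of_pos (s.ppos i x)]
          exact mul_le_mul_of_nonneg_left (hH _ _ _) (s.ppos i x).le
        · rw [abs_mul]
          exact mul_le_mul (s.pH i x y) (hφ _ _) (abs_nonneg _) (by have := s.hC; positivity)
    _ = _ := by
        rw [Finset.sum_add_distrib, ← Finset.sum_mul, s.psum]; simp; ring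

lemma coboundary (f : EuclideanSpace ℝ (Fin d) → ℝ) (B : ℝ) (hB : 0 ≤ B) (hf : ∀ x, |f x| ≤ B)
    (K : ℕ) (hK : 0 < K) : ∃ (u : EuclideanSpace ℝ (Fin d) → ℝ) (U : ℝ), 0 ≤ U ∧
      (∀ x, |u x| ≤ U) ∧ ∀ x, f x = s.Av K f x + u x - s.Pr u x := by
  have hK' : (0:ℝ) < K := by exact_mod_cast hK
  refine ⟨fun x => (∑ m ∈ Finset.range K, ∑ l ∈ Finset.range m, (s.Pr^[l] f) x) / K, K * B,
    by positivity, ?_, ?_⟩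
  · intro x
    rw [abs_div, abs_of_pos hK', div_le_iff₀ hK']
    calc _ ≤ ∑ m ∈ Finset.range K, |∑ l ∈ Finset.range m, (s.Pr^[l] f) x| :=
          Finset.abs_sum_le_sum_abs _ _
      _ ≤ ∑ m ∈ Finset.range K, (K * B) := by
          gcongr with m hm
          calc _ ≤ ∑ l ∈ Finset.range m, |(s.Pr^[l] f) x| := Finset.abs_sum_le_sum_abs _ _
            _ ≤ ∑ l ∈ Finset.range m, B := by gcongr with l _; exact s.iter_bdd hf l x
            _ = m * B := by simp
            _ ≤ _ := by gcongr; exact (Finset.mem_range.mp hm).le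
      _ = _ := by simp; ring
  · intro x
    have e : s.Pr (fun x => (∑ m ∈ Finset.range K, ∑ l ∈ Finset.range m, (s.Pr^[l] f) x) / K) x =
        (∑ m ∈ Finset.range K, ∑ l ∈ Finset.range m, (s.Pr^[l+1] f) x) / K := by
      simp only [Function.iterate_succ_apply']
      simp only [Pr]
      have : ∀ m, ∑ l ∈ Finset.range m, ∑ i, s.p i x * (s.Pr^[l] f) (s.h i x) =
          ∑ i, s.p i x * ∑ l ∈ Finset.range m, (s.Pr^[l] f) (s.h i x) := by
        intro m
        rw [Finset.sum_comm]
        exact Finset.sum_congr rfl fun i _ => by rw [Finset.mul_sum]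
      have h2 : ∀ g : ℕ → EuclideanSpace ℝ (Fin d) → ℝ, ∑ m ∈ Finset.range K, ∑ i, s.p i x * g m (s.h i x)
          = ∑ i, s.p i x * ∑ m ∈ Finset.range K, g m (s.h i x) := by
        intro g
        rw [Finset.sum_comm]
        exact Finset.sum_congr rfl fun i _ => by rw [Finset.mul_sum]
      have h3 := h2 (fun m y => ∑ l ∈ Finset.range m, (s.Pr^[l] f) y)
      have h4 : ∑ m ∈ Finset.range K, ∑ l ∈ Finset.range m, ∑ i, s.p i x * (s.Pr^[l] f) (s.h i x) =
        ∑ i, s.p i x * ∑ m ∈ Finset.range K, ∑ l ∈ Finset.range m, (s.Pr^[l] f) (s.h i x) := by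
        rw [← h3]
        exact Finset.sum_congr rfl fun m _ => this m
      rw [h4, Finset.sum_div]
      exact Finset.sum_congr rfl fun i _ => by rw [mul_div_assoc]
    rw [e, Av]
    have h5 : ∀ m : ℕ, ∑ l ∈ Finset.range m, (s.Pr^[l+1] f) x =
        ∑ l ∈ Finset.range m, (s.Pr^[l] f) x + (s.Pr^[m] f) x - f x := by
      intro m
      have h1 := Finset.sum_range_succ (fun j => (s.Pr^[j] f) x) m
      have h2 := Finset.sum_range_succ' (fun j => (s.Pr^[j] f) x) m
      simp only [Function.iterate_zero, id] at h2
      linarith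
    simp only [h5, Finset.sum_add_distrib, Finset.sum_sub_distrib, Finset.sum_const, Finset.card_range,
      nsmul_eq_mul]
    field_simp
    ring

lemma Sm_decomp {φ D : Fin k → EuclideanSpace ℝ (Fin d) → ℝ} {a u : EuclideanSpace ℝ (Fin d) → ℝ}
    {c : ℝ} (hd : ∀ i x, φ i x = D i x + (a x - c) + u x - u (s.h i x) + c) (v x) :
    s.Sm φ v x = s.Sm D v x + s.Sm (fun _ x => a x - c) v x + u x - u (s.hw v x) + v.length * c := by
  induction v generalizing x with
  | nil => simp
  | cons i v ih =>
    simp only [Sm_cons, hw_cons, List.length_cons, ih, hd i x]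
    push_cast; ring

lemma Sm_neg (φ : Fin k → EuclideanSpace ℝ (Fin d) → ℝ) (v x) :
    s.Sm (fun i x => - φ i x) v x = - s.Sm φ v x := by
  induction v generalizing x with
  | nil => simp
  | cons i v ih => simp only [Sm_cons, ih]; ring

open Classical in
/-- Uniform law of large numbers for all long suffixes. -/
lemma lln (φ : Fin k → EuclideanSpace ℝ (Fin d) → ℝ) (B : ℝ) (hB : 0 < B)
    (hφ : ∀ i x, |φ i x| ≤ B) (hH : ∀ i x y, |φ i x - φ i y| ≤ s.C * dist x y ^ s.β)
    (ε δ : ℝ) (hε : 0 < ε) (hδ : 0 < δ) :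
    ∃ n0, ∀ n1 ≥ n0, ∀ N, ∫⁻ x, s.Ex N (fun w =>
      if s.Bev (s.Dev φ (∫ y, s.psi φ y ∂s.ν) ε) n1 w x then 1 else 0) x ∂s.ν ≤ ENNReal.ofReal δ := by
  have := s.prob
  have hC := s.hC
  set c := ∫ y, s.psi φ y ∂s.ν with hc
  obtain ⟨K, hK, hAc, hKint⟩ := s.mean_erg (by positivity) hB.le (s.psi_bdd hφ) (s.psi_hol hφ hH)
    (ε * (δ / 3)) (by positivity)
  obtain ⟨u, U, hU0, hU, hu⟩ := s.coboundary (s.psi φ) B hB.le (s.psi_bdd hφ) K hK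
  set a := s.Av K (s.psi φ) with ha
  let D : Fin k → EuclideanSpace ℝ (Fin d) → ℝ :=
    fun i x => φ i x - s.psi φ x + u (s.h i x) - s.Pr u x
  have hD : ∀ i x, φ i x = D i x + (a x - c) + u x - u (s.h i x) + c := by
    intro i x; simp only [D]; linarith [hu x]
  have hDB : ∀ i x, |D i x| ≤ 2 * B + 2 * U := by
    intro i x
    have h1 := abs_le.mp (hφ i x)
    have h2 := abs_le.mp (s.psi_bdd hφ x)
    have h3 := abs_le.mp (hU (s.h i x))
    have h4 := abs_le.mp (s.Pr_bdd hU x)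
    simp only [D]
    rw [abs_le]; constructor <;> linarith
  have hD0 : ∀ x, ∑ i, s.p i x * D i x = 0 := by
    intro x
    simp only [D, mul_sub, mul_add, Finset.sum_sub_distrib, Finset.sum_add_distrib, ← Finset.sum_mul,
      s.psum]
    simp [psi, Pr]
  obtain ⟨θ1, hθ1, hch1⟩ := s.chernoff D (2 * B + 2 * U) (by positivity) hDB (fun x => (hD0 x).le) ε hε
  obtain ⟨θ2, hθ2, hch2⟩ := s.chernoff (fun i x => - D i x) (2 * B + 2 * U) (by positivity)
    (fun i x => by rw [abs_neg]; exact hDB i x)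
    (fun x => by simp [hD0 x]) ε hε
  obtain ⟨n1, hn1⟩ := tail_small θ1 1 hθ1 zero_le_one (ENNReal.ofReal (δ / 3)) (by simp; positivity)
  obtain ⟨n2, hn2⟩ := tail_small θ2 1 hθ2 zero_le_one (ENNReal.ofReal (δ / 3)) (by simp; positivity)
  obtain ⟨n3, hn3⟩ := exists_nat_ge (2 * U / ε)
  refine ⟨max n1 (max n2 n3), fun n hn N => ?_⟩
  have hnn1 : n1 ≤ n := (le_max_left _ _).trans hn
  have hnn2 : n2 ≤ n := ((le_max_left _ _).trans (le_max_right _ _)).trans hn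
  have hnn3 : n3 ≤ n := ((le_max_right _ _).trans (le_max_right _ _)).trans hn
  let P1 : List (Fin k) → EuclideanSpace ℝ (Fin d) → Prop := fun v x => v.length * ε ≤ s.Sm D v x
  let P2 : List (Fin k) → EuclideanSpace ℝ (Fin d) → Prop :=
    fun v x => v.length * ε ≤ s.Sm (fun i x => - D i x) v x
  let G : EuclideanSpace ℝ (Fin d) → ℝ≥0∞ := fun x => ENNReal.ofReal |a x - c|
  have hG : Measurable G :=
    (by fun_prop : Continuous fun x => |a x - c|).measurable.ennreal_ofReal
  have b1 : ∀ x, s.Ex N (fun w => if s.Bev P1 n w x then 1 else 0) x ≤ ENNReal.ofReal (δ / 3) := by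
    intro x
    refine (s.tail_bound P1 (fun m => ENNReal.ofReal (1 * Real.exp (-(θ1 * m)))) n ?_ N x).trans
      (hn1 n hnn1)
    intro m y
    rw [one_mul]
    refine le_trans (s.Ex_mono y fun w hw => ?_) (hch1 m y)
    simp only [P1, hw]; rfl
  have b2 : ∀ x, s.Ex N (fun w => if s.Bev P2 n w x then 1 else 0) x ≤ ENNReal.ofReal (δ / 3) := by
    intro x
    refine (s.tail_bound P2 (fun m => ENNReal.ofReal (1 * Real.exp (-(θ2 * m)))) n ?_ N x).trans
      (hn2 n hnn2)
    intro m y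
    rw [one_mul]
    refine le_trans (s.Ex_mono y fun w hw => ?_) (hch2 m y)
    simp only [P2, hw]; rfl
  have b3 : ∫⁻ x, s.Ex N (fun w => if ∃ u v, w = u ++ v ∧
      v.length * ENNReal.ofReal ε < s.SG G v (s.hw u x) then 1 else 0) x ∂s.ν ≤ ENNReal.ofReal (δ/3) := by
    have h1 := (s.maximal G (ENNReal.ofReal ε) N hG).trans hKint
    rw [ENNReal.ofReal_mul hε.le] at h1
    exact (ENNReal.mul_le_mul_iff_right (by simpa using hε) ENNReal.ofReal_ne_top).mp h1
  calc _ ≤ ∫⁻ x, (ENNReal.ofReal (δ / 3) + ENNReal.ofReal (δ / 3)) + s.Ex N (fun w => if ∃ u v, w = u ++ v ∧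
      v.length * ENNReal.ofReal ε < s.SG G v (s.hw u x) then 1 else 0) x ∂s.ν := by
        refine lintegral_mono fun x => ?_
        refine le_trans ?_ (add_le_add (add_le_add (b1 x) (b2 x)) le_rfl)
        rw [← Ex_add, ← Ex_add]
        refine s.Ex_mono x fun w hw => ?_
        by_cases hb : s.Bev (s.Dev φ c ε) n w x
        swap
        · rw [if_neg hb]; exact zero_le
        rw [if_pos hb]
        obtain ⟨u', v, he, hl, hp⟩ := hb
        set y := s.hw u' x with hy
        by_cases h1 : P1 v y
        · have : s.Bev P1 n w x := ⟨u', v, he, hl, h1⟩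
          rw [if_pos this, add_assoc]; exact le_self_add
        by_cases h2 : P2 v y
        · have : s.Bev P2 n w x := ⟨u', v, he, hl, h2⟩
          rw [if_pos this, add_comm (ite _ _ _), add_assoc]; exact le_self_add
        rw [if_pos (c := ∃ u v, w = u ++ v ∧ v.length * ENNReal.ofReal ε < s.SG G v (s.hw u x))]
        · exact le_add_self
        refine ⟨u', v, he, ?_⟩
        rw [← hy]
        refine lt_of_lt_of_le ?_ (s.SG_ge (fun x => a x - c) v y)
        rw [← ENNReal.ofReal_natCast, ← ENNReal.ofReal_mul (by positivity)]
        refine (ENNReal.ofReal_lt_ofReal_iff_of_nonneg (by positivity)).mpr ?_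
        simp only [P1, P2, Sm_neg, not_le] at h1 h2
        unfold Dev at hp
        rw [s.Sm_decomp hD v y] at hp
        have h3 : 2 * U ≤ v.length * ε := by
          have : (n3 : ℝ) ≤ v.length := by exact_mod_cast hnn3.trans hl
          have := hn3.trans this
          rwa [div_le_iff₀ hε] at this
        by_contra! h4
        have h5 := abs_le.mp h4
        have h6 := abs_le.mp (hU y)
        have h7 := abs_le.mp (hU (s.hw v y))
        have h8 : |s.Sm D v y + s.Sm (fun _ x => a x - c) v y + u y - u (s.hw v y) + v.length * c -
          v.length * c| ≤ 3 * ε * v.length := by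
          rw [abs_le]; constructor <;> nlinarith
        linarith
    _ ≤ ENNReal.ofReal (δ / 3) + ENNReal.ofReal (δ / 3) + ENNReal.ofReal (δ / 3) := by
        rw [lintegral_add_left measurable_const]
        refine add_le_add ?_ b3
        simp
    _ = ENNReal.ofReal δ := by
        rw [← ENNReal.ofReal_add (by positivity) (by positivity),
          ← ENNReal.ofReal_add (by positivity) (by positivity)]
        congr 1; ring

end Sys
end

noncomputable section
namespace Sys
variable {d k : ℕ} (s : Sys d k)

/-- Lyapunov exponent (positive). -/
def chi : ℝ := - ∫ y, s.psi s.g y ∂s.ν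
/-- Entropy. -/
def ent : ℝ := - ∫ y, s.psi s.lp y ∂s.ν

lemma psi_cont {φ : Fin k → EuclideanSpace ℝ (Fin d) → ℝ} (hφ : ∀ i, Continuous (φ i)) :
    Continuous (s.psi φ) := continuous_finsetSum _ fun i _ => (s.pcont i).mul (hφ i)

lemma chi_pos : 0 < s.chi := by
  have := s.prob
  have hβ := s.hβ0
  have hq1 := s.hq1
  have h1 : ∀ x, s.psi s.g x ≤ (s.q - 1) / s.β := by
    intro x
    rw [le_div_iff₀ hβ]
    have h2 : ∑ i, s.p i x * (s.β * s.g i x + 1) ≤ s.q := by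
      refine le_trans ?_ (s.dq x)
      gcongr with i _
      · exact (s.ppos i x).le
      · exact Real.add_one_le_exp _
    have h3 : ∑ i, s.p i x * (s.β * s.g i x + 1) = s.psi s.g x * s.β + 1 := by
      rw [psi, Finset.sum_mul]
      nth_rw 2 [← s.psum x]
      rw [← Finset.sum_add_distrib]
      exact Finset.sum_congr rfl fun i _ => by ring
    linarith
  have h4 : ∫ y, s.psi s.g y ∂s.ν ≤ ∫ y, (s.q - 1) / s.β ∂s.ν :=
    integral_mono (s.integ (s.psi_cont s.gcont) (s.psi_bdd s.gB)) (integrable_const _) h1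
  have h5 : (s.q - 1) / s.β < 0 := div_neg_of_neg_of_pos (by linarith) hβ
  simp at h4
  unfold chi
  linarith

lemma p_le_one (i x) : s.p i x ≤ 1 := by
  rw [← s.psum x]
  exact Finset.single_le_sum (f := fun i => s.p i x) (fun j _ => (s.ppos j x).le) (Finset.mem_univ i)

lemma ent_nonneg : 0 ≤ s.ent := by
  unfold ent
  rw [neg_nonneg]
  refine integral_nonpos fun x => ?_
  refine Finset.sum_nonpos fun i _ => mul_nonpos_of_nonneg_of_nonpos (s.ppos i x).le ?_
  exact Real.log_nonpos (s.ppos i x).le (s.p_le_one i x)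

/-- The bad event. -/
def Bad (ε : ℝ) (n : ℕ) (w : List (Fin k)) (x : EuclideanSpace ℝ (Fin d)) : Prop :=
  s.Bev (s.Dev s.g (-s.chi) ε) n w x ∨ s.Bev (s.Dev s.lp (-s.ent) ε) n w x

lemma Dev_meas {φ : Fin k → EuclideanSpace ℝ (Fin d) → ℝ} (hφ : ∀ i, Continuous (φ i)) (c ε v) :
    MeasurableSet {x | s.Dev φ c ε v x} := by
  unfold Dev
  have := s.Sm_cont hφ v
  exact (isOpen_lt continuous_const (by fun_prop)).measurableSet

lemma Bad_meas (ε n w) : MeasurableSet {x | s.Bad ε n w x} :=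
  (s.Bev_meas _ n w (s.Dev_meas s.gcont _ ε)).union (s.Bev_meas _ n w (s.Dev_meas s.lpcont _ ε))

open Classical in
lemma lln2 (ε δ : ℝ) (hε : 0 < ε) (hδ : 0 < δ) :
    ∃ n0, ∀ n1 ≥ n0, ∀ N, ∫⁻ x, s.Ex N (fun w => if s.Bad ε n1 w x then 1 else 0) x ∂s.ν ≤
      ENNReal.ofReal δ := by
  obtain ⟨n1, h1⟩ := s.lln s.g s.B s.hB s.gB s.gH ε (δ / 2) hε (by positivity)
  obtain ⟨n2, h2⟩ := s.lln s.lp s.B s.hB s.lpB s.lpH ε (δ / 2) hε (by positivity)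
  refine ⟨max n1 n2, fun n hn N => ?_⟩
  have h1 := h1 n ((le_max_left _ _).trans hn) N
  have h2 := h2 n ((le_max_right _ _).trans hn) N
  rw [← neg_neg (∫ y, s.psi s.g y ∂s.ν), ← chi] at h1
  rw [← neg_neg (∫ y, s.psi s.lp y ∂s.ν), ← ent] at h2
  have e : ENNReal.ofReal δ = ENNReal.ofReal (δ / 2) + ENNReal.ofReal (δ / 2) := by
    rw [← ENNReal.ofReal_add (by positivity) (by positivity)]; congr 1; ring
  rw [e]
  refine le_trans ?_ (add_le_add h1 h2)
  rw [← lintegral_add_left]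
  · refine lintegral_mono fun x => ?_
    rw [← Ex_add]
    refine s.Ex_mono x fun w _ => ?_
    by_cases hb : s.Bad ε n w x
    · rw [if_pos hb]
      rcases hb with hb | hb
      · rw [if_pos hb]; exact le_self_add
      · rw [if_pos hb]; exact le_add_self
    · rw [if_neg hb]; exact zero_le
  · refine s.Ex_meas N _ fun w => ?_
    exact Measurable.ite (s.Bev_meas _ n w (s.Dev_meas s.gcont _ ε)) measurable_const measurable_const

open Classical in
lemma Gw_markov (n x) (L : ℝ) (hL : 0 < L) :
    s.Ex n (fun w => if L < s.Gw w x then 1 else 0) x ≤ ENNReal.ofReal (L⁻¹ * (1 / (1 - s.q))) := by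
  rw [ENNReal.ofReal_mul (by positivity)]
  refine (s.Ex_markov n (fun w => s.Gw w x) L hL x _ fun w _ h => h.le).trans ?_
  gcongr
  exact s.Ex_Gw n x

open Classical in
lemma cover (t : ℝ) (ht0 : 0 < t) (ht : s.ent < t * s.chi) (δ : ℝ) (hδ : 0 < δ) :
    ∃ (S : Finset (EuclideanSpace ℝ (Fin d))) (r : ℝ), 0 < r ∧ r ≤ δ ∧
      s.ν (⋃ z ∈ S, ball z r)ᶜ ≤ ENNReal.ofReal δ ∧ S.card * (2 * r) ^ t ≤ 1 := by
  have := s.prob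
  have hC := s.hC
  have hβ := s.hβ0
  have hq1 := s.hq1
  have hq : 0 < 1 - s.q := by linarith
  set ε := (t * s.chi - s.ent) / (6 * (t + 1)) with hε
  have hε0 : 0 < ε := by apply div_pos <;> linarith
  set a := s.chi - 3 * ε with ha
  set b := s.ent + 3 * ε with hb
  have hab : b < t * a := by
    have : 6 * (t + 1) * ε = t * s.chi - s.ent := by rw [hε]; field_simp
    rw [ha, hb]; nlinarith
  have hb0 : 0 < b := by have := s.ent_nonneg; positivity
  have ha0 : 0 < a := by
    by_contra! h
    nlinarith
  -- compact set
  obtain ⟨K0, -, hK0c, hK0⟩ := MeasurableSet.univ.exists_isCompact_sdiff_lt (μ := s.ν)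
    (measure_ne_top _ _) (ε := ENNReal.ofReal (δ / 3)) (by simp; positivity)
  set L := 3 / (δ * (1 - s.q)) with hL
  have hL0 : 0 < L := by positivity
  set ρ := (1 / (s.C * Real.exp s.β * L)) ^ (1 / s.β) with hρ
  have hρ0 : 0 < ρ := by positivity
  have hρβ : s.C * Real.exp s.β * ρ ^ s.β * L = 1 := by
    rw [hρ, ← Real.rpow_mul (by positivity), one_div_mul_cancel hβ.ne', Real.rpow_one]
    field_simp
  have hbud : ∀ w x, s.Gw w x ≤ L → s.C * Real.exp s.β * ρ ^ s.β * s.Gw w x + 0 ≤ 1 := by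
    intro w x h
    rw [add_zero, ← hρβ]; gcongr
  obtain ⟨T', hT's, hT'f, hT'⟩ := hK0c.finite_cover_balls (half_pos hρ0)
  set T := hT'f.toFinset with hT
  obtain ⟨n0, hn0⟩ := s.lln2 ε (δ / 3) hε0 (by positivity)
  -- choice of n
  have ev1 : ∀ᶠ n : ℕ in atTop, Real.exp 1 * (Real.exp (n * (-a)) * ρ) ≤ δ := by
    have h1 : Tendsto (fun n : ℕ => Real.exp 1 * (Real.exp (n * (-a)) * ρ)) atTop
        (nhds (Real.exp 1 * (0 * ρ))) := by
      refine Tendsto.const_mul _ (Tendsto.mul_const _ ?_)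
      exact Real.tendsto_exp_atBot.comp
        (tendsto_natCast_atTop_atTop.atTop_mul_const_of_neg (by linarith))
    rw [zero_mul, mul_zero] at h1
    filter_upwards [h1.eventually_lt_const hδ] with n hn using hn.le
  have ev2 : ∀ᶠ n : ℕ in atTop, T.card * (Real.exp 1 * (2 * (Real.exp 1 * ρ)) ^ t) *
      Real.exp (n * (b - t * a)) ≤ 1 := by
    have h1 : Tendsto (fun n : ℕ => T.card * (Real.exp 1 * (2 * (Real.exp 1 * ρ)) ^ t) *
      Real.exp (n * (b - t * a))) atTop
        (nhds (T.card * (Real.exp 1 * (2 * (Real.exp 1 * ρ)) ^ t) * 0)) := by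
      refine Tendsto.const_mul _ ?_
      exact Real.tendsto_exp_atBot.comp
        (tendsto_natCast_atTop_atTop.atTop_mul_const_of_neg (by linarith))
    rw [mul_zero] at h1
    filter_upwards [h1.eventually_lt_const zero_lt_one] with n hn using hn.le
  obtain ⟨n, hn1, hn2, hn3⟩ := (ev1.and (ev2.and (eventually_ge_atTop n0))).exists
  set r := Real.exp 1 * (Real.exp (n * (-a)) * ρ) with hr
  have hr0 : 0 < r := by positivity
  -- good pairs
  let Good : List (Fin k) → EuclideanSpace ℝ (Fin d) → Prop := fun w x =>
    s.Gw w x ≤ L ∧ s.Sm s.g w x ≤ n * (-a) ∧ n * (-b) ≤ s.Sm s.lp w x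
  let W : EuclideanSpace ℝ (Fin d) → Finset (List (Fin k)) := fun l =>
    (words k n).filter fun w => ∃ x, dist x l < ρ / 2 ∧ Good w x
  have hpick : ∀ l w, ∃ x, w ∈ W l → dist x l < ρ / 2 ∧ Good w x := by
    intro l w
    by_cases h : w ∈ W l
    · obtain ⟨x, hx⟩ := (Finset.mem_filter.mp h).2
      exact ⟨x, fun _ => hx⟩
    · exact ⟨l, fun h' => absurd h' h⟩
  choose X hX using hpick
  have hWcard : ∀ l, ((W l).card : ℝ) ≤ Real.exp 1 * Real.exp (n * b) := by
    intro l
    have h1 := s.Ex_indicator_le n (W l) (fun w hw => mem_words.mp (Finset.mem_filter.mp hw).1) l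
    have h2 := s.Ex_indicator_le_one n (fun w => if w ∈ W l then 1 else 0)
      (fun w => by split_ifs <;> simp) l
    rw [h1] at h2
    have h3 : ∑ v ∈ W l, ENNReal.ofReal (Real.exp (n * (-b) - 1)) ≤ 1 := by
      refine le_trans (Finset.sum_le_sum fun w hw => ?_) h2
      refine ENNReal.ofReal_le_ofReal (Real.exp_le_exp.mpr ?_)
      obtain ⟨h4, h5, h6, h7⟩ := hX l w hw
      have h8 := s.distort_lp w _ ρ 0 hρ0 le_rfl (hbud w _ h5) l
        (by rw [dist_comm, Real.exp_zero]; linarith)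
      have := abs_le.mp h8
      linarith
    rw [Finset.sum_const, nsmul_eq_mul, ← ENNReal.ofReal_natCast, ← ENNReal.ofReal_mul (by positivity),
      ENNReal.ofReal_le_one] at h3
    have e1 : Real.exp (n * (-b) - 1) = (Real.exp 1 * Real.exp (n * b))⁻¹ := by
      rw [← Real.exp_add, ← Real.exp_neg]; congr 1; ring
    rw [e1, ← div_eq_mul_inv, div_le_one (by positivity)] at h3
    exact h3
  refine ⟨T.biUnion fun l => (W l).image fun w => s.hw w (X l w), r, hr0, hn1, ?_, ?_⟩
  · set V := ⋃ z ∈ T.biUnion fun l => (W l).image fun w => s.hw w (X l w), ball z r with hV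
    have hVm : MeasurableSet Vᶜ := by
      refine (MeasurableSet.compl ?_)
      exact Finset.measurableSet_biUnion _ fun z _ => measurableSet_ball
    have h1 := s.stat_n n (Vᶜ.indicator 1) (measurable_one.indicator hVm)
    rw [lintegral_indicator_one hVm] at h1
    rw [← h1]
    calc _ ≤ ∫⁻ x, (ENNReal.ofReal (δ / 3) + (K0ᶜ).indicator 1 x) +
          s.Ex n (fun w => if s.Bad ε n0 w x then 1 else 0) x ∂s.ν := by
          refine lintegral_mono fun x => ?_
          have hLm : ENNReal.ofReal (L⁻¹ * (1 / (1 - s.q))) = ENNReal.ofReal (δ / 3) := by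
            congr 1; rw [hL]; field_simp
          refine le_trans ?_ (add_le_add (add_le_add ((s.Gw_markov n x L hL0).trans_eq hLm)
            (s.Ex_const n ((K0ᶜ).indicator 1 x) x).le) le_rfl)
          rw [← Ex_add, ← Ex_add]
          refine s.Ex_mono x fun w hw => ?_
          by_cases c1 : L < s.Gw w x
          · rw [if_pos c1, add_assoc]
            exact le_trans (Set.indicator_le_self _ _ _) le_self_add
          by_cases c2 : x ∈ K0
          swap
          · rw [Set.indicator_of_mem (show x ∈ K0ᶜ from c2), add_comm (ite _ _ _), add_assoc]
            exact le_trans (Set.indicator_le_self _ _ _) le_self_add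
          by_cases c3 : s.Bad ε n0 w x
          · rw [if_pos c3]
            exact le_trans (Set.indicator_le_self _ _ _) le_add_self
          rw [Set.indicator_of_notMem]
          · exact zero_le
          rw [Set.notMem_compl_iff]
          simp only [Bad, Bev, Dev, not_or, not_exists, not_and, not_lt] at c3
          have d1 := abs_le.mp (c3.1 [] w rfl (hw ▸ hn3))
          have d2 := abs_le.mp (c3.2 [] w rfl (hw ▸ hn3))
          rw [hw, hw_nil] at d1 d2
          have hg : Good w x := ⟨not_lt.mp c1, by rw [ha]; linarith, by rw [hb]; linarith⟩
          obtain ⟨l, hl, hxl⟩ := Set.mem_iUnion₂.mp (hT' c2)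
          have hwW : w ∈ W l := Finset.mem_filter.mpr ⟨mem_words.mpr hw, x, hxl, hg⟩
          obtain ⟨h4, h5, h6, h7⟩ := hX l w hwW
          refine Set.mem_iUnion₂.mpr ⟨s.hw w (X l w), ?_, ?_⟩
          · rw [Finset.mem_biUnion]
            exact ⟨l, hT'f.mem_toFinset.mpr hl, Finset.mem_image_of_mem _ hwW⟩
          · rw [mem_ball]
            refine (s.distort_dist w _ ρ 0 hρ0 le_rfl (hbud w _ h5) x ?_).trans_le ?_
            · rw [Real.exp_zero, one_mul]
              have := dist_triangle_right x (X l w) l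
              have : dist x l < ρ / 2 := hxl
              linarith
            · rw [hr]; gcongr
      _ ≤ ENNReal.ofReal (δ / 3) + ENNReal.ofReal (δ / 3) + ENNReal.ofReal (δ / 3) := by
          have hm : Measurable fun x => (K0ᶜ).indicator (1 : EuclideanSpace ℝ (Fin d) → ℝ≥0∞) x :=
            measurable_one.indicator hK0c.measurableSet.compl
          have hm2 : Measurable fun x => ENNReal.ofReal (δ / 3) +
            (K0ᶜ).indicator (1 : EuclideanSpace ℝ (Fin d) → ℝ≥0∞) x := measurable_const.add hm
          rw [lintegral_add_left hm2, lintegral_add_left measurable_const,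
            lintegral_indicator_one hK0c.measurableSet.compl]
          refine add_le_add (add_le_add ?_ ?_) (hn0 n0 le_rfl n)
          · simp
          · rw [Set.compl_eq_univ_sdiff]; exact hK0.le
      _ = _ := by
          rw [← ENNReal.ofReal_add (by positivity) (by positivity),
            ← ENNReal.ofReal_add (by positivity) (by positivity)]
          congr 1; ring
  · have hcard : ((T.biUnion fun l => (W l).image fun w => s.hw w (X l w)).card : ℝ) ≤
        T.card * (Real.exp 1 * Real.exp (n * b)) := by
      calc _ ≤ ((∑ l ∈ T, (W l).card : ℕ) : ℝ) := by
            exact_mod_cast Finset.card_biUnion_le.trans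
              (Finset.sum_le_sum fun l _ => Finset.card_image_le)
        _ = ∑ l ∈ T, ((W l).card : ℝ) := by push_cast; rfl
        _ ≤ ∑ l ∈ T, Real.exp 1 * Real.exp (n * b) := Finset.sum_le_sum fun l _ => hWcard l
        _ = _ := by simp
    refine le_trans (mul_le_mul_of_nonneg_right hcard (by positivity)) (le_trans (le_of_eq ?_) hn2)
    have e1 : (2 * r) ^ t = (2 * (Real.exp 1 * ρ)) ^ t * Real.exp (n * (-(t * a))) := by
      rw [hr, show 2 * (Real.exp 1 * (Real.exp (n * (-a)) * ρ)) =
        (2 * (Real.exp 1 * ρ)) * Real.exp (n * (-a)) by ring,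
        Real.mul_rpow (by positivity) (by positivity), ← Real.exp_mul]
      congr 2; ring
    rw [e1, show (n : ℝ) * (b - t * a) = n * b + n * (-(t * a)) by ring, Real.exp_add]
    ring

end Sys
end

noncomputable section
open scoped MeasureTheory
namespace Sys
variable {d k : ℕ} (s : Sys d k)

lemma upper (t : ℝ) (ht0 : 0 < t) (ht : s.ent < t * s.chi) :
    ∃ F : Set (EuclideanSpace ℝ (Fin d)), s.ν Fᶜ = 0 ∧ dimH F ≤ ENNReal.ofReal t := by
  choose S r hr0 hr hν hcard using fun m : ℕ => s.cover t ht0 ht ((1 / 2 : ℝ) ^ m) (by positivity)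
  set V : ℕ → Set (EuclideanSpace ℝ (Fin d)) := fun m => ⋃ z ∈ S m, ball z (r m) with hV
  have hsum : ∑' m, s.ν (V m)ᶜ ≠ ∞ := by
    refine ne_top_of_le_ne_top ?_ (ENNReal.tsum_le_tsum hν)
    exact summable_geometric_two.tsum_ofReal_ne_top
  have hae := ae_eventually_notMem hsum
  refine ⟨{x | ∀ᶠ n in atTop, x ∉ (V n)ᶜ}, hae, ?_⟩
  have hF : {x | ∀ᶠ n in atTop, x ∉ (V n)ᶜ} = ⋃ j : ℕ, ⋂ n ≥ j, V n := by
    ext x; simp [eventually_atTop]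
  rw [hF, dimH_iUnion]
  refine iSup_le fun j => ?_
  have hr2 : Tendsto (fun m => ENNReal.ofReal (2 * r m)) atTop (nhds 0) := by
    rw [← ENNReal.ofReal_zero]
    refine ENNReal.tendsto_ofReal ?_
    have h1 : Tendsto r atTop (nhds 0) := squeeze_zero (fun m => (hr0 m).le) hr
      (tendsto_pow_atTop_nhds_zero_of_lt_one (by norm_num) (by norm_num))
    simpa using h1.const_mul 2
  have hdiam : ∀ (m : ℕ) (z : EuclideanSpace ℝ (Fin d)),
      ediam (ball z (r m)) ≤ ENNReal.ofReal (2 * r m) := by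
    intro m z
    rw [← Metric.eball_ofReal]
    refine Metric.ediam_eball_le.trans ?_
    rw [ENNReal.ofReal_mul (by norm_num)]; simp
  have key := Measure.hausdorffMeasure_le_liminf_sum (ι := fun m => S m) t (⋂ n ≥ j, V n) (l := atTop)
    (fun m => ENNReal.ofReal (2 * r m)) hr2 (fun m z => ball (z : EuclideanSpace ℝ (Fin d)) (r m))
    (Eventually.of_forall fun m z => hdiam m z)
    (by
      filter_upwards [eventually_ge_atTop j] with m hm x hx
      have := Set.mem_iInter₂.mp hx m hm
      simp only [hV, Set.mem_iUnion] at this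
      obtain ⟨z, hz, hxz⟩ := this
      exact Set.mem_iUnion.mpr ⟨⟨z, hz⟩, hxz⟩)
  have hle : μH[t] (⋂ n ≥ j, V n) ≤ 1 := by
    refine key.trans ?_
    refine liminf_le_of_frequently_le' (Frequently.of_forall fun m => ?_)
    calc _ ≤ ∑ z : S m, ENNReal.ofReal ((2 * r m) ^ t) := by
          refine Finset.sum_le_sum fun z _ => ?_
          rw [← ENNReal.ofReal_rpow_of_nonneg (by have := hr0 m; positivity) ht0.le]
          exact ENNReal.rpow_le_rpow (hdiam m z) ht0.le
      _ = ENNReal.ofReal ((S m).card * (2 * r m) ^ t) := by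
          rw [ENNReal.ofReal_mul (by positivity)]; simp
      _ ≤ 1 := by rw [ENNReal.ofReal_le_one]; exact hcard m
  have := dimH_le_of_hausdorffMeasure_ne_top (d := t.toNNReal) (s := ⋂ n ≥ j, V n) (by
    rw [Real.coe_toNNReal _ ht0.le]
    exact ne_top_of_le_ne_top one_ne_top hle)
  exact this

end Sys
end

noncomputable section
namespace Sys
variable {d k : ℕ} (s : Sys d k)

/-- The regular open set condition. -/
structure Rosc (U : Set (EuclideanSpace ℝ (Fin d))) (R₂ R₃ : ℝ) : Prop where
  ne : U.Nonempty
  op : IsOpen U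
  fwd : ∀ i, s.h i '' U ⊆ U
  disj : ∀ i j, i ≠ j → s.h i '' U ∩ s.h j '' U = ∅
  r2 : 0 < R₂
  r3 : 0 < R₃
  vol : ∀ x ∈ U, ∀ r : ℝ, 0 < r → r < R₂ → ENNReal.ofReal (R₃ * r ^ d) ≤ volume (ball x r ∩ U)

variable {s} {U : Set (EuclideanSpace ℝ (Fin d))} {R₂ R₃ : ℝ}

lemma Rosc.fwd_w (hU : s.Rosc U R₂ R₃) (w) : s.hw w '' U ⊆ U := by
  induction w with
  | nil => simp [hw]
  | cons i w ih =>
    rintro _ ⟨x, hx, rfl⟩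
    exact ih ⟨s.h i x, hU.fwd i ⟨x, hx, rfl⟩, rfl⟩

lemma Rosc.clos_w (hU : s.Rosc U R₂ R₃) (w) {x} (hx : x ∈ closure U) : s.hw w x ∈ closure U := by
  have h1 := image_closure_subset_closure_image (s.hw_cont w) (s := U) ⟨x, hx, rfl⟩
  exact closure_mono (hU.fwd_w w) h1

variable (s) in
lemma inj_w (w) : Function.Injective (s.hw w) := by
  induction w with
  | nil => exact fun _ _ h => h
  | cons i w ih => exact fun x y h => s.inj i (ih h)

lemma Rosc.disj_w (hU : s.Rosc U R₂ R₃) (n : ℕ) : ∀ u v : List (Fin k), u.length = n → v.length = n →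
    u ≠ v → Disjoint (s.hw u '' U) (s.hw v '' U) := by
  induction n with
  | zero =>
    intro u v hu hv h
    rw [List.length_eq_zero_iff] at hu hv
    exact absurd (hu.trans hv.symm) h
  | succ n ih =>
    intro u v hu hv h
    obtain ⟨i, u, rfl⟩ := List.exists_cons_of_length_eq_add_one hu
    obtain ⟨j, v, rfl⟩ := List.exists_cons_of_length_eq_add_one hv
    have e : ∀ (i) (w), s.hw (i :: w) '' U = s.hw w '' (s.h i '' U) := by
      intro i w; rw [Set.image_image]; rfl
    rw [e, e]
    by_cases huv : u = v
    · subst huv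
      have hij : i ≠ j := by rintro rfl; exact h rfl
      rw [Set.disjoint_image_iff (s.inj_w u)]
      exact Set.disjoint_iff_inter_eq_empty.mpr (hU.disj i j hij)
    · exact (ih u v (by simpa using hu) (by simpa using hv) huv).mono
        (Set.image_mono (hU.fwd i)) (Set.image_mono (hU.fwd j))

variable (s) in
lemma Ex_coa (n x y) : s.Ex n (fun w => ENNReal.ofReal (dist (s.hw w x) (s.hw w y) ^ s.β)) x ≤
    ENNReal.ofReal (s.q ^ n * dist x y ^ s.β) := by
  have hq := s.hq0
  induction n generalizing x y with
  | zero => simp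
  | succ n ih =>
    rw [Ex_succ]
    calc _ ≤ ∑ i, ENNReal.ofReal (s.p i x) *
          ENNReal.ofReal (s.q ^ n * dist (s.h i x) (s.h i y) ^ s.β) := by
          gcongr with i _; exact ih _ _
      _ = ENNReal.ofReal (∑ i, s.p i x * (s.q ^ n * dist (s.h i x) (s.h i y) ^ s.β)) := by
          rw [ENNReal.ofReal_sum_of_nonneg fun i _ => mul_nonneg (s.ppos i x).le (by positivity)]
          exact Finset.sum_congr rfl fun i _ => (ENNReal.ofReal_mul (s.ppos i x).le).symm
      _ ≤ _ := by
          apply ENNReal.ofReal_le_ofReal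
          have := mul_le_mul_of_nonneg_left (s.coa x y) (pow_nonneg hq.le n)
          rw [Finset.mul_sum] at this
          calc _ = ∑ i, s.q ^ n * (s.p i x * dist (s.h i x) (s.h i y) ^ s.β) :=
                Finset.sum_congr rfl fun i _ => by ring
            _ ≤ _ := this
            _ = _ := by ring

lemma Rosc.ae_clos (hU : s.Rosc U R₂ R₃) : ∀ᵐ x ∂s.ν, x ∈ closure U := by
  have := s.prob
  obtain ⟨u, hu⟩ := hU.ne
  set f : EuclideanSpace ℝ (Fin d) → ℝ≥0∞ := fun x => min 1 (ENNReal.ofReal (infDist x U ^ s.β)) with hf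
  have hfm : Measurable f := by
    refine measurable_const.min (Measurable.ennreal_ofReal ?_)
    exact ((continuous_infDist_pt U).rpow_const fun _ => Or.inr s.hβ0.le).measurable
  have hle : ∀ n : ℕ, ∫⁻ x, f x ∂s.ν ≤ ∫⁻ x, min 1 (ENNReal.ofReal (s.q ^ n * dist x u ^ s.β)) ∂s.ν := by
    intro n
    rw [← s.stat_n n f hfm]
    refine lintegral_mono fun x => le_min ?_ ?_
    · exact s.Ex_indicator_le_one n _ (fun w => min_le_left _ _) x
    · refine le_trans (s.Ex_mono x fun w _ => ?_) (s.Ex_coa n x u)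
      refine (min_le_right _ _).trans (ENNReal.ofReal_le_ofReal ?_)
      exact Real.rpow_le_rpow infDist_nonneg
        (infDist_le_dist_of_mem (hU.fwd_w w ⟨u, hu, rfl⟩)) s.hβ0.le
  have hlim : Tendsto (fun n : ℕ => ∫⁻ x, min 1 (ENNReal.ofReal (s.q ^ n * dist x u ^ s.β)) ∂s.ν)
      atTop (nhds (∫⁻ x, 0 ∂s.ν)) := by
    refine tendsto_lintegral_of_dominated_convergence (fun _ => 1) ?_ ?_ ?_ ?_
    · intro n
      refine measurable_const.min (Measurable.ennreal_ofReal ?_)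
      refine (Continuous.mul continuous_const ?_).measurable
      exact Continuous.rpow_const (by fun_prop) fun _ => Or.inr s.hβ0.le
    · exact fun n => ae_of_all _ fun x => min_le_left _ _
    · simp
    · refine ae_of_all _ fun x => ?_
      have h1 : Tendsto (fun n : ℕ => s.q ^ n * dist x u ^ s.β) atTop (nhds (0 * dist x u ^ s.β)) :=
        (tendsto_pow_atTop_nhds_zero_of_lt_one s.hq0.le s.hq1).mul_const _
      rw [zero_mul] at h1
      have h2 := (tendsto_const_nhds (x := (1:ℝ≥0∞))).min (ENNReal.tendsto_ofReal h1)
      simpa using h2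
  have h0 : ∫⁻ x, f x ∂s.ν = 0 := by
    have := ge_of_tendsto' hlim hle
    simpa using this
  rw [lintegral_eq_zero_iff hfm] at h0
  filter_upwards [h0] with x hx
  rw [mem_closure_iff_infDist_zero hU.ne]
  simp only [hf, Pi.zero_apply] at hx
  have h3 : ENNReal.ofReal (infDist x U ^ s.β) = 0 := by
    rcases min_choice (1:ℝ≥0∞) (ENNReal.ofReal (infDist x U ^ s.β)) with h | h
    · rw [h] at hx; exact absurd hx one_ne_zero
    · rwa [h] at hx
  rw [ENNReal.ofReal_eq_zero] at h3
  by_contra hne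
  have : 0 < infDist x U := lt_of_le_of_ne infDist_nonneg (Ne.symm hne)
  have : 0 < infDist x U ^ s.β := by positivity
  linarith

lemma Rosc.count (hU : s.Rosc U R₂ R₃) (ε : ℝ) (hε : 0 < ε) : ∃ C1 : ℝ, 0 ≤ C1 ∧
    ∀ (n : ℕ) (z : EuclideanSpace ℝ (Fin d)) (r : ℝ),
      r ≤ Real.exp (s.chi - 3 * ε) * Real.exp (n * (-(s.chi - 3 * ε))) →
      ∀ W : Finset (List (Fin k)), (∀ w ∈ W, w.length = n ∧ ∃ Y ∈ closure U,
        |s.Sm s.g w Y - n * (-s.chi)| ≤ 3 * ε * n ∧ s.Gw w Y ≤ Real.exp (ε * n) ∧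
        s.hw w Y ∈ ball z r) →
      (W.card : ℝ) ≤ C1 * Real.exp (n * (d * (6 * ε + ε / s.β))) := by
  have hC := s.hC
  have hβ := s.hβ0
  have hr2 := hU.r2
  have hr3 := hU.r3
  set a := s.chi - 3 * ε with ha
  set ρ0 := min R₂ ((1 / (s.C * Real.exp s.β)) ^ (1 / s.β)) with hρ0
  have hρ00 : 0 < ρ0 := by positivity
  have hρR : ρ0 ≤ R₂ := min_le_left _ _
  have hρ0β : s.C * Real.exp s.β * ρ0 ^ s.β ≤ 1 := by
    have h1 : ρ0 ^ s.β ≤ ((1 / (s.C * Real.exp s.β)) ^ (1 / s.β)) ^ s.β :=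
      Real.rpow_le_rpow hρ00.le (min_le_right _ _) hβ.le
    rw [← Real.rpow_mul (by positivity), one_div_mul_cancel hβ.ne', Real.rpow_one,
      le_div_iff₀ (by positivity)] at h1
    linarith
  set Q := Real.exp a + Real.exp 1 * ρ0 with hQ
  have hQ0 : 0 < Q := by positivity
  set v1 := (volume (ball (0 : EuclideanSpace ℝ (Fin d)) 1)).toReal with hv1
  have hv1' : volume (ball (0 : EuclideanSpace ℝ (Fin d)) 1) = ENNReal.ofReal v1 :=
    (ENNReal.ofReal_toReal measure_ball_lt_top.ne).symm
  have hv10 : 0 ≤ v1 := ENNReal.toReal_nonneg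
  refine ⟨(Q * Real.exp 1 * 2 / ρ0) ^ d * v1 / R₃, by positivity, ?_⟩
  intro n z r hr W hW
  set ρ := ρ0 * Real.exp (-(ε * n / s.β)) with hρ
  have hρ_0 : 0 < ρ := by positivity
  have hρle : ρ ≤ ρ0 := by
    have : Real.exp (-(ε * n / s.β)) ≤ 1 := Real.exp_le_one_iff.mpr (by
      rw [neg_nonpos]; positivity)
    rw [hρ]; nlinarith
  have hρβ : ρ ^ s.β = ρ0 ^ s.β * Real.exp (-(ε * n)) := by
    rw [hρ, Real.mul_rpow (by positivity) (by positivity), ← Real.exp_mul]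
    congr 2; field_simp
  choose! Y hY using fun w hw => (hW w hw).2
  have hlen := fun w hw => (hW w hw).1
  have hbud : ∀ w ∈ W, s.C * Real.exp s.β * ρ ^ s.β * s.Gw w (Y w) + 0 ≤ 1 := by
    intro w hw
    obtain ⟨h1, h2, h3, h4⟩ := hY w hw
    rw [add_zero, hρβ]
    calc _ ≤ s.C * Real.exp s.β * (ρ0 ^ s.β * Real.exp (-(ε * n))) * Real.exp (ε * n) := by gcongr
      _ = s.C * Real.exp s.β * ρ0 ^ s.β * (Real.exp (-(ε * n)) * Real.exp (ε * n)) := by ring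
      _ = s.C * Real.exp s.β * ρ0 ^ s.β := by rw [← Real.exp_add]; simp
      _ ≤ 1 := hρ0β
  set Z : List (Fin k) → Set (EuclideanSpace ℝ (Fin d)) := fun w => s.hw w '' (ball (Y w) ρ ∩ U) with hZ
  have hAm : ∀ w, MeasurableSet (ball (Y w) ρ ∩ U) :=
    fun w => measurableSet_ball.inter hU.op.measurableSet
  set m := Real.exp (n * (-s.chi) - 3 * ε * n - 1) ^ d * (R₃ * (ρ / 2) ^ d) with hm
  have hm0 : 0 < m := by positivity
  have hZvol : ∀ w ∈ W, ENNReal.ofReal m ≤ volume (Z w) := by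
    intro w hw
    obtain ⟨h1, h2, h3, h4⟩ := hY w hw
    have h5 := s.distort_vol w (Y w) ρ 0 hρ_0 le_rfl (hbud w hw) _ (hAm w)
      (by rw [Real.exp_zero, one_mul]; exact Set.inter_subset_left)
    refine le_trans ?_ h5
    rw [hm, ENNReal.ofReal_mul (by positivity)]
    have h6 := abs_le.mp h2
    refine mul_le_mul' (ENNReal.ofReal_le_ofReal ?_) ?_
    · refine pow_le_pow_left₀ (Real.exp_pos _).le (Real.exp_le_exp.mpr (by linarith)) _
    · obtain ⟨y, hy, hyd⟩ := Metric.mem_closure_iff.mp h1 (ρ / 2) (by positivity)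
      refine (hU.vol y hy (ρ / 2) (by positivity) (by linarith)).trans (measure_mono ?_)
      refine Set.inter_subset_inter_left _ fun x hx => ?_
      rw [mem_ball] at hx ⊢
      have := dist_triangle x y (Y w)
      rw [dist_comm y] at this
      linarith
  have hZball : (⋃ w ∈ W, Z w) ⊆ ball z (Q * Real.exp (n * (-a))) := by
    intro x hx
    obtain ⟨w, hw, hxw⟩ := Set.mem_iUnion₂.mp hx
    obtain ⟨y, ⟨hy1, _⟩, rfl⟩ := hxw
    obtain ⟨h1, h2, h3, h4⟩ := hY w hw
    have h5 := s.distort_dist w (Y w) ρ 0 hρ_0 le_rfl (hbud w hw) y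
      (by rw [Real.exp_zero, one_mul]; exact hy1)
    have h6 := abs_le.mp h2
    have h7 : Real.exp (s.Sm s.g w (Y w)) ≤ Real.exp (n * (-a)) := by
      apply Real.exp_le_exp.mpr; rw [ha]; linarith
    have h8 : Real.exp 1 * (Real.exp (s.Sm s.g w (Y w)) * ρ) ≤
        Real.exp 1 * (Real.exp (n * (-a)) * ρ0) := by gcongr
    rw [mem_ball] at h4 ⊢
    have h9 := dist_triangle (s.hw w y) (s.hw w (Y w)) z
    rw [hQ]
    linarith
  have hsum : ENNReal.ofReal (W.card * m) ≤ ENNReal.ofReal ((Q * Real.exp (n * (-a))) ^ d * v1) := by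
    calc ENNReal.ofReal (W.card * m) = ∑ w ∈ W, ENNReal.ofReal m := by
          rw [Finset.sum_const, nsmul_eq_mul, ENNReal.ofReal_mul (Nat.cast_nonneg _), ENNReal.ofReal_natCast]
      _ ≤ ∑ w ∈ W, volume (Z w) := Finset.sum_le_sum hZvol
      _ = volume (⋃ w ∈ W, Z w) := by
          refine (measure_biUnion_finset ?_ fun w _ => s.meas_image_w w (hAm w)).symm
          intro u hu v hv huv
          exact (hU.disj_w n u v (hlen u hu) (hlen v hv) huv).mono
            (Set.image_mono Set.inter_subset_right) (Set.image_mono Set.inter_subset_right)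
      _ ≤ volume (ball z (Q * Real.exp (n * (-a)))) := measure_mono hZball
      _ = _ := by
          have hp : 0 < Q * Real.exp (n * (-a)) := mul_pos hQ0 (Real.exp_pos _)
          rw [Measure.addHaar_ball_of_pos _ _ hp, hv1',
            ← ENNReal.ofReal_mul (pow_nonneg hp.le _), finrank_euclideanSpace_fin]
  have hp : 0 < Q * Real.exp (n * (-a)) := mul_pos hQ0 (Real.exp_pos _)
  rw [ENNReal.ofReal_le_ofReal_iff (mul_nonneg (pow_nonneg hp.le _) hv10), ← le_div_iff₀ hm0] at hsum
  refine hsum.trans (le_of_eq ?_)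
  rw [div_eq_iff hm0.ne']
  have e2 : Real.exp (n * (d * (6 * ε + ε / s.β))) = Real.exp (n * (6 * ε + ε / s.β)) ^ d := by
    rw [← Real.exp_nat_mul]; congr 1; ring
  have e3 : Q * Real.exp (n * (-a)) = (Q * Real.exp 1 * 2 / ρ0) * Real.exp (n * (6 * ε + ε / s.β)) *
      Real.exp (n * (-s.chi) - 3 * ε * n - 1) * (ρ / 2) := by
    have e4 : Real.exp (n * (-a)) = Real.exp 1 * Real.exp (n * (6 * ε + ε / s.β)) *
        Real.exp (n * (-s.chi) - 3 * ε * n - 1) * Real.exp (-(ε * n / s.β)) := by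
      rw [← Real.exp_add, ← Real.exp_add, ← Real.exp_add]
      congr 1; rw [ha]; ring
    rw [e4, hρ]; field_simp
  rw [e3, e2, hm, mul_pow, mul_pow, mul_pow]
  field_simp

end Sys
end

noncomputable section
namespace Sys
variable {d k : ℕ} (s : Sys d k)

open Classical in
lemma split_bound (P : List (Fin k) → EuclideanSpace ℝ (Fin d) → Prop) (a : ℝ≥0∞) (n : ℕ)
    (hP : ∀ x, s.Ex n (fun v => if P v x then 1 else 0) x ≤ a) (N x) :
    s.Ex N (fun w => if ∃ u v, w = u ++ v ∧ v.length = n ∧ P v (s.hw u x)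
      then 1 else 0) x ≤ a := by
  by_cases hn : n ≤ N
  · obtain ⟨m, rfl⟩ := Nat.exists_eq_add_of_le' hn
    rw [Ex_append, ← s.Ex_const m a x]
    refine s.Ex_mono x fun u hu => ?_
    refine le_trans ?_ (hP (s.hw u x))
    refine s.Ex_mono _ fun v hv => ?_
    by_cases hh : ∃ u' v', u ++ v = u' ++ v' ∧ v'.length = n ∧ P v' (s.hw u' x)
    · rw [if_pos hh]
      obtain ⟨u', v', he, hl, hp⟩ := hh
      obtain ⟨rfl, rfl⟩ := List.append_inj' he (by omega)
      rw [if_pos hp]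
    · rw [if_neg hh]; exact zero_le
  · refine le_trans ?_ zero_le
    refine le_trans (s.Ex_mono (G := fun _ => 0) x fun w hw => ?_) (s.Ex_const N 0 x).le
    rw [if_neg]
    rintro ⟨u, v, rfl, hl, _⟩
    simp at hw; omega

/-- Good event for one ball. -/
def Good (U : Set (EuclideanSpace ℝ (Fin d))) (ε : ℝ) (z : EuclideanSpace ℝ (Fin d)) (r : ℝ)
    (v : List (Fin k)) (y : EuclideanSpace ℝ (Fin d)) : Prop :=
  y ∈ closure U ∧ ¬ s.Dev s.g (-s.chi) ε v y ∧ ¬ s.Dev s.lp (-s.ent) ε v y ∧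
    s.Gw v y ≤ Real.exp (ε * v.length) ∧ s.hw v y ∈ ball z r

variable {s} {U : Set (EuclideanSpace ℝ (Fin d))} {R₂ R₃ : ℝ}

open Classical in
lemma Rosc.good_bound (hU : s.Rosc U R₂ R₃) (t ε : ℝ) (ht0 : 0 < t) (hε : 0 < ε)
    (hεt : ε * (3 + 6 * d + d / s.β) ≤ s.ent - t * s.chi) : ∃ C1 : ℝ, 0 ≤ C1 ∧
    ∀ (n : ℕ) (z : EuclideanSpace ℝ (Fin d)) (r : ℝ),
      r ≤ Real.exp (s.chi - 3 * ε) * Real.exp (n * (-(s.chi - 3 * ε))) →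
      Real.exp (n * (-(s.chi - 3 * ε))) ≤ r → ∀ y,
      s.Ex n (fun v => if s.Good U ε z r v y then 1 else 0) y ≤ ENNReal.ofReal (C1 * r ^ t) := by
  obtain ⟨C1, hC1, hcount⟩ := hU.count ε hε
  refine ⟨C1, hC1, fun n z r hr hr' y => ?_⟩
  set W := (words k n).filter (fun v => s.Good U ε z r v y) with hW
  have hWl : ∀ w ∈ W, w.length = n := fun w hw => mem_words.mp (Finset.mem_filter.mp hw).1
  have hWg : ∀ w ∈ W, s.Good U ε z r w y := fun w hw => (Finset.mem_filter.mp hw).2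
  have hcard := hcount n z r hr W (by
    intro w hw
    refine ⟨hWl w hw, y, ?_⟩
    obtain ⟨h1, h2, h3, h4, h5⟩ := hWg w hw
    rw [Dev, not_lt, hWl w hw] at h2
    rw [hWl w hw] at h4
    exact ⟨h1, h2, h4, h5⟩)
  calc _ ≤ s.Ex n (fun v => if v ∈ W then 1 else 0) y := by
        refine s.Ex_mono y fun v hv => ?_
        split_ifs with h1 h2
        · exact le_rfl
        · exact absurd (Finset.mem_filter.mpr ⟨mem_words.mpr hv, h1⟩) h2
        · exact zero_le
        · exact le_rfl
    _ = ∑ v ∈ W, ENNReal.ofReal (Real.exp (s.Sm s.lp v y)) := s.Ex_indicator_le n W hWl y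
    _ ≤ ∑ v ∈ W, ENNReal.ofReal (Real.exp (n * (-s.ent) + 3 * ε * n)) := by
        refine Finset.sum_le_sum fun v hv => ENNReal.ofReal_le_ofReal (Real.exp_le_exp.mpr ?_)
        obtain ⟨h1, h2, h3, h4, h5⟩ := hWg v hv
        rw [Dev, not_lt, hWl v hv] at h3
        linarith [(abs_le.mp h3).2]
    _ = ENNReal.ofReal (W.card * Real.exp (n * (-s.ent) + 3 * ε * n)) := by
        rw [Finset.sum_const, nsmul_eq_mul, ENNReal.ofReal_mul (Nat.cast_nonneg _), ENNReal.ofReal_natCast]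
    _ ≤ _ := by
        refine ENNReal.ofReal_le_ofReal ?_
        calc _ ≤ (C1 * Real.exp (n * (d * (6 * ε + ε / s.β)))) * Real.exp (n * (-s.ent) + 3 * ε * n) :=
              mul_le_mul_of_nonneg_right hcard (Real.exp_pos _).le
          _ = C1 * Real.exp (n * (d * (6 * ε + ε / s.β)) + (n * (-s.ent) + 3 * ε * n)) := by
              rw [mul_assoc, ← Real.exp_add]
          _ ≤ C1 * Real.exp (n * (-(s.chi - 3 * ε)) * t) := by
              refine mul_le_mul_of_nonneg_left (Real.exp_le_exp.mpr ?_) hC1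
              have e : n * (d * (6 * ε + ε / s.β)) + (n * (-s.ent) + 3 * ε * n) =
                  n * (ε * (3 + 6 * d + d / s.β) - s.ent) := by ring
              rw [e, mul_assoc]
              refine mul_le_mul_of_nonneg_left ?_ (Nat.cast_nonneg _)
              nlinarith [mul_pos hε ht0]
          _ ≤ C1 * r ^ t := by
              refine mul_le_mul_of_nonneg_left ?_ hC1
              rw [Real.exp_mul]
              exact Real.rpow_le_rpow (Real.exp_pos _).le hr' ht0.le

open Classical in
lemma Rosc.ball_cover (hU : s.Rosc U R₂ R₃) (t : ℝ) (ht0 : 0 < t) (ht : t * s.chi < s.ent) (ε' : ℝ)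
    (hε' : 0 < ε') : ∃ C' r0 : ℝ, 0 ≤ C' ∧ 0 < r0 ∧ ∀ (I : Finset ℕ)
      (z : ℕ → EuclideanSpace ℝ (Fin d)) (r : ℕ → ℝ), (∀ i ∈ I, 0 < r i ∧ r i ≤ r0) →
      s.ν (⋃ i ∈ I, ball (z i) (r i)) ≤
        ENNReal.ofReal ε' + ∑ i ∈ I, ENNReal.ofReal (C' * r i ^ t) := by
  have hβ := s.hβ0
  have hχ := s.chi_pos
  have hprob := s.prob
  obtain ⟨ε, hε, hεχ, hεt⟩ : ∃ ε : ℝ, 0 < ε ∧ 3 * ε < s.chi ∧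
      ε * (3 + 6 * d + d / s.β) ≤ s.ent - t * s.chi := by
    have hD : 0 < 3 + 6 * d + d / s.β := by positivity
    refine ⟨min (s.chi / 4) ((s.ent - t * s.chi) / (3 + 6 * d + d / s.β)), ?_, ?_, ?_⟩
    · exact lt_min (by positivity) (div_pos (by linarith) hD)
    · have := min_le_left (s.chi / 4) ((s.ent - t * s.chi) / (3 + 6 * d + d / s.β))
      linarith
    · rw [← le_div_iff₀ hD]; exact min_le_right _ _
  obtain ⟨C1, hC1, hgood⟩ := hU.good_bound t ε ht0 hε hεt
  set a := s.chi - 3 * ε with ha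
  have ha0 : 0 < a := by rw [ha]; linarith
  have hq := s.hq1
  obtain ⟨n1, hn1⟩ := tail_small ε (1 / (1 - s.q)) hε
    (div_nonneg zero_le_one (by linarith)) (ENNReal.ofReal (ε' / 2)) (by simpa using hε')
  obtain ⟨n2, hn2⟩ := s.lln2 ε (ε' / 2) hε (by positivity)
  set n0 := max n1 n2 with hn0
  refine ⟨C1, Real.exp (-(n0 * a)), hC1, Real.exp_pos _, fun I z r hr => ?_⟩
  set V := ⋃ i ∈ I, ball (z i) (r i) with hV
  have hVm : MeasurableSet V := Finset.measurableSet_biUnion _ fun i _ => measurableSet_ball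
  set m : ℕ → ℕ := fun i => ⌈-Real.log (r i) / a⌉₊ with hm
  have hlog : ∀ i ∈ I, n0 * a ≤ -Real.log (r i) := by
    intro i hi
    have := (Real.log_le_log_iff (hr i hi).1 (Real.exp_pos _)).mpr (hr i hi).2
    rw [Real.log_exp] at this
    linarith
  have hm0 : ∀ i ∈ I, n0 ≤ m i := by
    intro i hi
    have h1 : (n0 : ℝ) ≤ -Real.log (r i) / a := by rw [le_div_iff₀ ha0]; exact hlog i hi
    exact_mod_cast h1.trans (Nat.le_ceil _)
  have hmr : ∀ i ∈ I, Real.exp (m i * (-a)) ≤ r i := by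
    intro i hi
    rw [← Real.le_log_iff_exp_le (hr i hi).1]
    have : -Real.log (r i) / a ≤ m i := Nat.le_ceil _
    rw [div_le_iff₀ ha0] at this
    linarith
  have hmr' : ∀ i ∈ I, r i ≤ Real.exp a * Real.exp (m i * (-a)) := by
    intro i hi
    rw [← Real.exp_add, ← Real.log_le_iff_le_exp (hr i hi).1]
    have h0 : 0 ≤ -Real.log (r i) / a := div_nonneg (le_trans (by positivity) (hlog i hi)) ha0.le
    have := Nat.ceil_lt_add_one h0
    change (m i : ℝ) < _ at this
    have h2 : (m i : ℝ) * a < (-Real.log (r i) / a + 1) * a := by gcongr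
    rw [add_mul, div_mul_cancel₀ _ ha0.ne'] at h2
    linarith
  set N := I.sup m with hN
  set PG : List (Fin k) → EuclideanSpace ℝ (Fin d) → Prop :=
    fun v y => Real.exp (ε * v.length) < s.Gw v y with hPG
  have hPGb : ∀ x, s.Ex N (fun w => if s.Bev PG n0 w x then 1 else 0) x ≤ ENNReal.ofReal (ε' / 2) := by
    intro x
    refine (s.tail_bound PG (fun n => ENNReal.ofReal (1 / (1 - s.q) * Real.exp (-(ε * (n : ℝ))))) n0
      ?_ N x).trans (hn1 n0 (le_max_left _ _))
    intro n y
    refine le_trans ?_ ((s.Gw_markov n y (Real.exp (ε * n)) (Real.exp_pos _)).trans ?_)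
    · refine s.Ex_mono y fun v hv => ?_
      simp only [hPG, hv]
      split_ifs <;> simp
    · rw [← Real.exp_neg, mul_comm]
  have hpt : ∀ x ∈ closure U, s.Ex N (fun w => V.indicator 1 (s.hw w x)) x ≤
      s.Ex N (fun w => if s.Bad ε n0 w x then 1 else 0) x + (ENNReal.ofReal (ε' / 2) +
        ∑ i ∈ I, ENNReal.ofReal (C1 * r i ^ t)) := by
    intro x hx
    calc _ ≤ s.Ex N (fun w => (if s.Bad ε n0 w x then 1 else 0) +
          ((if s.Bev PG n0 w x then 1 else 0) + ∑ i ∈ I,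
            if ∃ u v, w = u ++ v ∧ v.length = m i ∧ s.Good U ε (z i) (r i) v (s.hw u x)
              then 1 else 0)) x := by
          refine s.Ex_mono x fun w hw => ?_
          by_cases hwV : s.hw w x ∈ V
          swap
          · rw [Set.indicator_of_notMem hwV]; exact zero_le
          rw [Set.indicator_of_mem hwV, Pi.one_apply]
          by_cases hb : s.Bad ε n0 w x
          · rw [if_pos hb]; exact le_self_add
          by_cases hg : s.Bev PG n0 w x
          · rw [if_pos hg]; exact le_add_left le_self_add
          obtain ⟨i, hi, hwi⟩ := Set.mem_iUnion₂.mp hwV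
          refine le_add_left (le_add_left ?_)
          refine le_trans ?_ (Finset.single_le_sum (fun _ _ => zero_le) hi)
          have hmN : m i ≤ N := Finset.le_sup hi
          have hsplit : w = w.take (N - m i) ++ w.drop (N - m i) := (List.take_append_drop _ _).symm
          have hlen : (w.drop (N - m i)).length = m i := by rw [List.length_drop, hw]; omega
          have hlen' : n0 ≤ (w.drop (N - m i)).length := by rw [hlen]; exact hm0 i hi
          rw [if_pos]
          refine ⟨_, _, hsplit, hlen, hU.clos_w _ hx, ?_, ?_, ?_, ?_⟩
          · intro hD; exact hb (Or.inl ⟨_, _, hsplit, hlen', hD⟩)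
          · intro hD; exact hb (Or.inr ⟨_, _, hsplit, hlen', hD⟩)
          · by_contra hD; exact hg ⟨_, _, hsplit, hlen', not_le.mp hD⟩
          · rw [← hw_append, ← hsplit]; exact hwi
      _ ≤ _ := by
          rw [Ex_add, Ex_add, Ex_finset_sum]
          gcongr with i hi
          · exact hPGb x
          · exact s.split_bound _ _ _ (hgood (m i) (z i) (r i) (hmr' i hi) (hmr i hi)) N x
  calc s.ν V = ∫⁻ x, V.indicator 1 x ∂s.ν := (lintegral_indicator_one hVm).symm
    _ = ∫⁻ x, s.Ex N (fun w => V.indicator 1 (s.hw w x)) x ∂s.ν :=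
        (s.stat_n N _ (measurable_one.indicator hVm)).symm
    _ ≤ ∫⁻ x, (s.Ex N (fun w => if s.Bad ε n0 w x then 1 else 0) x + (ENNReal.ofReal (ε' / 2) +
        ∑ i ∈ I, ENNReal.ofReal (C1 * r i ^ t))) ∂s.ν := by
        refine lintegral_mono_ae ?_
        filter_upwards [hU.ae_clos] with x hx using hpt x hx
    _ = ∫⁻ x, s.Ex N (fun w => if s.Bad ε n0 w x then 1 else 0) x ∂s.ν + (ENNReal.ofReal (ε' / 2) +
        ∑ i ∈ I, ENNReal.ofReal (C1 * r i ^ t)) := by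
        rw [lintegral_add_right _ measurable_const, lintegral_const, measure_univ, mul_one]
    _ ≤ ENNReal.ofReal (ε' / 2) + (ENNReal.ofReal (ε' / 2) +
        ∑ i ∈ I, ENNReal.ofReal (C1 * r i ^ t)) := by
        gcongr; exact hn2 n0 (le_max_right _ _) N
    _ = _ := by
        rw [← add_assoc, ← ENNReal.ofReal_add (by positivity) (by positivity), add_halves]

end Sys
end

noncomputable section
open scoped MeasureTheory
namespace Sys
variable {d k : ℕ} {s : Sys d k} {U : Set (EuclideanSpace ℝ (Fin d))} {R₂ R₃ : ℝ}

lemma exists_radius (t D r0 κ : ℝ) (ht : 0 < t) (hD : D < r0) (hκ : 0 < κ) :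
    ∃ r, D < r ∧ r ≤ r0 ∧ r ^ t < D ^ t + κ := by
  have h1 : ContinuousAt (fun x : ℝ => x ^ t) D := Real.continuousAt_rpow_const _ _ (Or.inr ht.le)
  have h2 : ∀ᶠ x in nhds D, x ^ t < D ^ t + κ := h1.eventually_lt_const (by linarith)
  have h3 : ∀ᶠ x in nhdsWithin D (Set.Ioi D), x ^ t < D ^ t + κ := h2.filter_mono nhdsWithin_le_nhds
  have h4 : ∀ᶠ x in nhdsWithin D (Set.Ioi D), x ∈ Set.Ioc D r0 := Ioc_mem_nhdsGT hD
  obtain ⟨r, h5, h6⟩ := (h3.and h4).exists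
  exact ⟨r, h6.1, h6.2, h5⟩

lemma Rosc.lower (hU : s.Rosc U R₂ R₃) (t : ℝ) (ht0 : 0 < t) (ht : t * s.chi < s.ent)
    (A : Set (EuclideanSpace ℝ (Fin d))) (hA : 0 < s.ν A) : ENNReal.ofReal t ≤ dimH A := by
  have hprob := s.prob
  refine le_dimH_of_hausdorffMeasure_ne_zero (d := t.toNNReal) (s := A) ?_
  rw [Real.coe_toNNReal _ ht0.le]
  intro h0
  set η := (s.ν A).toReal with hη
  have hη0 : 0 < η := ENNReal.toReal_pos hA.ne' (measure_ne_top _ _)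
  have hνA : s.ν A = ENNReal.ofReal η := (ENNReal.ofReal_toReal (measure_ne_top _ _)).symm
  obtain ⟨C', r0, hC', hr0, hcov⟩ := hU.ball_cover t ht0 ht (η / 3) (by positivity)
  set κ := η / (6 * (C' + 1)) with hκ
  have hκ0 : 0 < κ := by positivity
  rw [Measure.hausdorffMeasure_apply] at h0
  have h1 : (⨅ (T : ℕ → Set (EuclideanSpace ℝ (Fin d))) (_ : A ⊆ ⋃ n, T n)
      (_ : ∀ n, ediam (T n) ≤ ENNReal.ofReal (r0 / 2)),
      ∑' n, ⨆ _ : (T n).Nonempty, ediam (T n) ^ t) < ENNReal.ofReal κ := by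
    refine lt_of_le_of_lt ?_ (ENNReal.ofReal_pos.mpr hκ0)
    rw [← h0]
    exact le_iSup₂_of_le (f := fun (r : ℝ≥0∞) (_ : 0 < r) => ⨅ (T : ℕ → Set (EuclideanSpace ℝ (Fin d)))
      (_ : A ⊆ ⋃ n, T n) (_ : ∀ n, ediam (T n) ≤ r),
      ∑' n, ⨆ _ : (T n).Nonempty, ediam (T n) ^ t) (ENNReal.ofReal (r0 / 2))
      (ENNReal.ofReal_pos.mpr (by positivity)) le_rfl
  simp only [iInf_lt_iff] at h1
  obtain ⟨T, hAT, hTd, hTs⟩ := h1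
  set D : ℕ → ℝ := fun n => (ediam (T n)).toReal with hD
  have hDt : ∀ n, ediam (T n) = ENNReal.ofReal (D n) := fun n =>
    (ENNReal.ofReal_toReal (ne_top_of_le_ne_top ENNReal.ofReal_ne_top (hTd n))).symm
  have hDnn : ∀ n, 0 ≤ D n := fun n => ENNReal.toReal_nonneg
  have hDr : ∀ n, D n < r0 := by
    intro n
    have h2 := hTd n
    rw [hDt, ENNReal.ofReal_le_ofReal_iff (by positivity)] at h2
    linarith
  choose r hr1 hr2 hr3 using fun n : ℕ =>
    exists_radius t (D n) r0 (κ * (1 / 2) ^ (n + 1)) ht0 (hDr n) (by positivity)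
  have hz : ∀ n, ∃ z, T n ⊆ ball z (r n) := by
    intro n
    rcases (T n).eq_empty_or_nonempty with h | ⟨z, hz⟩
    · exact ⟨0, by simp [h]⟩
    · refine ⟨z, fun x hx => ?_⟩
      rw [mem_ball, ← edist_lt_ofReal]
      refine lt_of_le_of_lt (edist_le_ediam_of_mem hx hz) ?_
      rw [hDt]
      exact (ENNReal.ofReal_lt_ofReal_iff (lt_of_le_of_lt (hDnn n) (hr1 n))).mpr (hr1 n)
  choose z hz using hz
  have hDsum : ∑' n, ENNReal.ofReal (D n ^ t) ≤ ENNReal.ofReal κ := by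
    refine le_trans (ENNReal.tsum_le_tsum fun n => ?_) hTs.le
    rcases (T n).eq_empty_or_nonempty with h | h
    · have : D n = 0 := by simp [hD, h]
      rw [this, Real.zero_rpow ht0.ne']; simp
    · simp only [h, iSup_pos]
      rw [hDt, ENNReal.ofReal_rpow_of_nonneg (hDnn n) ht0.le]
  have hgeo : ∑' n : ℕ, ENNReal.ofReal (κ * (1 / 2) ^ (n + 1)) = ENNReal.ofReal κ := by
    have hs : HasSum (fun n : ℕ => κ * (1 / 2 : ℝ) ^ (n + 1)) κ := by
      have := (hasSum_geometric_two.mul_left (κ / 2))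
      have e1 : (fun n : ℕ => κ * (1 / 2 : ℝ) ^ (n + 1)) = fun i : ℕ => κ / 2 * (1 / 2) ^ i := by
        funext n; rw [pow_succ]; ring
      have e2 : κ / 2 * 2 = κ := by ring
      rw [e1]; rw [e2] at this; exact this
    rw [← ENNReal.ofReal_tsum_of_nonneg (fun n => by positivity) hs.summable, hs.tsum_eq]
  have hfin : ∀ I : Finset ℕ, s.ν (⋃ i ∈ I, ball (z i) (r i)) ≤ ENNReal.ofReal (2 * η / 3) := by
    intro I
    refine (hcov I z r fun i _ => ⟨lt_of_le_of_lt (hDnn i) (hr1 i), hr2 i⟩).trans ?_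
    have h5 : ∑ i ∈ I, ENNReal.ofReal (C' * r i ^ t) ≤ ENNReal.ofReal (η / 3) := by
      calc _ ≤ ∑ i ∈ I, ENNReal.ofReal C' *
            (ENNReal.ofReal (D i ^ t) + ENNReal.ofReal (κ * (1 / 2) ^ (i + 1))) := by
            refine Finset.sum_le_sum fun i _ => ?_
            rw [ENNReal.ofReal_mul hC', ← ENNReal.ofReal_add (Real.rpow_nonneg (hDnn i) _) (by positivity)]
            gcongr
            exact (hr3 i).le
        _ = ENNReal.ofReal C' * (∑ i ∈ I, ENNReal.ofReal (D i ^ t) +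
            ∑ i ∈ I, ENNReal.ofReal (κ * (1 / 2) ^ (i + 1))) := by
            rw [← Finset.mul_sum, Finset.sum_add_distrib]
        _ ≤ ENNReal.ofReal C' * (ENNReal.ofReal κ + ENNReal.ofReal κ) := by
            gcongr
            · exact (ENNReal.sum_le_tsum _).trans hDsum
            · exact (ENNReal.sum_le_tsum _).trans hgeo.le
        _ = ENNReal.ofReal (C' * (κ + κ)) := by
            rw [ENNReal.ofReal_mul hC', ENNReal.ofReal_add hκ0.le hκ0.le]
        _ ≤ _ := by
            refine ENNReal.ofReal_le_ofReal ?_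
            have : κ * (6 * (C' + 1)) = η := by rw [hκ]; field_simp
            nlinarith
    calc _ ≤ ENNReal.ofReal (η / 3) + ENNReal.ofReal (η / 3) := by gcongr
      _ = _ := by rw [← ENNReal.ofReal_add (by positivity) (by positivity)]; congr 1; ring
  have hlim : s.ν (⋃ i, ball (z i) (r i)) ≤ ENNReal.ofReal (2 * η / 3) := by
    rw [measure_iUnion_eq_iSup_accumulate]
    refine iSup_le fun n => ?_
    refine le_trans (measure_mono ?_) (hfin (Finset.range (n + 1)))
    intro x hx
    obtain ⟨i, hi, hxi⟩ := Set.mem_accumulate.mp hx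
    exact Set.mem_iUnion₂.mpr ⟨i, Finset.mem_range.mpr (by omega), hxi⟩
  have h6 : s.ν A ≤ ENNReal.ofReal (2 * η / 3) :=
    (measure_mono (hAT.trans (Set.iUnion_mono hz))).trans hlim
  rw [hνA, ENNReal.ofReal_le_ofReal_iff (by positivity)] at h6
  linarith

end Sys

lemma lower_le_upper {X : Type*} [EMetricSpace X] [MeasurableSpace X] (μ : Measure X)
    [IsProbabilityMeasure μ] : (⨅ (s : Set X) (_ : 0 < μ s), dimH s) ≤
      ⨅ (s : Set X) (_ : μ sᶜ = 0), dimH s := by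
  refine le_iInf₂ fun F hF => iInf₂_le F ?_
  by_contra h
  have h0 : μ F = 0 := by simpa using h
  have h1 : μ Set.univ ≤ μ F + μ Fᶜ := by
    rw [← Set.union_compl_self F]; exact measure_union_le _ _
  rw [h0, hF, measure_univ] at h1
  simp at h1

lemma Sys.final {d k : ℕ} (s : Sys d k) {U R₂ R₃} (hU : s.Rosc U R₂ R₃) :
    (⨅ (A : Set (EuclideanSpace ℝ (Fin d))) (_ : 0 < s.ν A), dimH A) = ENNReal.ofReal (s.ent / s.chi) ∧
    (⨅ (A : Set (EuclideanSpace ℝ (Fin d))) (_ : s.ν Aᶜ = 0), dimH A) = ENNReal.ofReal (s.ent / s.chi) := by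
  have hprob := s.prob
  have hχ := s.chi_pos
  have he := s.ent_nonneg
  have h0 := lower_le_upper s.ν
  have hup : (⨅ (A : Set (EuclideanSpace ℝ (Fin d))) (_ : s.ν Aᶜ = 0), dimH A) ≤
      ENNReal.ofReal (s.ent / s.chi) := by
    refine le_of_forall_gt fun c hc => ?_
    obtain ⟨c', h1, h2⟩ := ENNReal.lt_iff_exists_nnreal_btwn.mp hc
    have h3 : s.ent / s.chi < c' := by
      rw [← ENNReal.ofReal_coe_nnreal] at h1
      exact (ENNReal.ofReal_lt_ofReal_iff_of_nonneg (by positivity)).mp h1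
    obtain ⟨F, hF, hd⟩ := s.upper c' (lt_of_le_of_lt (by positivity) h3) (by rwa [div_lt_iff₀ hχ] at h3)
    refine lt_of_le_of_lt ((iInf₂_le F hF).trans hd) ?_
    rwa [ENNReal.ofReal_coe_nnreal]
  have hlow : ENNReal.ofReal (s.ent / s.chi) ≤
      ⨅ (A : Set (EuclideanSpace ℝ (Fin d))) (_ : 0 < s.ν A), dimH A := by
    refine le_iInf₂ fun A hA => ?_
    refine le_of_forall_lt fun c hc => ?_
    obtain ⟨c', h1, h2⟩ := ENNReal.lt_iff_exists_nnreal_btwn.mp hc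
    have h4 : (0:ℝ) < c' := by
      have : (0:ℝ≥0∞) < c' := lt_of_le_of_lt zero_le h1
      exact_mod_cast this
    have h3 : c' < s.ent / s.chi := by
      rw [← ENNReal.ofReal_coe_nnreal] at h2
      exact (ENNReal.ofReal_lt_ofReal_iff_of_nonneg h4.le).mp h2
    refine lt_of_lt_of_le h1 ?_
    have := hU.lower c' h4 (by rwa [lt_div_iff₀ hχ] at h3) A hA
    rwa [ENNReal.ofReal_coe_nnreal] at this
  exact ⟨le_antisymm (h0.trans hup) hlow, le_antisymm hup (hlow.trans h0)⟩
end

noncomputable section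

section Build
variable {d : ℕ}

lemma conf_norm [Nontrivial (EuclideanSpace ℝ (Fin d))]
    {f : EuclideanSpace ℝ (Fin d) →L[ℝ] EuclideanSpace ℝ (Fin d)}
    (hf : IsConformalMap f) : 0 < ‖f‖ ∧ ∀ v, ‖f v‖ = ‖f‖ * ‖v‖ := by
  obtain ⟨c, hc, li, rfl⟩ := hf
  have h1 : ∀ v, ‖(c • li.toContinuousLinearMap) v‖ = ‖c‖ * ‖v‖ := by
    intro v; simp [norm_smul]
  have h2 : ‖c • li.toContinuousLinearMap‖ = ‖c‖ :=
    ContinuousLinearMap.homothety_norm _ h1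
  rw [h2]
  exact ⟨norm_pos_iff.mpr hc, h1⟩

lemma conf_equiv [Nontrivial (EuclideanSpace ℝ (Fin d))]
    {f : EuclideanSpace ℝ (Fin d) →L[ℝ] EuclideanSpace ℝ (Fin d)}
    (hf : IsConformalMap f) : ∃ A : EuclideanSpace ℝ (Fin d) ≃L[ℝ] EuclideanSpace ℝ (Fin d),
      (A : EuclideanSpace ℝ (Fin d) →L[ℝ] EuclideanSpace ℝ (Fin d)) = f ∧
      ‖(A.symm : EuclideanSpace ℝ (Fin d) →L[ℝ] EuclideanSpace ℝ (Fin d))‖ ≤ ‖f‖⁻¹ := by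
  obtain ⟨h0, h1⟩ := conf_norm hf
  have hinj : Function.Injective (f : EuclideanSpace ℝ (Fin d) →ₗ[ℝ] EuclideanSpace ℝ (Fin d)) := by
    rw [← LinearMap.ker_eq_bot, LinearMap.ker_eq_bot']
    intro v hv
    have h2 := h1 v
    have hv' : f v = 0 := hv
    rw [hv', norm_zero] at h2
    rcases mul_eq_zero.mp h2.symm with h3 | h3
    · exact absurd h3 h0.ne'
    · exact norm_eq_zero.mp h3
  have hsurj := LinearMap.injective_iff_surjective.mp hinj
  refine ⟨(LinearEquiv.ofBijective _ ⟨hinj, hsurj⟩).toContinuousLinearEquiv, ?_, ?_⟩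
  · ext v; rfl
  · refine ContinuousLinearMap.opNorm_le_bound _ (by positivity) fun y => ?_
    set A := (LinearEquiv.ofBijective _ ⟨hinj, hsurj⟩).toContinuousLinearEquiv with hA
    have h2 : f (A.symm y) = y := A.apply_symm_apply y
    have h3 := h1 (A.symm y)
    rw [h2] at h3
    change ‖A.symm y‖ ≤ _
    rw [h3, inv_mul_cancel_left₀ h0.ne']

lemma conf_det [Nontrivial (EuclideanSpace ℝ (Fin d))]
    {f : EuclideanSpace ℝ (Fin d) →L[ℝ] EuclideanSpace ℝ (Fin d)}
    (hf : IsConformalMap f) : |f.det| = ‖f‖ ^ d := by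
  obtain ⟨h0, h1⟩ := conf_norm hf
  obtain ⟨A, hA, -⟩ := conf_equiv hf
  have himg : f '' ball 0 1 = ball 0 ‖f‖ := by
    ext y
    constructor
    · rintro ⟨x, hx, rfl⟩
      rw [mem_ball_zero_iff] at hx ⊢
      rw [h1]
      nlinarith
    · intro hy
      rw [mem_ball_zero_iff] at hy
      have h2 : f (A.symm y) = y := by rw [← hA]; exact A.apply_symm_apply y
      refine ⟨A.symm y, ?_, h2⟩
      have h3 := h1 (A.symm y)
      rw [h2] at h3
      rw [mem_ball_zero_iff]
      rw [h3] at hy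
      nlinarith
  have h2 := Measure.addHaar_image_continuousLinearMap volume f (ball 0 1)
  rw [himg, Measure.addHaar_ball_of_pos _ _ h0, finrank_euclideanSpace_fin] at h2
  have h3 := (ENNReal.mul_left_inj (measure_ball_pos volume (0 : EuclideanSpace ℝ (Fin d)) one_pos).ne'
    measure_ball_lt_top.ne).mp h2
  exact ((ENNReal.ofReal_eq_ofReal_iff (by positivity) (abs_nonneg _)).mp h3).symm

lemma holder_down (f : EuclideanSpace ℝ (Fin d) → ℝ) (C α B β : ℝ) (hC : 0 ≤ C) (hB : 0 ≤ B)
    (hβ : 0 < β) (hβα : β ≤ α) (hf : ∀ x y, |f x - f y| ≤ C * dist x y ^ α) (hfB : ∀ x, |f x| ≤ B)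
    (x y) : |f x - f y| ≤ (C + 2 * B) * dist x y ^ β := by
  have hd : 0 ≤ dist x y := dist_nonneg
  rcases le_total (dist x y) 1 with h | h
  · rcases hd.eq_or_lt with h0 | h0
    · have : x = y := dist_eq_zero.mp h0.symm
      subst this
      simp only [sub_self, abs_zero]
      positivity
    · have h1 : dist x y ^ α ≤ dist x y ^ β := Real.rpow_le_rpow_of_exponent_ge h0 h hβα
      have h2 : 0 ≤ dist x y ^ β := by positivity
      have h3 := hf x y
      nlinarith [mul_le_mul_of_nonneg_left h1 hC]
  · have h1 : 1 ≤ dist x y ^ β := Real.one_le_rpow h hβ.le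
    have h2 : |f x - f y| ≤ 2 * B := by
      have := abs_sub (f x) (f y)
      linarith [hfB x, hfB y]
    nlinarith

lemma holder_real {f : EuclideanSpace ℝ (Fin d) → ℝ} {C α : ℝ≥0} (h : HolderWith C α f) (x y) :
    |f x - f y| ≤ C * dist x y ^ (α : ℝ) := by
  have := h.dist_le x y
  rwa [Real.dist_eq] at this

lemma log_lip (a b δ : ℝ) (hδ : 0 < δ) (ha : δ ≤ a) (hb : δ ≤ b) :
    |Real.log a - Real.log b| ≤ δ⁻¹ * |a - b| := by
  have key : ∀ a b : ℝ, δ ≤ a → δ ≤ b → Real.log a - Real.log b ≤ δ⁻¹ * |a - b| := by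
    intro a b ha hb
    have ha0 : 0 < a := by linarith
    have hb0 : 0 < b := by linarith
    rw [← Real.log_div ha0.ne' hb0.ne']
    have h1 := Real.log_le_sub_one_of_pos (div_pos ha0 hb0)
    have h2 : a / b - 1 = b⁻¹ * (a - b) := by field_simp
    rw [h2] at h1
    refine h1.trans ?_
    calc b⁻¹ * (a - b) ≤ b⁻¹ * |a - b| := by gcongr; exact le_abs_self _
      _ ≤ _ := by gcongr
  rw [abs_le]
  constructor
  · have := key b a hb ha
    rw [abs_sub_comm] at this
    linarith
  · exact key a b ha hb

lemma vol_bound [Nontrivial (EuclideanSpace ℝ (Fin d))]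
    (h : EuclideanSpace ℝ (Fin d) → EuclideanSpace ℝ (Fin d)) (hs : ContDiff ℝ 1 h)
    (hconf : ∀ x, IsConformalMap (fderiv ℝ h x)) (hinj : Function.Injective h) (m : ℝ) (hm : 0 ≤ m)
    (A : Set (EuclideanSpace ℝ (Fin d))) (hA : MeasurableSet A) (hmA : ∀ y ∈ A, m ≤ ‖fderiv ℝ h y‖) :
    ENNReal.ofReal (m ^ d) * volume A ≤ volume (h '' A) := by
  have hd : ∀ y, HasFDerivAt h (fderiv ℝ h y) y := fun y =>
    (hs.differentiable (by norm_num)).differentiableAt.hasFDerivAt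
  rw [← lintegral_abs_det_fderiv_eq_addHaar_image volume hA (fun y _ => (hd y).hasFDerivWithinAt)
    hinj.injOn, ← setLIntegral_const]
  refine setLIntegral_mono' hA fun y hy => ENNReal.ofReal_le_ofReal ?_
  rw [conf_det (hconf y)]
  exact pow_le_pow_left₀ hm (hmA y hy) _

lemma slope_limit [Nontrivial (EuclideanSpace ℝ (Fin d))] {k : ℕ}
    (h : Fin k → EuclideanSpace ℝ (Fin d) → EuclideanSpace ℝ (Fin d)) (hs : ∀ i, ContDiff ℝ 1 (h i))
    (hconf : ∀ i x, IsConformalMap (fderiv ℝ (h i) x)) (p : Fin k → ℝ) (β q : ℝ) (hβ : 0 < β) (x)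
    (hq : ∀ y, x ≠ y → ∑ j, p j * (dist (h j x) (h j y) / dist x y) ^ β ≤ q) :
    ∑ j, p j * ‖fderiv ℝ (h j) x‖ ^ β ≤ q := by
  obtain ⟨v, hv⟩ := exists_norm_eq (EuclideanSpace ℝ (Fin d)) (c := 1) zero_le_one
  have hlim : ∀ j, Tendsto (fun t : ℝ => dist (h j x) (h j (x + t • v)) / dist x (x + t • v))
      (nhdsWithin 0 {0}ᶜ) (nhds ‖fderiv ℝ (h j) x‖) := by
    intro j
    have h1 : HasFDerivAt (h j) (fderiv ℝ (h j) x) x :=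
      ((hs j).differentiable (by norm_num)).differentiableAt.hasFDerivAt
    have h2 : HasDerivAt (fun t : ℝ => h j (x + t • v)) (fderiv ℝ (h j) x v) 0 :=
      h1.hasLineDerivAt v
    have h3 := (hasDerivAt_iff_tendsto_slope.mp h2).norm
    rw [(conf_norm (hconf j x)).2, hv, mul_one] at h3
    refine h3.congr fun t => ?_
    rw [slope_def_module, norm_smul, dist_eq_norm', dist_eq_norm']
    simp only [zero_smul, add_zero, sub_zero, add_sub_cancel_left, norm_smul, hv, mul_one, norm_inv]
    rw [inv_mul_eq_div]
  have hlim2 : Tendsto (fun t : ℝ => ∑ j, p j * (dist (h j x) (h j (x + t • v)) / dist x (x + t • v)) ^ β)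
      (nhdsWithin 0 {0}ᶜ) (nhds (∑ j, p j * ‖fderiv ℝ (h j) x‖ ^ β)) := by
    refine tendsto_finsetSum _ fun j _ => Tendsto.const_mul _ ?_
    exact (hlim j).rpow_const (Or.inr hβ.le)
  refine le_of_tendsto hlim2 ?_
  filter_upwards [self_mem_nhdsWithin] with t ht
  refine hq _ ?_
  intro he
  have : t • v = 0 := by simpa using he.symm
  rcases smul_eq_zero.mp this with h1 | h1
  · exact ht h1
  · rw [h1] at hv; simp at hv

end Build
end

noncomputable section

lemma exists_sys (d k : ℕ) (hd : 1 ≤ d) (α : ℝ≥0) (hα0 : 0 < α) (hα1 : α ≤ 1)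
    (h : Fin k → EuclideanSpace ℝ (Fin d) → EuclideanSpace ℝ (Fin d))
    (p : Fin k → EuclideanSpace ℝ (Fin d) → ℝ)
    (hsmooth : ∀ i, ContDiff ℝ 1 (h i))
    (hholder : ∀ i, ∃ C : ℝ≥0, HolderWith C α fun x => Real.log ‖fderiv ℝ (h i) x‖)
    (hlogbdd : ∃ M : ℝ, ∀ i x, |Real.log ‖fderiv ℝ (h i) x‖| ≤ M)
    (hpholder : ∀ i, ∃ C : ℝ≥0, HolderWith C α (p i))
    (hprange : ∀ i x, p i x ∈ Set.Ioo (0 : ℝ) 1)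
    (hpbelow : ∃ δ > (0 : ℝ), ∀ i x, δ ≤ p i x)
    (hpsum : ∀ x, ∑ i, p i x = 1)
    (hcoa : ∃ b > (0 : ℝ), ∀ x y, x ≠ y →
      ∑ j, p j x * Real.log (dist (h j x) (h j y) / dist x y) < -b)
    (hconf : ∀ i x, IsConformalMap (fderiv ℝ (h i) x))
    (ν : Measure (EuclideanSpace ℝ (Fin d))) [IsProbabilityMeasure ν]
    (hinv : ν = ∑ i, Measure.map (h i)
      (ν.withDensity fun x => ENNReal.ofReal (p i x))) :
    ∃ s : Sys d k, s.h = h ∧ s.p = p ∧ s.g = (fun i x => Real.log ‖fderiv ℝ (h i) x‖) ∧ s.ν = ν := by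
  have : Nonempty (Fin d) := ⟨⟨0, hd⟩⟩
  have hnt : Nontrivial (EuclideanSpace ℝ (Fin d)) := inferInstance
  obtain ⟨M0, hM0⟩ := hlogbdd
  obtain ⟨δ, hδ, hpδ⟩ := hpbelow
  obtain ⟨b, hb, hcoa⟩ := hcoa
  choose Cg hCg using hholder
  choose Cp hCp using hpholder
  set M := |M0| + 1 with hM
  have hM1 : 0 < M := by positivity
  have hgM : ∀ i x, |Real.log ‖fderiv ℝ (h i) x‖| ≤ |M0| := fun i x => (hM0 i x).trans (le_abs_self _)
  have hnpos : ∀ i x, 0 < ‖fderiv ℝ (h i) x‖ := fun i x => (conf_norm (hconf i x)).1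
  have hexp : ∀ i x, Real.exp (Real.log ‖fderiv ℝ (h i) x‖) = ‖fderiv ℝ (h i) x‖ :=
    fun i x => Real.exp_log (hnpos i x)
  have hdiff : ∀ i x, DifferentiableAt ℝ (h i) x := fun i x =>
    ((hsmooth i).differentiable (by norm_num)).differentiableAt
  have hlip : ∀ i x y, ‖h i x - h i y‖ ≤ Real.exp M * ‖x - y‖ := by
    intro i x y
    refine Convex.norm_image_sub_le_of_norm_fderiv_le (𝕜 := ℝ) (s := Set.univ) (fun z _ => hdiff i z)
      (fun z _ => ?_) convex_univ (Set.mem_univ _) (Set.mem_univ _)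
    rw [← hexp i z]
    refine Real.exp_le_exp.mpr ?_
    have := (abs_le.mp (hgM i z)).2
    linarith
  have hanti : ∀ i x y, ‖x - y‖ ≤ Real.exp M * ‖h i x - h i y‖ := by
    intro i
    have := hadamard_antilipschitz (h i) (Real.exp M) (Real.exp_pos _).le (hlip i) (hsmooth i)
      (Real.toNNReal (Real.exp M)) (by
        intro x
        obtain ⟨A, hA, hAn⟩ := conf_equiv (hconf i x)
        refine ⟨A, hA, ?_⟩
        rw [← NNReal.coe_lt_coe]
        rw [Real.coe_toNNReal _ (Real.exp_pos _).le, coe_nnnorm]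
        refine lt_of_le_of_lt hAn ?_
        rw [← hexp i x, ← Real.exp_neg]
        refine Real.exp_lt_exp.mpr ?_
        have := (abs_le.mp (hgM i x)).1
        linarith)
    rwa [Real.coe_toNNReal _ (Real.exp_pos _).le] at this
  have hinj : ∀ i, Function.Injective (h i) := by
    intro i x y hxy
    have := hanti i x y
    rw [hxy, sub_self, norm_zero, mul_zero] at this
    exact sub_eq_zero.mp (norm_le_zero_iff.mp this)
  have hratio : ∀ i x y, x ≠ y → 0 < dist (h i x) (h i y) / dist x y ∧
      |Real.log (dist (h i x) (h i y) / dist x y)| ≤ M := by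
    intro i x y hxy
    have h0 : 0 < dist x y := dist_pos.mpr hxy
    have h1 : 0 < dist (h i x) (h i y) := dist_pos.mpr fun e => hxy (hinj i e)
    have h2 := hlip i x y
    have h3 := hanti i x y
    rw [← dist_eq_norm, ← dist_eq_norm] at h2 h3
    refine ⟨div_pos h1 h0, abs_le.mpr ⟨?_, ?_⟩⟩
    · rw [Real.le_log_iff_exp_le (div_pos h1 h0), le_div_iff₀ h0, Real.exp_neg, inv_mul_le_iff₀ (Real.exp_pos _)]
      exact h3
    · rw [Real.log_le_iff_le_exp (div_pos h1 h0), div_le_iff₀ h0]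
      exact h2
  -- choice of the exponent
  obtain ⟨β, hβ0, hβα, hβM, hβb⟩ : ∃ β : ℝ, 0 < β ∧ β ≤ α ∧ β * M ≤ 1 ∧ β * M ^ 2 ≤ b / 2 := by
    refine ⟨min (α : ℝ) (min (1 / M) (b / 2 / M ^ 2)), ?_, min_le_left _ _, ?_, ?_⟩
    · have : (0:ℝ) < α := by exact_mod_cast hα0
      positivity
    · rw [← le_div_iff₀ hM1]
      exact (min_le_right _ _).trans (min_le_left _ _)
    · rw [← le_div_iff₀ (by positivity)]
      exact (min_le_right _ _).trans (min_le_right _ _)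
  have hβ1 : β ≤ 1 := hβα.trans (by exact_mod_cast hα1)
  set q := max (1 - β * b / 2) (1 / 2) with hq
  have hβb0 : 0 < β * b := mul_pos hβ0 hb
  have hq0 : 0 < q := lt_of_lt_of_le (by norm_num) (le_max_right _ _)
  have hq1 : q < 1 := max_lt (by linarith) (by norm_num)
  have hqr : ∀ x y, x ≠ y → ∑ j, p j x * (dist (h j x) (h j y) / dist x y) ^ β ≤ q := by
    intro x y hxy
    have h1 := Sys.exp_moment (fun j => p j x) (fun j => Real.log (dist (h j x) (h j y) / dist x y))
      (fun j => (hprange j x).1.le) (hpsum x) M hM1 (fun j => (hratio j x y hxy).2) β hβ0.le hβM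
    have h2 := hcoa x y hxy
    have h3 : ∀ j, (dist (h j x) (h j y) / dist x y) ^ β =
        Real.exp (β * Real.log (dist (h j x) (h j y) / dist x y)) := by
      intro j
      rw [Real.rpow_def_of_pos (hratio j x y hxy).1, mul_comm]
    simp_rw [h3]
    refine h1.trans (le_trans ?_ (le_max_left _ _))
    nlinarith [mul_le_mul_of_nonneg_left hβb hβ0.le, mul_lt_mul_of_pos_left h2 hβ0]
  have hcoa' : ∀ x y, ∑ j, p j x * dist (h j x) (h j y) ^ β ≤ q * dist x y ^ β := by
    intro x y
    by_cases hxy : x = y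
    · subst hxy
      simp [Real.zero_rpow hβ0.ne']
    · have h0 : 0 < dist x y ^ β := Real.rpow_pos_of_pos (dist_pos.mpr hxy) _
      have h1 := hqr x y hxy
      simp_rw [Real.div_rpow dist_nonneg dist_nonneg, ← mul_div_assoc, ← Finset.sum_div] at h1
      rwa [div_le_iff₀ h0] at h1
  have hdq : ∀ x, ∑ j, p j x * Real.exp (β * Real.log ‖fderiv ℝ (h j) x‖) ≤ q := by
    intro x
    have h1 := slope_limit h hsmooth hconf (fun j => p j x) β q hβ0 x (hqr x)
    refine le_of_eq_of_le (Finset.sum_congr rfl fun j _ => ?_) h1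
    rw [Real.rpow_def_of_pos (hnpos j x), mul_comm β]
  -- constants
  have hlpB : ∀ i x, |Real.log (p i x)| ≤ |Real.log δ| := by
    intro i x
    have h1 : Real.log δ ≤ Real.log (p i x) := Real.log_le_log hδ (hpδ i x)
    have h2 : Real.log (p i x) ≤ 0 := Real.log_nonpos (hprange i x).1.le (hprange i x).2.le
    rw [abs_of_nonpos h2, abs_of_nonpos (h1.trans h2)]
    linarith
  set B := M + |Real.log δ| + 1 with hB
  have hB0 : 0 < B := by positivity
  have hpB : ∀ i x, |p i x| ≤ B := by
    intro i x
    rw [abs_of_pos (hprange i x).1]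
    have := abs_nonneg (Real.log δ)
    linarith [(hprange i x).2]
  have hlpB' : ∀ i x, |Real.log (p i x)| ≤ B := fun i x => (hlpB i x).trans (by linarith)
  have hgB : ∀ i x, |Real.log ‖fderiv ℝ (h i) x‖| ≤ B := fun i x => (hgM i x).trans (by
    have := abs_nonneg (Real.log δ); linarith)
  set C0 : ℝ := (∑ i, (Cg i : ℝ)) + (1 + δ⁻¹) * ∑ i, (Cp i : ℝ) with hC0
  have hSg : ∀ i, (Cg i : ℝ) ≤ ∑ i, (Cg i : ℝ) := fun i =>
    Finset.single_le_sum (f := fun i => (Cg i : ℝ)) (fun _ _ => NNReal.coe_nonneg _) (Finset.mem_univ i)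
  have hSp : ∀ i, (Cp i : ℝ) ≤ ∑ i, (Cp i : ℝ) := fun i =>
    Finset.single_le_sum (f := fun i => (Cp i : ℝ)) (fun _ _ => NNReal.coe_nonneg _) (Finset.mem_univ i)
  have hSg0 : 0 ≤ ∑ i, (Cg i : ℝ) := Finset.sum_nonneg fun _ _ => NNReal.coe_nonneg _
  have hSp0 : 0 ≤ ∑ i, (Cp i : ℝ) := Finset.sum_nonneg fun _ _ => NNReal.coe_nonneg _
  have hδi : 0 < δ⁻¹ := by positivity
  have hδS : 0 ≤ δ⁻¹ * ∑ i, (Cp i : ℝ) := mul_nonneg hδi.le hSp0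
  have hC00 : 0 ≤ C0 := by rw [hC0, add_mul, one_mul]; linarith
  set C := C0 + 2 * B with hC
  have hCpos : 0 < C := by linarith
  have hgH : ∀ i x y, |Real.log ‖fderiv ℝ (h i) x‖ - Real.log ‖fderiv ℝ (h i) y‖| ≤ C * dist x y ^ β := by
    intro i
    refine holder_down (fun x => Real.log ‖fderiv ℝ (h i) x‖) C0 α B β hC00 hB0.le hβ0 hβα
      (fun x y => ?_) (hgB i)
    refine (holder_real (hCg i) x y).trans ?_
    gcongr
    rw [hC0, add_mul, one_mul]
    linarith [hSg i]
  have hpH0 : ∀ i x y, |p i x - p i y| ≤ (∑ i, (Cp i : ℝ)) * dist x y ^ (α : ℝ) := by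
    intro i x y
    refine (holder_real (hCp i) x y).trans ?_
    gcongr
    exact hSp i
  have hpH : ∀ i x y, |p i x - p i y| ≤ C * dist x y ^ β := by
    intro i
    refine holder_down (p i) C0 α B β hC00 hB0.le hβ0 hβα (fun x y => ?_) (hpB i)
    refine (hpH0 i x y).trans ?_
    gcongr
    rw [hC0, add_mul, one_mul]
    linarith
  have hlpH : ∀ i x y, |Real.log (p i x) - Real.log (p i y)| ≤ C * dist x y ^ β := by
    intro i
    refine holder_down (fun x => Real.log (p i x)) C0 α B β hC00 hB0.le hβ0 hβα (fun x y => ?_) (hlpB' i)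
    refine (log_lip _ _ δ hδ (hpδ i x) (hpδ i y)).trans ?_
    refine (mul_le_mul_of_nonneg_left (hpH0 i x y) hδi.le).trans ?_
    rw [← mul_assoc]
    gcongr
    rw [hC0, add_mul, one_mul]
    linarith
  have hgr : ∀ i x y r, dist y x < r → |Real.log ‖fderiv ℝ (h i) y‖ - Real.log ‖fderiv ℝ (h i) x‖| ≤
      C * r ^ β := by
    intro i x y r hr
    refine (hgH i y x).trans ?_
    gcongr
  have hpc : ∀ i, Continuous (p i) := fun i => (hCp i).continuous hα0
  refine ⟨{ h := h, p := p, g := fun i x => Real.log ‖fderiv ℝ (h i) x‖, β := β, C := C, B := B, q := q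
            hβ0 := hβ0, hβ1 := hβ1, hC := hCpos, hB := hB0, hq0 := hq0, hq1 := hq1
            hcont := fun i => (hsmooth i).continuous
            ppos := fun i x => (hprange i x).1
            psum := hpsum, pH := hpH, lpH := hlpH, gH := hgH, lpB := hlpB', gB := hgB
            coa := hcoa', dq := hdq, lip := ?_, inj := hinj, vol := ?_
            ν := ν, prob := inferInstance, stat := ?_ }, rfl, rfl, rfl, rfl⟩
  · intro i x z r hr
    have hr0 : 0 < r := lt_of_le_of_lt dist_nonneg hr
    have h1 : ‖h i z - h i x‖ ≤ Real.exp (Real.log ‖fderiv ℝ (h i) x‖ + C * r ^ β) * ‖z - x‖ := by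
      refine Convex.norm_image_sub_le_of_norm_fderiv_le (𝕜 := ℝ) (s := ball x r) (fun z _ => hdiff i z)
        (fun y hy => ?_) (convex_ball _ _) (mem_ball_self hr0) hr
      rw [← hexp i y]
      refine Real.exp_le_exp.mpr ?_
      have := (abs_le.mp (hgr i x y r hy)).2
      linarith
    rw [dist_eq_norm]
    refine lt_of_le_of_lt h1 ?_
    rw [← dist_eq_norm]
    exact mul_lt_mul_of_pos_left hr (Real.exp_pos _)
  · intro i x r A hA hAr
    refine vol_bound (h i) (hsmooth i) (hconf i) (hinj i) _ (Real.exp_pos _).le A hA fun y hy => ?_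
    rw [← hexp i y]
    refine Real.exp_le_exp.mpr ?_
    have := (abs_le.mp (hgr i x y r (hAr hy))).1
    linarith
  · intro f hf
    conv_rhs => rw [hinv]
    rw [lintegral_finsetSum_measure, lintegral_finsetSum]
    · refine Finset.sum_congr rfl fun i _ => ?_
      rw [lintegral_map hf (hsmooth i).continuous.measurable]
      exact (lintegral_withDensity_eq_lintegral_mul _ (hpc i).measurable.ennreal_ofReal
          (hf.comp (hsmooth i).continuous.measurable)).symm
    · intro i _
      exact (hpc i).measurable.ennreal_ofReal.mul (hf.comp (hsmooth i).continuous.measurable)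
end

/-- For a conformal contracting-on-average IFS satisfying the regular open set condition,
the Hausdorff dimension of the invariant measure exists and is given by the
Eckmann–Ruelle formula. -/
theorem dimH_invariant_measure_ROSC
    (d k : ℕ) (hd : 1 ≤ d) (hk : 2 ≤ k) (α : ℝ≥0) (hα0 : 0 < α) (hα1 : α ≤ 1)
    (h : Fin k → EuclideanSpace ℝ (Fin d) → EuclideanSpace ℝ (Fin d))
    (p : Fin k → EuclideanSpace ℝ (Fin d) → ℝ)
    -- the maps are C¹ with α-Hölder, uniformly bounded logarithmic derivative
    (hsmooth : ∀ i, ContDiff ℝ 1 (h i))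
    (hholder : ∀ i, ∃ C : ℝ≥0, HolderWith C α fun x => Real.log ‖fderiv ℝ (h i) x‖)
    (hlogbdd : ∃ M : ℝ, ∀ i x, |Real.log ‖fderiv ℝ (h i) x‖| ≤ M)
    -- the probabilities are α-Hölder, with values in (0,1), uniformly bounded away from 0
    (hpholder : ∀ i, ∃ C : ℝ≥0, HolderWith C α (p i))
    (hprange : ∀ i x, p i x ∈ Set.Ioo (0 : ℝ) 1)
    (hpbelow : ∃ δ > (0 : ℝ), ∀ i x, δ ≤ p i x)
    (hpsum : ∀ x, ∑ i, p i x = 1)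
    -- contraction on average
    (hcoa : ∃ b > (0 : ℝ), ∀ x y, x ≠ y →
      ∑ j, p j x * Real.log (dist (h j x) (h j y) / dist x y) < -b)
    -- conformality of the maps
    (hconf : ∀ i x, IsConformalMap (fderiv ℝ (h i) x))
    -- regular open set condition
    (hROSC : ∃ U : Set (EuclideanSpace ℝ (Fin d)), U.Nonempty ∧ IsOpen U ∧
      (∀ i, h i '' U ⊆ U) ∧
      (∀ i j, i ≠ j → h i '' U ∩ h j '' U = ∅) ∧
      ∃ R₂ > (0 : ℝ), ∃ R₃ > (0 : ℝ), ∀ x ∈ U, ∀ r : ℝ, 0 < r → r < R₂ →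
        ENNReal.ofReal (R₃ * r ^ d) ≤ volume (Metric.ball x r ∩ U))
    -- the (unique) invariant probability measure
    (ν : Measure (EuclideanSpace ℝ (Fin d))) [IsProbabilityMeasure ν]
    (hinv : ν = ∑ i, Measure.map (h i)
      (ν.withDensity fun x => ENNReal.ofReal (p i x))) :
    lowerDimH ν = upperDimH ν ∧
    upperDimH ν = ENNReal.ofReal
      ((∫ x, ∑ i, p i x * Real.log (p i x) ∂ν) /
        (∫ x, ∑ i, p i x * Real.log ‖fderiv ℝ (h i) x‖ ∂ν)) := by
  obtain ⟨U, hne, hop, hfwd, hdisj, R₂, hR₂, R₃, hR₃, hvol⟩ := hROSC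
  obtain ⟨s, rfl, rfl, hg, rfl⟩ := exists_sys d k hd α hα0 hα1 h p hsmooth hholder hlogbdd hpholder
    hprange hpbelow hpsum hcoa hconf ν hinv
  have hU : s.Rosc U R₂ R₃ := ⟨hne, hop, hfwd, hdisj, hR₂, hR₃, hvol⟩
  obtain ⟨h1, h2⟩ := s.final hU
  have e : (∫ x, ∑ i, s.p i x * Real.log (s.p i x) ∂s.ν) /
        (∫ x, ∑ i, s.p i x * Real.log ‖fderiv ℝ (s.h i) x‖ ∂s.ν) = s.ent / s.chi := by
    rw [Sys.ent, Sys.chi, neg_div_neg_eq]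
    unfold Sys.psi
    rw [hg]
    rfl
  rw [e]
  exact ⟨h1.trans h2.symm, h2⟩
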